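/- arXiv:2106.04962 — 2 statements merged into one kernel-verified Lean document; each statement's English description precedes it below -/
import Mathlib

section
/- Let 0 ≤ α < 1 and set r_α = (2 − √(3 + α²))/(1 + α). If f, g ∈ 𝒜 are both starlike of order α, then their Hadamard product f*g satisfies (f*g)(z) ≠ 0 and Re(z(f*g)'(z)/(f*g)(z)) > α for all z with 0 < |z| < r_α; that is, f*g is starlike of order α on |z| < r_α. -/
open Complex Metric Set

noncomputable section

/-- The open unit disk in `ℂ`. -/
def 𝔻 : Set ℂ := Metric.ball 0 1

/-- The class `𝒜` of analytic functions on `𝔻` normalized by `f 0 = 0`, `f' 0 = 1`. -/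
def IsClassA (f : ℂ → ℂ) : Prop :=
  DifferentiableOn ℂ f 𝔻 ∧ f 0 = 0 ∧ deriv f 0 = 1

/-- `g` is subordinate to `F` on the unit disk. -/
def Subordinate (g F : ℂ → ℂ) : Prop :=
  ∃ ω : ℂ → ℂ, DifferentiableOn ℂ ω 𝔻 ∧ ω 0 = 0 ∧ (∀ z ∈ 𝔻, ω z ∈ 𝔻) ∧
    ∀ z ∈ 𝔻, g z = F (ω z)

/-- `ψ` is a Ma-Minda function: analytic and univalent on `𝔻`, `Re ψ > 0`, `ψ 0 = 1`,
`ψ' 0 > 0`, with real Taylor coefficients (expressed via `ψ (conj z) = conj (ψ z)`). -/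
def MaMinda (ψ : ℂ → ℂ) : Prop :=
  DifferentiableOn ℂ ψ 𝔻 ∧ Set.InjOn ψ 𝔻 ∧ (∀ z ∈ 𝔻, 0 < (ψ z).re) ∧
    ψ 0 = 1 ∧ 0 < (deriv ψ 0).re ∧ (deriv ψ 0).im = 0 ∧
    (∀ z ∈ 𝔻, ψ (starRingEnd ℂ z) = starRingEnd ℂ (ψ z))

/-- The Ma-Minda starlike class `S*(ψ)`. -/
def StarlikeMM (ψ f : ℂ → ℂ) : Prop :=
  IsClassA f ∧ (∀ z ∈ 𝔻, z ≠ 0 → f z ≠ 0) ∧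
    Subordinate (fun z => if z = 0 then 1 else z * deriv f z / f z) ψ

/-- The Ma-Minda convex class `C(ψ)`. -/
def ConvexMM (ψ f : ℂ → ℂ) : Prop :=
  IsClassA f ∧ (∀ z ∈ 𝔻, deriv f z ≠ 0) ∧
    Subordinate (fun z => 1 + z * deriv (deriv f) z / deriv f z) ψ

/-- `f` is starlike of order `α`. -/
def StarlikeOrder (α : ℝ) (f : ℂ → ℂ) : Prop :=
  IsClassA f ∧ (∀ z ∈ 𝔻, z ≠ 0 → f z ≠ 0) ∧
    ∀ z ∈ 𝔻, z ≠ 0 → α < (z * deriv f z / f z).re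

/-- `f` is a (normalized) convex function on `𝔻`. -/
def IsConvexFn (f : ℂ → ℂ) : Prop :=
  IsClassA f ∧ (∀ z ∈ 𝔻, deriv f z ≠ 0) ∧
    ∀ z ∈ 𝔻, 0 < (1 + z * deriv (deriv f) z / deriv f z).re

/-- no three zeros in a period -/
def NoThree (u : ℝ → ℝ) : Prop :=
  ∀ x y z : ℝ, x < y → y < z → z < x + 2 * Real.pi → u x = 0 → u y = 0 → u z = 0 → False

lemma noThree_sin (κ : ℝ → ℝ) (hm : StrictMono κ) (hp : ∀ θ, κ (θ + 2 * Real.pi) = κ θ + 2 * Real.pi)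
    (t : ℝ) : NoThree (fun θ => Real.sin (κ θ - t)) := by
  intro x y z hxy hyz hzx hx hy hz
  simp only [Real.sin_eq_zero_iff] at hx hy hz
  obtain ⟨n, hn⟩ := hx
  obtain ⟨m, hm'⟩ := hy
  obtain ⟨k, hk⟩ := hz
  have h1 := hm hxy
  have h2 := hm hyz
  have h3 := hm hzx
  rw [hp] at h3
  have hpi := Real.pi_pos
  have a1 : (n : ℝ) < m := by
    by_contra h; push Not at h; nlinarith
  have a2 : (m : ℝ) < k := by
    by_contra h; push Not at h; nlinarith
  have a3 : (k : ℝ) < n + 2 := by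
    by_contra h; push Not at h; nlinarith
  norm_cast at a1 a2 a3
  omega

lemma const_sign {u : ℝ → ℝ} (hu : Continuous u) {a b : ℝ}
    (h0 : ∀ x ∈ Ioo a b, u x ≠ 0) :
    (∀ x ∈ Ioo a b, 0 < u x) ∨ (∀ x ∈ Ioo a b, u x < 0) := by
  by_contra hcon
  push Not at hcon
  obtain ⟨⟨x, hx, hx'⟩, ⟨y, hy, hy'⟩⟩ := hcon
  have : (0 : ℝ) ∈ u '' (Ioo a b) :=
    isPreconnected_Ioo.intermediate_value hx hy hu.continuousOn ⟨hx', hy'⟩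
  obtain ⟨z, hz, hz'⟩ := this
  exact h0 z hz hz'

lemma sin_half_neg {a θ : ℝ} (h1 : a < θ) (h2 : θ < a + 2 * Real.pi) :
    Real.sin ((a - θ) / 2) < 0 :=
  Real.sin_neg_of_neg_of_neg_pi_lt (by linarith) (by linarith)

lemma sin_half_pos {a θ : ℝ} (h1 : θ < a) (h2 : a - 2 * Real.pi < θ) :
    0 < Real.sin ((a - θ) / 2) :=
  Real.sin_pos_of_pos_of_lt_pi (by linarith) (by linarith)

lemma sin_half_shift (a θ : ℝ) : Real.sin ((a - (θ + 2 * Real.pi)) / 2) = - Real.sin ((a - θ) / 2) := by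
  rw [← Real.sin_sub_pi]; congr 1; ring

lemma sin_half_shift' (a θ : ℝ) : Real.sin ((a + 2 * Real.pi - θ) / 2) = - Real.sin ((a - θ) / 2) := by
  rw [← Real.sin_add_pi]; congr 1; ring

/-- extension of a periodic statement -/
lemma per_all {Q : ℝ → Prop} (hQ : ∀ θ, Q (θ + 2 * Real.pi) ↔ Q θ) (a : ℝ)
    (h : ∀ θ, a ≤ θ → θ < a + 2 * Real.pi → Q θ) : ∀ θ, Q θ := by
  intro θ
  obtain ⟨y, hy, hy'⟩ := (show Function.Periodic Q (2 * Real.pi) from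
    fun x => propext (hQ x)).exists_mem_Ico Real.two_pi_pos θ a
  rw [hy']
  exact h y hy.1 hy.2

lemma sign_ell_aux (l l' : ℝ → ℝ) (hl : ∀ θ, HasDerivAt l (l' θ) θ)
    (hper : ∀ θ, l (θ + 2 * Real.pi) = l θ) (h3 : NoThree l') (a d : ℝ) (had : a ≤ d)
    (hd : d < a + 2 * Real.pi) (hla : l d = l a) (hl' : d = a → l' a = 0) :
    ∃ ε : ℝ, ∀ θ, Real.sin ((a - θ) / 2) ≠ 0 →
      Real.sin ((d - θ) / 2) ≠ 0 →
      0 < ε * ((l θ - l a) * Real.sin ((a - θ) / 2) * Real.sin ((d - θ) / 2)) := by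
  have hc : Continuous l := continuous_iff_continuousAt.2 fun x => (hl x).continuousAt
  have hpi := Real.pi_pos
  have rolle : ∀ x y, x < y → l x = l y → ∃ z ∈ Ioo x y, l' z = 0 := fun x y hxy h =>
    exists_hasDerivAt_eq_zero hxy hc.continuousOn h (fun z _ => hl z)
  have hQ : ∀ ε θ, ((Real.sin ((a - (θ + 2 * Real.pi)) / 2) ≠ 0 →
      Real.sin ((d - (θ + 2 * Real.pi)) / 2) ≠ 0 →
      0 < ε * ((l (θ + 2 * Real.pi) - l a) * Real.sin ((a - (θ + 2 * Real.pi)) / 2)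
        * Real.sin ((d - (θ + 2 * Real.pi)) / 2))) ↔ (Real.sin ((a - θ) / 2) ≠ 0 →
      Real.sin ((d - θ) / 2) ≠ 0 →
      0 < ε * ((l θ - l a) * Real.sin ((a - θ) / 2) * Real.sin ((d - θ) / 2)))) := by
    intro ε θ
    rw [sin_half_shift, sin_half_shift, hper]
    simp only [ne_eq, neg_eq_zero, mul_neg, neg_mul, neg_neg]
  rcases had.eq_or_lt with rfl | had
  · have hne : ∀ x ∈ Ioo a (a + 2 * Real.pi), l x - l a ≠ 0 := by
      intro x hx hx0
      obtain ⟨z1, hz1, h1⟩ := rolle a x hx.1 (by linarith)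
      obtain ⟨z2, hz2, h2⟩ := rolle x (a + 2 * Real.pi) hx.2 (by rw [hper]; linarith)
      exact h3 a z1 z2 hz1.1 (hz1.2.trans hz2.1) hz2.2 (hl' rfl) h1 h2
    have key : ∀ ε : ℝ, (∀ x ∈ Ioo a (a + 2 * Real.pi), 0 < ε * (l x - l a)) → ∀ θ,
        Real.sin ((a - θ) / 2) ≠ 0 → Real.sin ((a - θ) / 2) ≠ 0 →
        0 < ε * ((l θ - l a) * Real.sin ((a - θ) / 2) * Real.sin ((a - θ) / 2)) := by
      intro ε hε
      refine per_all (hQ ε) a ?_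
      intro θ h1 h2 hs _
      rcases h1.eq_or_lt with rfl | h1
      · simp at hs
      have := mul_pos (hε θ ⟨h1, h2⟩) (mul_self_pos.2 hs)
      linarith
    rcases const_sign (u := fun x => l x - l a) (hc.sub continuous_const) hne with h | h
    · exact ⟨1, key 1 fun x hx => by linarith [h x hx]⟩
    · exact ⟨-1, key (-1) fun x hx => by linarith [h x hx]⟩
  · obtain ⟨m1, hm1, hm1'⟩ := rolle a d had hla.symm
    obtain ⟨m2, hm2, hm2'⟩ := rolle d (a + 2 * Real.pi) hd (by rw [hper, hla])
    have hne1 : ∀ x ∈ Ioo a d, l x - l a ≠ 0 := by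
      intro x hx hx0
      obtain ⟨z1, hz1, h1⟩ := rolle a x hx.1 (by linarith)
      obtain ⟨z2, hz2, h2⟩ := rolle x d hx.2 (by linarith)
      exact h3 z1 z2 m2 (hz1.2.trans hz2.1) (hz2.2.trans hm2.1) (by linarith [hm2.2, hz1.1]) h1 h2 hm2'
    have hne2 : ∀ x ∈ Ioo d (a + 2 * Real.pi), l x - l a ≠ 0 := by
      intro x hx hx0
      obtain ⟨z1, hz1, h1⟩ := rolle d x hx.1 (by linarith)
      obtain ⟨z2, hz2, h2⟩ := rolle x (a + 2 * Real.pi) hx.2 (by rw [hper]; linarith)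
      exact h3 m1 z1 z2 (hm1.2.trans hz1.1) (hz1.2.trans hz2.1) (by linarith [hz2.2, hm1.1]) hm1' h1 h2
    have hd0 : l' d ≠ 0 := fun h => h3 m1 d m2 hm1.2 hm2.1 (by linarith [hm2.2, hm1.1]) hm1' h hm2'
    have key : ∀ ε : ℝ, (∀ x ∈ Ioo a d, 0 < ε * (l x - l a)) →
        (∀ x ∈ Ioo d (a + 2 * Real.pi), ε * (l x - l a) < 0) → ∀ θ,
        Real.sin ((a - θ) / 2) ≠ 0 → Real.sin ((d - θ) / 2) ≠ 0 →
        0 < (-ε) * ((l θ - l a) * Real.sin ((a - θ) / 2) * Real.sin ((d - θ) / 2)) := by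
      intro ε hε1 hε2
      refine per_all (hQ (-ε)) a ?_
      intro θ h1 h2 hs1 hs2
      rcases h1.eq_or_lt with rfl | h1
      · simp at hs1
      rcases lt_trichotomy θ d with h | rfl | h
      · have := mul_pos (hε1 θ ⟨h1, h⟩) (mul_pos (neg_pos.2 (sin_half_neg h1 h2))
          (sin_half_pos h (by linarith)))
        linarith
      · simp at hs2
      · have := mul_pos (neg_pos.2 (hε2 θ ⟨h, h2⟩)) (mul_pos (neg_pos.2 (sin_half_neg h1 h2))
          (neg_pos.2 (sin_half_neg h (by linarith))))
        linarith
    rcases const_sign (u := fun x => l x - l a) (hc.sub continuous_const) hne1 with h | h <;>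
    rcases const_sign (u := fun x => l x - l a) (hc.sub continuous_const) hne2 with h' | h'
    · exfalso
      refine hd0 (IsLocalMin.hasDerivAt_eq_zero ?_ (hl d))
      filter_upwards [Ioo_mem_nhds had hd] with x hx
      rcases lt_trichotomy x d with h1 | rfl | h1
      · linarith [h x ⟨hx.1, h1⟩]
      · exact le_rfl
      · linarith [h' x ⟨h1, hx.2⟩]
    · exact ⟨-1, key 1 (fun x hx => by linarith [h x hx]) (fun x hx => by linarith [h' x hx])⟩
    · exact ⟨_, key (-1) (fun x hx => by linarith [h x hx]) (fun x hx => by linarith [h' x hx])⟩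
    · exfalso
      refine hd0 (IsLocalMax.hasDerivAt_eq_zero ?_ (hl d))
      filter_upwards [Ioo_mem_nhds had hd] with x hx
      rcases lt_trichotomy x d with h1 | rfl | h1
      · linarith [h x ⟨hx.1, h1⟩]
      · exact le_rfl
      · linarith [h' x ⟨h1, hx.2⟩]

lemma sign_v (γ : ℝ → ℝ) (hm : StrictMono γ) (hp : ∀ θ, γ (θ + 2 * Real.pi) = γ θ + 2 * Real.pi)
    (b d : ℝ) (hbd : γ d = γ b + Real.pi) :
    ∀ θ, Real.sin ((b - θ) / 2) ≠ 0 → Real.sin ((d - θ) / 2) ≠ 0 →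
      0 < - (Real.sin (γ θ - γ b) * Real.sin ((b - θ) / 2) * Real.sin ((d - θ) / 2)) := by
  have hpi := Real.pi_pos
  have h1 : b < d := by rw [← hm.lt_iff_lt]; linarith
  have h2 : d < b + 2 * Real.pi := by rw [← hm.lt_iff_lt, hp]; linarith
  refine per_all ?_ b ?_
  · intro θ
    rw [sin_half_shift, sin_half_shift, hp, show γ θ + 2 * Real.pi - γ b = γ θ - γ b + 2 * Real.pi by ring,
      Real.sin_add_two_pi]
    simp only [ne_eq, neg_eq_zero, mul_neg, neg_mul, neg_neg]
  · intro θ k1 k2 s1 s2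
    rcases k1.eq_or_lt with rfl | k1
    · simp at s1
    rcases lt_trichotomy θ d with h | rfl | h
    · have e1 := hm k1
      have e2 := hm h
      have := mul_pos (Real.sin_pos_of_pos_of_lt_pi (by linarith : 0 < γ θ - γ b) (by linarith))
        (mul_pos (neg_pos.2 (sin_half_neg k1 k2)) (sin_half_pos h (by linarith)))
      linarith
    · simp at s2
    · have e1 := hm h
      have e2 := hm k2
      rw [hp] at e2
      have h0 : Real.sin (γ θ - γ b) < 0 := by
        rw [← Real.sin_sub_two_pi]
        exact Real.sin_neg_of_neg_of_neg_pi_lt (by linarith) (by linarith)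
      have := mul_pos (neg_pos.2 h0)
        (mul_pos (neg_pos.2 (sin_half_neg k1 k2)) (neg_pos.2 (sin_half_neg h (by linarith))))
      linarith

lemma exists_pi_shift (γ : ℝ → ℝ) (hc : Continuous γ)
    (hp : ∀ θ, γ (θ + 2 * Real.pi) = γ θ + 2 * Real.pi) (b : ℝ) : ∃ d, γ d = γ b + Real.pi := by
  have hpi := Real.pi_pos
  have := intermediate_value_Icc (by linarith : b ≤ b + 2 * Real.pi) hc.continuousOn
  obtain ⟨d, _, hd⟩ := this (show γ b + Real.pi ∈ Icc _ _ from ⟨by linarith, by rw [hp]; linarith⟩)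
  exact ⟨d, hd⟩

/-- given `a` and `d` arbitrary, reduce `d` modulo `2π` into `[a, a+2π)`, at the price of a sign -/
lemma reduce_mod (a d : ℝ) : ∃ (d' : ℝ) (e : ℝ) (n : ℤ), a ≤ d' ∧ d' < a + 2 * Real.pi ∧
    d' = d + n * (2 * Real.pi) ∧ (e = 1 ∨ e = -1) ∧
    ∀ θ, Real.sin ((d' - θ) / 2) = e * Real.sin ((d - θ) / 2) := by
  have hmem := toIcoMod_mem_Ico Real.two_pi_pos a d
  refine ⟨toIcoMod Real.two_pi_pos a d, (-1) ^ (toIcoDiv Real.two_pi_pos a d), 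
    - toIcoDiv Real.two_pi_pos a d, hmem.1, hmem.2, ?_, ?_, ?_⟩
  · rw [toIcoMod, zsmul_eq_mul]; push_cast; ring
  · rcases Int.even_or_odd (toIcoDiv Real.two_pi_pos a d) with h | h
    · left; exact h.neg_one_zpow
    · right; exact h.neg_one_zpow
  · intro θ
    rw [toIcoMod, ← Real.sin_sub_int_mul_pi, zsmul_eq_mul]
    congr 1; ring

/-- `E θ = exp (i θ)` -/
def E (θ : ℝ) : ℂ := exp (θ * I)

lemma E_add (x y : ℝ) : E (x + y) = E x * E y := by simp [E, add_mul, exp_add]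
lemma E_neg (x : ℝ) : E (-x) = (E x)⁻¹ := by simp [E, exp_neg]
lemma E_sub (x y : ℝ) : E (x - y) = E x * (E y)⁻¹ := by rw [sub_eq_add_neg, E_add, E_neg]
lemma E_zero : E 0 = 1 := by simp [E]
lemma E_ne (x : ℝ) : E x ≠ 0 := exp_ne_zero _
lemma norm_E (x : ℝ) : ‖E x‖ = 1 := norm_exp_ofReal_mul_I x
lemma E_per (x : ℝ) : E (x + 2 * Real.pi) = E x := by
  simp only [E]; push_cast; rw [add_mul, exp_periodic]
lemma E_conj (x : ℝ) : (starRingEnd ℂ) (E x) = E (-x) := by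
  simp [E, ← exp_conj]
lemma E_re (x : ℝ) : (E x).re = Real.cos x := by simp [E, exp_ofReal_mul_I_re]
lemma E_im (x : ℝ) : (E x).im = Real.sin x := by simp [E, exp_ofReal_mul_I_im]
@[fun_prop] lemma continuous_E : Continuous E := by unfold E; fun_prop
lemma hasDerivAt_E (x : ℝ) : HasDerivAt E (I * E x) x := by
  have := ((hasDerivAt_id (x : ℂ)).mul_const I).cexp.comp_ofReal
  have h2 : E = fun y : ℝ => cexp ((y : ℂ) * I) := rfl
  rw [h2]
  simpa [mul_comm] using this
lemma E_add_int (x : ℝ) (n : ℤ) : E (x + n * (2 * Real.pi)) = E x := by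
  have : Function.Periodic E (2 * Real.pi) := E_per
  exact this.int_mul n x
lemma norm_rE {r : ℝ} (hr : 0 ≤ r) (x : ℝ) : ‖(r : ℂ) * E x‖ = r := by
  rw [norm_mul, norm_E]; simp [abs_of_nonneg hr]

lemma one_sub_E (x : ℝ) : 1 - E x = -2 * I * Real.sin (x / 2) * E (x / 2) := by
  have h : E x = E (x/2) * E (x/2) := by rw [← E_add]; congr 1; ring
  have h1 : E (x/2) * E (-(x/2)) = 1 := by rw [← E_add, ← E_zero]; congr 1; ring
  have h2 : E (x/2) - E (-(x/2)) = 2 * I * Real.sin (x/2) := by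
    generalize x / 2 = y
    apply Complex.ext
    · simp only [sub_re, E_re, Real.cos_neg, sub_self, mul_re, I_re, I_im, ofReal_re, ofReal_im, mul_im]
      simp
    · simp only [sub_im, E_im, Real.sin_neg, mul_re, I_re, I_im, ofReal_re, ofReal_im, mul_im]
      simp
      ring
  linear_combination -h - h1 - E (x/2) * h2

lemma integral_neg_per (F : ℂ → ℂ) :
    ∫ θ in (0:ℝ)..2 * Real.pi, F (E (-θ)) = ∫ θ in (0:ℝ)..2 * Real.pi, F (E θ) := by
  rw [intervalIntegral.integral_comp_neg (fun x => F (E x))]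
  have : Function.Periodic (fun x => F (E x)) (2 * Real.pi) := fun x => by simp only [E_per]
  have h := this.intervalIntegral_add_eq (-(2 * Real.pi)) 0
  simpa using h

lemma mean_val {H : ℂ → ℂ} {R r : ℝ} (hr : 0 < r) (hrR : r < R)
    (hH : DifferentiableOn ℂ H (ball 0 R)) :
    ∫ θ in (0:ℝ)..2 * Real.pi, H (r * E θ) = 2 * Real.pi * H 0 := by
  have h1 : DiffContOnCl ℂ H (ball 0 |r|) := by
    apply DifferentiableOn.diffContOnCl
    apply hH.mono
    rw [abs_of_pos hr, closure_ball _ hr.ne']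
    exact closedBall_subset_ball hrR
  have h2 := h1.circleAverage
  rw [Real.circleAverage] at h2
  have hpi := Real.pi_ne_zero
  simp only [circleMap, zero_add] at h2
  rw [← h2]
  have : (Real.pi : ℂ) ≠ 0 := by exact_mod_cast hpi
  simp only [E, Complex.real_smul]
  push_cast
  rw [mul_inv_cancel_left₀ (by simp [this])]

lemma mean_val_neg {H : ℂ → ℂ} {R r : ℝ} (hr : 0 < r) (hrR : r < R)
    (hH : DifferentiableOn ℂ H (ball 0 R)) :
    ∫ θ in (0:ℝ)..2 * Real.pi, H (r * E (-θ)) = 2 * Real.pi * H 0 := by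
  rw [integral_neg_per (fun z => H (r * z)), mean_val hr hrR hH]

lemma contour_shift {F : ℂ → ℂ} {s : ℝ} (hs : 1 < s)
    (hF : ∀ z, 1 ≤ ‖z‖ → ‖z‖ ≤ s → DifferentiableAt ℂ F z) :
    ∫ θ in (0:ℝ)..2 * Real.pi, F (s * E θ) = ∫ θ in (0:ℝ)..2 * Real.pi, F (E θ) := by
  have h := circleIntegral_sub_center_inv_smul_eq_of_differentiable_on_annulus_off_countable
    (c := 0) (r := 1) (R := s) one_pos hs.le (f := F) (s := ∅) countable_empty
    (fun z hz => (hF z (by simpa using hz.2) (by simpa using hz.1)).continuousAt.continuousWithinAt)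
    (fun z hz => hF z (by have := hz.1.2; simp at this; exact this.le)
      (by have := hz.1.1; simp at this; exact this.le))
  have key : ∀ r : ℝ, r ≠ 0 → (∮ z in C(0, r), (z - 0)⁻¹ • F z) =
      I * ∫ θ in (0:ℝ)..2 * Real.pi, F (r * E θ) := by
    intro r hr
    rw [circleIntegral, ← intervalIntegral.integral_const_mul]
    congr 1
    ext θ
    have hr' : (r : ℂ) ≠ 0 := by exact_mod_cast hr
    have := exp_ne_zero (θ * I)
    simp only [deriv_circleMap, circleMap, E, smul_eq_mul, sub_zero, zero_add]
    field_simp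
  rw [key _ (by linarith), key _ one_ne_zero] at h
  have := mul_left_cancel₀ I_ne_zero h
  simpa using this

lemma E_mem {R : ℝ} (hR : 1 < R) (θ : ℝ) : E θ ∈ ball (0:ℂ) R := by
  simp [norm_E, hR]

lemma countable_bad (a : ℝ) : {θ : ℝ | Real.sin ((a - θ) / 2) = 0}.Countable := by
  refine (countable_range (fun n : ℤ => a - 2 * (n * Real.pi))).mono ?_
  intro θ hθ
  obtain ⟨n, hn⟩ := Real.sin_eq_zero_iff.1 hθ
  exact ⟨n, by simp only; linarith⟩

lemma integral_ne_zero_of_sign {P : ℝ → ℝ} (hP : Continuous P) (S : Set ℝ) (hS : S.Countable)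
    (ε : ℝ) (h : ∀ θ, θ ∉ S → 0 < ε * P θ) : ∫ θ in (0:ℝ)..2 * Real.pi, P θ ≠ 0 := by
  intro h0
  have h1 : ∫ θ in (0:ℝ)..2 * Real.pi, ε * P θ = 0 := by
    rw [intervalIntegral.integral_const_mul, h0, mul_zero]
  have hae : ∀ᵐ θ : ℝ, 0 < ε * P θ := by
    filter_upwards [hS.ae_notMem MeasureTheory.volume] with θ hθ using h θ hθ
  rw [intervalIntegral.integral_of_le Real.two_pi_pos.le] at h1
  have hintg : MeasureTheory.IntegrableOn (fun θ => ε * P θ) (Ioc 0 (2 * Real.pi)) :=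
    ((continuous_const.mul hP).integrableOn_Icc).mono_set Ioc_subset_Icc_self
  rw [MeasureTheory.integral_eq_zero_iff_of_nonneg_ae
    (MeasureTheory.ae_restrict_of_ae (hae.mono fun x hx => hx.le)) hintg] at h1
  have h2 := h1.and (MeasureTheory.ae_restrict_of_ae (s := Ioc 0 (2 * Real.pi)) hae)
  have h3 : ∀ᵐ x ∂(MeasureTheory.volume.restrict (Ioc 0 (2 * Real.pi))), False := by
    filter_upwards [h2] with x hx
    have := hx.1
    simp only [Pi.zero_apply] at this
    linarith [hx.2]
  have h4 : MeasureTheory.volume (Ioc 0 (2 * Real.pi)) = 0 := by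
    rw [MeasureTheory.ae_iff] at h3
    simpa only [not_false_eq_true, ofPred_true, MeasureTheory.Measure.restrict_apply_univ] using h3
  simp at h4
  linarith [Real.pi_pos]

/-- the choice of the line -/
lemma exists_line {φ : ℂ → ℂ} {R : ℝ} (hR : 1 < R) (hφ : DifferentiableOn ℂ φ (ball 0 R))
    (κ A : ℝ → ℝ) (hκm : StrictMono κ) (hκp : ∀ θ, κ (θ + 2 * Real.pi) = κ θ + 2 * Real.pi)
    (hA : ∀ θ, 0 < A θ) (hφκ : ∀ θ, E θ * deriv φ (E θ) = A θ * E (κ θ)) (a d : ℝ) :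
    ∃ (c : ℂ) (ε : ℝ), ∀ θ, Real.sin ((a - θ) / 2) ≠ 0 → Real.sin ((d - θ) / 2) ≠ 0 →
      0 < ε * ((c * (φ (E θ) - φ (E a))).im * Real.sin ((a - θ) / 2) * Real.sin ((d - θ) / 2)) := by
  obtain ⟨d', e, n, h1, h2, h3, he, hs⟩ := reduce_mod a d
  -- general statement
  have main : ∀ c : ℂ, c ≠ 0 → (c * (φ (E d) - φ (E a))).im = 0 →
      (d' = a → (c * (I * (E a * deriv φ (E a)))).im = 0) →
      ∃ (c : ℂ) (ε : ℝ), ∀ θ, Real.sin ((a - θ) / 2) ≠ 0 → Real.sin ((d - θ) / 2) ≠ 0 →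
      0 < ε * ((c * (φ (E θ) - φ (E a))).im * Real.sin ((a - θ) / 2) * Real.sin ((d - θ) / 2)) := by
    intro c hc hcd hca
    have hder : ∀ θ, HasDerivAt (fun θ => (c * φ (E θ)).im)
        ((c * (I * (E θ * deriv φ (E θ)))).im) θ := by
      intro θ
      have hd1 : HasDerivAt φ (deriv φ (E θ)) (E θ) :=
        (hφ.differentiableAt (isOpen_ball.mem_nhds (E_mem hR θ))).hasDerivAt
      have hd2 : HasDerivAt (fun θ => c * φ (E θ)) (c * (I * (E θ * deriv φ (E θ)))) θ := by
        have := (HasDerivAt.scomp θ hd1 (hasDerivAt_E θ)).const_mul c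
        have e : c * (I * (E θ * deriv φ (E θ))) = c * (I * E θ) • deriv φ (E θ) := by
          rw [smul_eq_mul]; ring
        rw [e]
        exact this
      exact (Complex.imCLM.hasFDerivAt.comp_hasDerivAt θ hd2)
    have hN : NoThree (fun θ => (c * (I * (E θ * deriv φ (E θ)))).im) := by
      intro x y z hxy hyz hzx hx hy hz
      have hform : ∀ θ, (c * (I * (E θ * deriv φ (E θ)))).im = 0 →
          Real.sin (κ θ - (-(arg c) - Real.pi / 2)) = 0 := by
        intro θ h0
        rw [hφκ] at h0
        have hcc : c = ‖c‖ * E (arg c) := (norm_mul_exp_arg_mul_I c).symm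
        have : c * (I * (A θ * E (κ θ))) = ((‖c‖ * A θ : ℝ) : ℂ) * (I * E (κ θ + arg c)) := by
          rw [E_add]; push_cast
          linear_combination (I * (A θ * E (κ θ))) * hcc
        rw [this, im_ofReal_mul] at h0
        have hne : ‖c‖ * A θ ≠ 0 := mul_ne_zero (norm_ne_zero_iff.2 hc) (hA θ).ne'
        have h0' := (mul_eq_zero.1 h0).resolve_left hne
        simp [E_re] at h0'
        rw [show κ θ - (-(arg c) - Real.pi / 2) = κ θ + arg c + Real.pi / 2 by ring,
          Real.sin_add_pi_div_two, h0']
      exact noThree_sin κ hκm hκp _ x y z hxy hyz hzx (hform _ hx) (hform _ hy) (hform _ hz)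
    obtain ⟨ε, hε⟩ := sign_ell_aux _ _ hder (fun θ => by simp only [E_per]) hN a d' h1 h2
      (by
        have : E d' = E d := by rw [h3, E_add_int]
        rw [this]
        rw [mul_sub, sub_im] at hcd
        linarith) hca
    refine ⟨c, ε * e, fun θ ha hd => ?_⟩
    have he0 : e ≠ 0 := by rcases he with h | h <;> rw [h] <;> norm_num
    have := hε θ ha (by rw [hs]; exact mul_ne_zero he0 hd)
    rw [hs] at this
    rw [mul_sub, sub_im]
    linarith
  by_cases hda : d' = a
  · have hne : E a * deriv φ (E a) ≠ 0 := by
      rw [hφκ]; exact mul_ne_zero (by exact_mod_cast (hA a).ne') (E_ne _)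
    have hEd : E d = E a := by rw [← hda, h3, E_add_int]
    refine main ((starRingEnd ℂ) (E a * deriv φ (E a)) * I) 
      (mul_ne_zero ((map_ne_zero _).2 hne) I_ne_zero) (by rw [hEd]; simp) ?_
    intro _
    have : (starRingEnd ℂ) (E a * deriv φ (E a)) * I * (I * (E a * deriv φ (E a))) =
       - ((starRingEnd ℂ) (E a * deriv φ (E a)) * (E a * deriv φ (E a))) := by
      linear_combination ((starRingEnd ℂ) (E a * deriv φ (E a)) * (E a * deriv φ (E a))) * I_mul_I
    rw [this, ← Complex.normSq_eq_conj_mul_self]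
    simp
  · by_cases hφd : φ (E d) - φ (E a) = 0
    · exact main 1 one_ne_zero (by rw [hφd]; simp) (fun h => absurd h hda)
    · refine main ((starRingEnd ℂ) (φ (E d) - φ (E a))) ((map_ne_zero _).2 hφd) ?_
        (fun h => absurd h hda)
      rw [← Complex.normSq_eq_conj_mul_self]
      simp


lemma circle_ne_zero {φ g : ℂ → ℂ} {R : ℝ} (hR : 1 < R) (hφ : DifferentiableOn ℂ φ (ball 0 R))
    (hg : DifferentiableOn ℂ g (ball 0 R)) (hg0 : g 0 = 0)
    (κ A : ℝ → ℝ) (hκm : StrictMono κ) (hκp : ∀ θ, κ (θ + 2 * Real.pi) = κ θ + 2 * Real.pi)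
    (hA : ∀ θ, 0 < A θ) (hφκ : ∀ θ, E θ * deriv φ (E θ) = A θ * E (κ θ))
    (γ B : ℝ → ℝ) (hγc : Continuous γ) (hγm : StrictMono γ)
    (hγp : ∀ θ, γ (θ + 2 * Real.pi) = γ θ + 2 * Real.pi)
    (hB : ∀ θ, 0 < B θ) (hgγ : ∀ θ, g (E (-θ)) = B θ * E (-γ θ)) (a b : ℝ) :
    ∫ θ in (0:ℝ)..2 * Real.pi, dslope φ (E a) (E θ) * E θ * (g (E (-θ)) * (1 - E (b - θ))) ≠ 0 := by
  intro hJ1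
  have hD : DifferentiableOn ℂ (dslope φ (E a)) (ball 0 R) :=
    (Complex.differentiableOn_dslope (isOpen_ball.mem_nhds (E_mem hR a))).2 hφ
  have hgc : DifferentiableOn ℂ (fun z => (starRingEnd ℂ) (g ((starRingEnd ℂ) z))) (ball 0 R) := by
    intro z hz
    have hz' : (starRingEnd ℂ) z ∈ ball (0:ℂ) R := by simpa using hz
    have := (hg.differentiableAt (isOpen_ball.mem_nhds hz')).conj_conj
    rw [Complex.conj_conj] at this
    exact this.differentiableWithinAt
  have hDc : Continuous (fun θ => dslope φ (E a) (E θ)) :=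
    hD.continuousOn.comp_continuous continuous_E (fun θ => E_mem hR θ)
  have hgcont : Continuous (fun θ : ℝ => g (E (-θ))) :=
    hg.continuousOn.comp_continuous (continuous_E.comp continuous_neg) (fun θ => E_mem hR _)
  -- the conjugate integral
  have hJ2 : ∫ θ in (0:ℝ)..2 * Real.pi, dslope φ (E a) (E θ) *
      (starRingEnd ℂ) (g (E (-θ)) * (1 - E (b - θ))) = 0 := by
    have h := mean_val (H := fun z => dslope φ (E a) z *
      ((starRingEnd ℂ) (g ((starRingEnd ℂ) z)) * (1 - E (-b) * z))) one_pos hR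
      (hD.mul (hgc.mul ((differentiableOn_const _).sub ((differentiableOn_const _).mul differentiableOn_id))))
    simp only [map_zero, hg0, zero_mul, mul_zero] at h
    rw [← h]
    congr 1
    ext θ
    simp only [ofReal_one, one_mul, map_mul, map_sub, map_one, E_conj]
    rw [show -(b - θ) = -b + θ by ring, E_add]
  obtain ⟨d, hd⟩ := exists_pi_shift γ hγc hγp b
  obtain ⟨c, ε, hε⟩ := exists_line hR hφ κ A hκm hκp hA hφκ a d
  have hv := sign_v γ hγm hγp b d hd
  set t : ℂ := E (γ b - (b - a) / 2) with ht
  let J1 : ℝ → ℂ := fun θ => dslope φ (E a) (E θ) * E θ * (g (E (-θ)) * (1 - E (b - θ)))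
  let J2 : ℝ → ℂ := fun θ => dslope φ (E a) (E θ) * (starRingEnd ℂ) (g (E (-θ)) * (1 - E (b - θ)))
  have hJ1c : Continuous J1 := (hDc.mul continuous_E).mul (hgcont.mul (by fun_prop))
  have hJ2c : Continuous J2 := 
    hDc.mul (continuous_conj.comp (hgcont.mul (by fun_prop)))
  let P : ℝ → ℝ := fun θ => (-(c * (starRingEnd ℂ) t * E a) * J2 θ - c * t * J1 θ).re
  have hPc : Continuous P := by fun_prop
  have hP0 : ∫ θ in (0:ℝ)..2 * Real.pi, P θ = 0 := by
    have h1 : ∫ θ in (0:ℝ)..2 * Real.pi, (-(c * (starRingEnd ℂ) t * E a) * J2 θ - c * t * J1 θ) = 0 := by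
      rw [intervalIntegral.integral_sub, intervalIntegral.integral_const_mul,
        intervalIntegral.integral_const_mul, hJ1, hJ2]
      · simp
      · exact (continuous_const.mul hJ2c).intervalIntegrable _ _
      · exact (continuous_const.mul hJ1c).intervalIntegrable _ _
    have h2 := Complex.reCLM.intervalIntegral_comp_comm (μ := MeasureTheory.volume) (a := 0)
      (b := 2 * Real.pi) (f := fun θ => (-(c * (starRingEnd ℂ) t * E a) * J2 θ - c * t * J1 θ))
      ((by fun_prop : Continuous _).intervalIntegrable _ _)
    rw [h1, map_zero] at h2
    exact h2
  refine integral_ne_zero_of_sign hPc _ (((countable_bad a).union (countable_bad b)).union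
    (countable_bad d)) ε ?_ hP0
  intro θ hθ
  simp only [mem_union, mem_ofPred_eq, not_or] at hθ
  obtain ⟨⟨hsa, hsb⟩, hsd⟩ := hθ
  -- identify `P`
  have hne1 : 1 - E (a - θ) ≠ 0 := by
    rw [one_sub_E]
    refine mul_ne_zero (mul_ne_zero (by simp) (by exact_mod_cast hsa)) (E_ne _)
  have hne : E θ - E a ≠ 0 := by
    intro h; apply hne1
    rw [E_sub, ← sub_eq_zero.1 h, mul_inv_cancel₀ (E_ne _), sub_self]
  set X : ℂ := φ (E θ) - φ (E a) with hX
  set r : ℝ := B θ * (Real.sin ((b - θ) / 2) / Real.sin ((a - θ) / 2)) with hr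
  set W : ℂ := r * E (-γ θ) * E ((b - a) / 2) with hW
  have hDX : dslope φ (E a) (E θ) = X / (E θ - E a) := by
    rw [dslope_of_ne _ (sub_ne_zero.1 hne), slope_def_field]
  have hrat : g (E (-θ)) * (1 - E (b - θ)) = W * (1 - E (a - θ)) := by
    rw [hgγ, one_sub_E, one_sub_E, hW, hr]
    have hsa' : (Real.sin ((a - θ) / 2) : ℂ) ≠ 0 := by exact_mod_cast hsa
    have : E ((b - θ) / 2) = E ((b - a) / 2) * E ((a - θ) / 2) := by
      rw [← E_add]; congr 1; ring
    rw [this]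
    push_cast
    push_cast at hsa'
    field_simp
  have hea : E (a - θ) = E a * (E θ)⁻¹ := E_sub _ _
  have hJ1θ : J1 θ = X * W := by
    simp only [J1]
    rw [hrat, hDX, hea]
    have := E_ne θ
    field_simp
  have hJ2θ : - E a * J2 θ = X * (starRingEnd ℂ) W := by
    simp only [J2]
    rw [hrat, hDX, map_mul, map_sub, map_one, E_conj, neg_sub, E_sub]
    have := E_ne a
    field_simp
    ring
  have hPθ : P θ = 2 * ((c * X).im * (t * W).im) := by
    have : P θ = (c * X * (starRingEnd ℂ) (t * W) - (c * X) * (t * W)).re := by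
      simp only [P]
      congr 1
      rw [map_mul, hJ1θ]
      linear_combination (c * (starRingEnd ℂ) t) * hJ2θ
    rw [this]
    generalize c * X = u
    generalize t * W = v
    simp only [sub_re, mul_re, conj_re, conj_im]
    ring
  have htW : (t * W).im = - r * Real.sin (γ θ - γ b) := by
    have : t * W = r * E (γ b - γ θ) := by
      rw [hW, ht]
      rw [show γ b - γ θ = (γ b - (b - a) / 2) + (-γ θ) + (b - a) / 2 by ring, E_add, E_add]
      ring
    rw [this, im_ofReal_mul, E_im, ← neg_sub, Real.sin_neg]
    ring
  have e1 := hε θ hsa hsd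
  have e2 := hv θ hsb hsd
  rw [hPθ, htW]
  rw [← hX] at e1
  have e3 := mul_pos (mul_pos e1 e2) (hB θ)
  have hpos : 0 < Real.sin ((a - θ) / 2) ^ 2 * Real.sin ((d - θ) / 2) ^ 2 := by positivity
  by_contra hcon
  push Not at hcon
  have e4 : ε * (2 * ((c * X).im * (-r * Real.sin (γ θ - γ b)))) *
    (Real.sin ((a - θ) / 2) ^ 2 * Real.sin ((d - θ) / 2) ^ 2) ≤ 0 :=
    mul_nonpos_of_nonpos_of_nonneg hcon hpos.le
  have hra : r * Real.sin ((a - θ) / 2) = B θ * Real.sin ((b - θ) / 2) := by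
    rw [hr]; field_simp
  have e5 : ε * (2 * ((c * X).im * (-r * Real.sin (γ θ - γ b)))) *
    (Real.sin ((a - θ) / 2) ^ 2 * Real.sin ((d - θ) / 2) ^ 2) = 2 *
    (ε * ((c * X).im * Real.sin ((a - θ) / 2) * Real.sin ((d - θ) / 2)) *
      -(Real.sin (γ θ - γ b) * Real.sin ((b - θ) / 2) * Real.sin ((d - θ) / 2)) * B θ) := by
    linear_combination (-2 * ε * (c * X).im * Real.sin (γ θ - γ b) * Real.sin ((a - θ) / 2)
      * Real.sin ((d - θ) / 2) ^ 2) * hra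
  linarith

lemma one_sub_ne {u : ℂ} (h : ‖u‖ < 1) : 1 - u ≠ 0 := by
  intro h1
  rw [← sub_eq_zero.1 h1] at h
  simp at h

/-- Schwarz integral formula. -/
lemma schwarz_formula {q : ℂ → ℂ} {R s : ℝ} (hs : 1 < s) (hsR : s < R)
    (hq : DifferentiableOn ℂ q (ball 0 R)) {w : ℂ} (hw : ‖w‖ ≤ s⁻¹) :
    ∫ x in (0:ℝ)..2 * Real.pi, ((q (E (-x))).re : ℂ) * ((1 + E x * w) / (1 - E x * w)) =
      2 * Real.pi * (q w - (q 0).im * I) := by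
  have hR : 1 < R := hs.trans hsR
  have hw1 : ‖w‖ < 1 := hw.trans_lt (inv_lt_one_of_one_lt₀ hs)
  have hden : ∀ x : ℝ, 1 - E x * w ≠ 0 := fun x => one_sub_ne (by simpa [norm_E] using hw1)
  have hqc : Continuous (fun x : ℝ => q (E (-x))) :=
    hq.continuousOn.comp_continuous (continuous_E.comp continuous_neg) (fun θ => E_mem hR _)
  have hkc : Continuous (fun x : ℝ => (1 + E x * w) / (1 - E x * w)) :=
    Continuous.div (by fun_prop) (by fun_prop) hden
  -- first part
  have h1 : ∫ x in (0:ℝ)..2 * Real.pi, q (E (-x)) * ((1 + E x * w) / (1 - E x * w)) =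
      2 * Real.pi * (2 * q w - q 0) := by
    have e1 : DiffContOnCl ℂ q (ball 0 |1|) := by
      apply DifferentiableOn.diffContOnCl
      apply hq.mono
      rw [abs_one, closure_ball _ one_ne_zero]
      exact closedBall_subset_ball hR
    have e2 := e1.circleAverage_smul_div (w := w) (by simpa using hw1)
    rw [Real.circleAverage] at e2
    simp only [circleMap, zero_add, sub_zero, ofReal_one, one_mul, smul_eq_mul] at e2
    have e3 : ∫ x in (0:ℝ)..2 * Real.pi, (E x / (E x - w)) * q (E x) = 2 * Real.pi * q w := by
      rw [← e2]
      have : (Real.pi : ℂ) ≠ 0 := by exact_mod_cast Real.pi_ne_zero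
      simp only [Complex.real_smul, E]
      push_cast
      rw [mul_inv_cancel_left₀ (by simp [this])]
    rw [← integral_neg_per (fun z => z / (z - w) * q z)] at e3
    have e4 := mean_val_neg one_pos hR hq
    have e5 : ∀ x : ℝ, q (E (-x)) * ((1 + E x * w) / (1 - E x * w)) =
        2 * (E (-x) / (E (-x) - w) * q (E (-x))) - q ((1:ℝ) * E (-x)) := by
      intro x
      have := hden x
      have h0 := E_ne x
      have : E (-x) - w ≠ 0 := by
        rw [E_neg]; intro h; apply this
        rw [← sub_eq_zero.1 h, mul_inv_cancel₀ h0, sub_self]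
      have h6 : (1 + E x * w) / (1 - E x * w) = 2 * (E (-x) / (E (-x) - w)) - 1 := by
        rw [eq_sub_iff_add_eq, div_add_one (hden x), div_eq_iff (hden x)]
        rw [← mul_div_assoc, div_mul_eq_mul_div, eq_div_iff this, E_neg]
        field_simp
        ring
      rw [h6]; simp; ring
    simp_rw [e5]
    rw [intervalIntegral.integral_sub, intervalIntegral.integral_const_mul, e3, e4]
    · ring
    · apply Continuous.intervalIntegrable
      refine continuous_const.mul (Continuous.mul (Continuous.div (by fun_prop) (by fun_prop) ?_) hqc)
      intro x h
      apply hden x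
      rw [← sub_eq_zero.1 h, ← E_add, ← E_zero]; simp
    · apply Continuous.intervalIntegrable
      simpa using hqc
  have h2 : ∫ x in (0:ℝ)..2 * Real.pi, (starRingEnd ℂ) (q (E (-x))) * ((1 + E x * w) / (1 - E x * w)) =
      2 * Real.pi * (starRingEnd ℂ) (q 0) := by
    have e := mean_val (H := fun v => (starRingEnd ℂ) (q ((starRingEnd ℂ) v)) * ((1 + v * w) / (1 - v * w)))
      one_pos hs ?_
    · simp only [ofReal_one, one_mul, E_conj, map_zero, zero_mul, add_zero, sub_zero, div_one, mul_one] at e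
      exact e
    · intro z hz
      have hzs : ‖z‖ < s := by simpa using hz
      have hz' : (starRingEnd ℂ) z ∈ ball (0:ℂ) R := by simp; linarith
      have e1 := (hq.differentiableAt (isOpen_ball.mem_nhds hz')).conj_conj
      rw [Complex.conj_conj] at e1
      have hne : 1 - z * w ≠ 0 := by
        apply one_sub_ne
        rw [norm_mul]
        by_cases h0 : ‖z‖ = 0
        · simp [h0]
        · calc ‖z‖ * ‖w‖ ≤ ‖z‖ * s⁻¹ := by gcongr
            _ < s * s⁻¹ := by gcongr
            _ = 1 := mul_inv_cancel₀ (by linarith)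
      have e2 : DifferentiableAt ℂ (fun v : ℂ => (1 + v * w) / (1 - v * w)) z :=
        DifferentiableAt.div (by fun_prop) (by fun_prop) hne
      exact (e1.mul e2).differentiableWithinAt
  have h3 : ∀ x : ℝ, ((q (E (-x))).re : ℂ) * ((1 + E x * w) / (1 - E x * w)) =
      2⁻¹ * (q (E (-x)) * ((1 + E x * w) / (1 - E x * w)) +
        (starRingEnd ℂ) (q (E (-x))) * ((1 + E x * w) / (1 - E x * w))) := by
    intro x
    rw [Complex.re_eq_add_conj]; ring
  simp_rw [h3]
  rw [intervalIntegral.integral_const_mul, intervalIntegral.integral_add, h1, h2]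
  · have : (starRingEnd ℂ) (q 0) = q 0 - 2 * (q 0).im * I := by
      apply Complex.ext <;> simp; ring
    rw [this]; ring
  · exact (hqc.mul hkc).intervalIntegrable _ _
  · exact ((continuous_conj.comp hqc).mul hkc).intervalIntegrable _ _

section core
variable {φ g : ℂ → ℂ} {R s : ℝ}

lemma M_eq (hs : 1 < s) (hsR : s < R) (hφ : DifferentiableOn ℂ φ (ball 0 R))
    (hg : DifferentiableOn ℂ g (ball 0 R)) (hg0 : g 0 = 0) (a b : ℝ) :
    ∫ θ in (0:ℝ)..2 * Real.pi, φ (s * E θ) * g ((s⁻¹ : ℝ) * E (-θ)) *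
      ((1 - (s⁻¹ : ℝ) * E (b - θ)) / (1 - (s⁻¹ : ℝ) * E (a - θ))) =
    ∫ θ in (0:ℝ)..2 * Real.pi, dslope φ (E a) (E θ) * E θ * (g (E (-θ)) * (1 - E (b - θ))) := by
  have hR : 1 < R := hs.trans hsR
  have hs0 : 0 < s := by linarith
  have hsi : s⁻¹ < 1 := inv_lt_one_of_one_lt₀ hs
  have hD : DifferentiableOn ℂ (dslope φ (E a)) (ball 0 R) :=
    (Complex.differentiableOn_dslope (isOpen_ball.mem_nhds (E_mem hR a))).2 hφ
  have hden : ∀ x : ℝ, 1 - (s⁻¹ : ℝ) * E x ≠ 0 := fun x => one_sub_ne (by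
    rw [norm_rE (by positivity)]; exact hsi)
  have h0 : ∫ θ in (0:ℝ)..2 * Real.pi, φ (E a) * (g ((s⁻¹ : ℝ) * E (-θ)) *
      ((1 - (s⁻¹ : ℝ) * E (b - θ)) / (1 - (s⁻¹ : ℝ) * E (a - θ)))) = 0 := by
    rw [intervalIntegral.integral_const_mul]
    have e := mean_val_neg (H := fun w => g w * ((1 - E b * w) / (1 - E a * w)))
      (r := s⁻¹) (R := 1) (by positivity) hsi ?_
    · simp only [hg0, zero_mul, mul_zero] at e
      rw [← mul_zero (φ (E a)), ← e]
      congr 2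
      ext θ
      rw [E_sub, E_sub, E_neg, mul_left_comm, mul_left_comm (_ : ℂ) (E a)]
    · intro w hw
      have hw1 : ‖w‖ < 1 := by simpa using hw
      have e1 := hg.differentiableAt (x := w) (isOpen_ball.mem_nhds (by simp; linarith))
      have e2 : DifferentiableAt ℂ (fun w : ℂ => (1 - E b * w) / (1 - E a * w)) w :=
        DifferentiableAt.div (by fun_prop) (by fun_prop) (one_sub_ne (by simpa [norm_E] using hw1))
      exact (e1.mul e2).differentiableWithinAt
  have hφc : Continuous (fun θ : ℝ => φ (s * E θ)) :=
    hφ.continuousOn.comp_continuous (by fun_prop) (fun θ => by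
      rw [mem_ball_zero_iff, norm_rE hs0.le]; exact hsR)
  have hgc : Continuous (fun θ : ℝ => g ((s⁻¹ : ℝ) * E (-θ))) :=
    hg.continuousOn.comp_continuous (by fun_prop) (fun θ => by
      rw [mem_ball_zero_iff, norm_rE (by positivity)]; linarith)
  have hkc : Continuous (fun θ : ℝ => (1 - (s⁻¹ : ℝ) * E (b - θ)) / (1 - (s⁻¹ : ℝ) * E (a - θ))) :=
    Continuous.div (by fun_prop) (by fun_prop) (fun x => hden _)
  have h1 := contour_shift hs (F := fun ζ => dslope φ (E a) ζ * ζ * (g ζ⁻¹ * (1 - E b * ζ⁻¹))) ?_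
  · have h2 : ∀ θ : ℝ, dslope φ (E a) (E θ) * E θ * (g (E (-θ)) * (1 - E (b - θ))) =
        dslope φ (E a) (E θ) * E θ * (g (E θ)⁻¹ * (1 - E b * (E θ)⁻¹)) := by
      intro θ; rw [E_neg, E_sub]
    simp_rw [h2]
    rw [← h1]
    rw [← sub_zero (∫ θ in (0:ℝ)..2 * Real.pi, φ (s * E θ) * _ * _), ← h0, ← intervalIntegral.integral_sub]
    · congr 1
      ext θ
      have e1 := sub_smul_dslope φ (E a) (s * E θ)
      rw [smul_eq_mul] at e1
      have e2 : ((s:ℂ) * E θ)⁻¹ = (s⁻¹ : ℝ) * E (-θ) := by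
        rw [E_neg, mul_inv]; push_cast; rfl
      have hsc : (s : ℂ) ≠ 0 := by exact_mod_cast hs0.ne'
      have e3 : (s:ℂ) * E θ - E a = s * E θ * (1 - (s⁻¹ : ℝ) * E (a - θ)) := by
        rw [E_sub]; push_cast
        have := E_ne θ
        field_simp
      have e4 : E b * ((s⁻¹ : ℝ) * E (-θ)) = (s⁻¹ : ℝ) * E (b - θ) := by
        rw [E_sub, E_neg]; ring
      rw [e2, e4, ← mul_assoc (φ (E a)), ← sub_mul, ← sub_mul, ← e1, e3]
      have hd := hden (a - θ)
      generalize 1 - ((s⁻¹ : ℝ) : ℂ) * E (a - θ) = d at hd ⊢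
      generalize 1 - ((s⁻¹ : ℝ) : ℂ) * E (b - θ) = d2
      field_simp
    · exact ((hφc.mul hgc).mul hkc).intervalIntegrable _ _
    · exact (continuous_const.mul (hgc.mul hkc)).intervalIntegrable _ _
  · intro z hz1 hz2
    have hz0 : z ≠ 0 := by intro h; simp [h] at hz1; linarith
    have e1 := hD.differentiableAt (x := z) (isOpen_ball.mem_nhds (by simp; linarith))
    have e2 := hg.differentiableAt (x := z⁻¹) (isOpen_ball.mem_nhds (by
      simp only [mem_ball_zero_iff, norm_inv]
      exact (inv_le_one_of_one_le₀ hz1).trans_lt hR))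
    have e3 : DifferentiableAt ℂ (fun z : ℂ => z⁻¹) z := differentiableAt_inv hz0
    have e4 : DifferentiableAt ℂ (fun z => g z⁻¹) z := DifferentiableAt.comp z e2 e3
    exact (e1.mul differentiableAt_id).mul (e4.mul ((differentiableAt_const _).sub ((differentiableAt_const _).mul e3)))



lemma core_abs {K : ℝ → ℂ} {K0 : ℂ} (hKc : Continuous K)
    (hM : ∀ x b : ℝ, (K x + K0) / 2 - E (b - x) * ((K x - K0) / 2) ≠ 0)
    (hmean : ∫ x in (0:ℝ)..2 * Real.pi, K x = 2 * Real.pi * K0)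
    {ρ : ℝ → ℝ} (hρ : Continuous ρ) (hρ0 : ∀ x, 0 < ρ x) :
    0 < ((∫ x in (0:ℝ)..2 * Real.pi, (ρ x : ℂ) * K x) * (starRingEnd ℂ) K0).re := by
  have hK0ne : K0 ≠ 0 := by
    have := hM 0 0
    intro h
    apply this
    rw [h]; simp [E_zero]
  set T : ℝ → ℝ := fun x => (K x * (starRingEnd ℂ) K0).re with hT
  have hTc : Continuous T := Complex.continuous_re.comp (hKc.mul continuous_const)
  have hTne : ∀ x, T x ≠ 0 := by
    intro x hx
    have hnorm : ‖K x + K0‖ = ‖K x - K0‖ := by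
      rw [← sq_eq_sq₀ (norm_nonneg _) (norm_nonneg _), ← normSq_eq_norm_sq, ← normSq_eq_norm_sq,
        normSq_add, normSq_sub]
      simp only [hT] at hx
      rw [hx]; ring
    by_cases hz : K x - K0 = 0
    · rw [hz, norm_zero, norm_eq_zero] at hnorm
      apply hK0ne
      linear_combination (hnorm - hz) / 2
    · set β := (K x + K0) / (K x - K0) with hβ
      have hβ1 : ‖β‖ = 1 := by
        rw [hβ, norm_div, hnorm, div_self (by simpa using hz)]
      have hβE : E (arg β) = β := by
        have := norm_mul_exp_arg_mul_I β
        rw [hβ1] at this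
        simpa [E] using this
      apply hM x (x + arg β)
      rw [add_sub_cancel_left, hβE, hβ]
      field_simp
      ring
  have hintg : ∀ F : ℝ → ℂ, Continuous F → (∫ x in (0:ℝ)..2 * Real.pi, (F x * (starRingEnd ℂ) K0).re) =
      ((∫ x in (0:ℝ)..2 * Real.pi, F x) * (starRingEnd ℂ) K0).re := by
    intro F hF
    rw [← intervalIntegral.integral_mul_const]
    exact Complex.reCLM.intervalIntegral_comp_comm (μ := MeasureTheory.volume) (a := 0)
      (b := 2 * Real.pi) (f := fun θ => F θ * (starRingEnd ℂ) K0)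
      ((hF.mul continuous_const).intervalIntegrable _ _)
  have hTpos : ∀ x, 0 < T x := by
    by_contra hcon
    push Not at hcon
    obtain ⟨x0, hx0⟩ := hcon
    have hneg : ∀ x, T x < 0 := by
      intro x
      by_contra hx
      push Not at hx
      have hmem : (0:ℝ) ∈ Set.Icc (T x0) (T x) := ⟨hx0, hx⟩
      obtain ⟨y, hy⟩ := mem_range_of_exists_le_of_exists_ge hTc ⟨x0, hx0⟩ ⟨x, hx⟩
      exact hTne y hy
    have e1 := hintg K hKc
    rw [hmean] at e1
    have e2 : (2 * (Real.pi : ℂ) * K0 * (starRingEnd ℂ) K0).re = 2 * Real.pi * normSq K0 := by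
      rw [mul_assoc, mul_conj, ← ofReal_ofNat, ← ofReal_mul, ← ofReal_mul, ofReal_re]
    rw [e2] at e1
    have e3 : 0 < normSq K0 := normSq_pos.2 hK0ne
    have e4 : (∫ x in (0:ℝ)..2 * Real.pi, T x) ≤ ∫ x in (0:ℝ)..2 * Real.pi, (0:ℝ) :=
      intervalIntegral.integral_mono_on (by positivity) (hTc.intervalIntegrable _ _)
        (continuous_const.intervalIntegrable _ _) (fun x _ => (hneg x).le)
    rw [intervalIntegral.integral_zero] at e4
    have : 0 < 2 * Real.pi * normSq K0 := by positivity
    simp only [hT] at e4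
    linarith
  rw [← hintg (fun x => (ρ x : ℂ) * K x) ((continuous_ofReal.comp hρ).mul hKc)]
  have e5 : ∀ x, ((ρ x : ℂ) * K x * (starRingEnd ℂ) K0).re = ρ x * T x := by
    intro x
    rw [mul_assoc, re_ofReal_mul]
  simp_rw [e5]
  apply intervalIntegral.intervalIntegral_pos_of_pos
  · exact (hρ.mul hTc).intervalIntegrable _ _
  · exact fun x => mul_pos (hρ0 x) (hTpos x)
  · positivity


/-- the kernel -/
def kk (s x θ : ℝ) : ℂ := (1 + (s⁻¹ : ℝ) * E (x - θ)) / (1 - (s⁻¹ : ℝ) * E (x - θ))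

lemma kk_den (hs : 1 < s) (x : ℝ) : 1 - (s⁻¹ : ℝ) * E x ≠ 0 := one_sub_ne (by
    rw [norm_rE (by positivity)]; exact inv_lt_one_of_one_lt₀ hs)

lemma continuous_kk (hs : 1 < s) : Continuous (fun p : ℝ × ℝ => kk s p.1 p.2) := by
  unfold kk
  exact Continuous.div (by fun_prop) (by fun_prop) (fun x => kk_den hs _)

lemma core_rep (hs : 1 < s) (hsR : s < R) {Φ : ℝ → ℂ} (hΦc : Continuous Φ) 
    {q : ℂ → ℂ} (hq : DifferentiableOn ℂ q (ball 0 R)) :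
      ∫ x in (0:ℝ)..2 * Real.pi, ((q (E (-x))).re : ℂ) * ∫ θ in (0:ℝ)..2 * Real.pi, Φ θ * kk s x θ =
      2 * Real.pi * ((∫ θ in (0:ℝ)..2 * Real.pi, Φ θ * q ((s⁻¹ : ℝ) * E (-θ))) - (q 0).im * I *
        ∫ θ in (0:ℝ)..2 * Real.pi, Φ θ) := by
  have hR : 1 < R := hs.trans hsR
  have hs0 : 0 < s := by linarith
  have hsi : s⁻¹ < 1 := inv_lt_one_of_one_lt₀ hs
  have hqc : Continuous (fun x : ℝ => ((q (E (-x))).re : ℂ)) :=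
    continuous_ofReal.comp (Complex.continuous_re.comp
      (hq.continuousOn.comp_continuous (continuous_E.comp continuous_neg) (fun θ => E_mem hR _)))
  have hqs : Continuous (fun θ : ℝ => q ((s⁻¹ : ℝ) * E (-θ))) :=
    hq.continuousOn.comp_continuous (by fun_prop) (fun θ => by
      rw [mem_ball_zero_iff, norm_rE (by positivity)]; linarith)
  simp_rw [← intervalIntegral.integral_const_mul]
  rw [MeasureTheory.intervalIntegral_intervalIntegral_swap]
  · have e2 : ∀ θ, ∫ x in (0:ℝ)..2 * Real.pi, ((q (E (-x))).re : ℂ) * (Φ θ * kk s x θ) =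
        (2 * Real.pi) * (Φ θ * q ((s⁻¹ : ℝ) * E (-θ)) - (q 0).im * I * Φ θ) := by
      intro θ
      have e3 := schwarz_formula hs hsR hq (w := (s⁻¹ : ℝ) * E (-θ)) (by
        rw [norm_rE (by positivity)])
      have e4 : ∀ x : ℝ, ((q (E (-x))).re : ℂ) * (Φ θ * kk s x θ) = Φ θ *
          (((q (E (-x))).re : ℂ) * ((1 + E x * ((s⁻¹ : ℝ) * E (-θ))) / (1 - E x * ((s⁻¹ : ℝ) * E (-θ))))) := by
        intro x
        have e5 : E x * ((s⁻¹ : ℝ) * E (-θ)) = (s⁻¹ : ℝ) * E (x - θ) := by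
          rw [E_sub, E_neg]; ring
        rw [e5, kk]
        ring
      simp_rw [e4]
      rw [intervalIntegral.integral_const_mul, e3]
      ring
    simp_rw [e2]
    rw [intervalIntegral.integral_const_mul, intervalIntegral.integral_sub]
    · exact (hΦc.mul hqs).intervalIntegrable _ _
    · exact (continuous_const.mul hΦc).intervalIntegrable _ _
  · have hc : Continuous (Function.uncurry (fun x θ => ((q (E (-x))).re : ℂ) * (Φ θ * kk s x θ))) :=
      (hqc.comp continuous_fst).mul ((hΦc.comp continuous_snd).mul (continuous_kk hs))
    exact (hc.continuousOn.integrableOn_compact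
        (isCompact_uIcc.prod isCompact_uIcc)).mono_set (Set.prod_mono uIoc_subset_uIcc uIoc_subset_uIcc)

lemma core_alg (u : ℂ) (hu : 1 - u ≠ 0) (P e : ℂ) :
    P * ((1 - e * u) / (1 - u)) = (1 - e) / 2 * (P * ((1 + u) / (1 - u))) + (1 + e) / 2 * P := by
  have h1 : (1 - e * u) / (1 - u) = (1 - e) / 2 * ((1 + u) / (1 - u)) + (1 + e) / 2 := by
    rw [div_eq_iff hu, add_mul, mul_assoc, div_mul_cancel₀ _ hu]
    ring
  rw [h1]; ring

lemma core_M (hs : 1 < s) {Φ : ℝ → ℂ} (hΦc : Continuous Φ) (x b : ℝ) :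
    ∫ θ in (0:ℝ)..2 * Real.pi, Φ θ *
      ((1 - (s⁻¹ : ℝ) * E (b - θ)) / (1 - (s⁻¹ : ℝ) * E (x - θ))) =
    ((∫ θ in (0:ℝ)..2 * Real.pi, Φ θ * kk s x θ) + ∫ θ in (0:ℝ)..2 * Real.pi, Φ θ) / 2 -
     E (b - x) * (((∫ θ in (0:ℝ)..2 * Real.pi, Φ θ * kk s x θ) - ∫ θ in (0:ℝ)..2 * Real.pi, Φ θ) / 2) := by
  have e : ∀ θ : ℝ, Φ θ * ((1 - (s⁻¹ : ℝ) * E (b - θ)) / (1 - (s⁻¹ : ℝ) * E (x - θ))) =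
        (1 - E (b - x)) / 2 * (Φ θ * kk s x θ) + (1 + E (b - x)) / 2 * Φ θ := by
    intro θ
    have e1 : E (b - θ) = E (b - x) * E (x - θ) := by rw [← E_add]; congr 1; ring
    rw [e1, kk, mul_left_comm]
    exact core_alg _ (kk_den hs (x - θ)) _ _
  have hkx : Continuous (fun θ => kk s x θ) := by
    unfold kk
    exact Continuous.div (by fun_prop) (by fun_prop) (fun y => kk_den hs _)
  have i1 : IntervalIntegrable (fun θ => (1 - E (b - x)) / 2 * (Φ θ * kk s x θ)) MeasureTheory.volume
    0 (2 * Real.pi) := (continuous_const.mul (hΦc.mul hkx)).intervalIntegrable _ _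
  have i2 : IntervalIntegrable (fun θ => (1 + E (b - x)) / 2 * Φ θ) MeasureTheory.volume
    0 (2 * Real.pi) := (continuous_const.mul hΦc).intervalIntegrable _ _
  have h := intervalIntegral.integral_add i1 i2
  rw [intervalIntegral.integral_const_mul, intervalIntegral.integral_const_mul] at h
  refine (intervalIntegral.integral_congr (fun θ _ => e θ)).trans (h.trans ?_)
  ring

theorem core (hs : 1 < s) (hsR : s < R) (hφ : DifferentiableOn ℂ φ (ball 0 R))
    (hg : DifferentiableOn ℂ g (ball 0 R)) (hg0 : g 0 = 0)
    (hN : ∀ a b : ℝ, ∫ θ in (0:ℝ)..2 * Real.pi,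
      dslope φ (E a) (E θ) * E θ * (g (E (-θ)) * (1 - E (b - θ))) ≠ 0)
    {q : ℂ → ℂ} (hq : DifferentiableOn ℂ q (ball 0 R)) (hqpos : ∀ z ∈ ball (0:ℂ) R, 0 < (q z).re) :
    ∫ θ in (0:ℝ)..2 * Real.pi, φ (s * E θ) * g ((s⁻¹ : ℝ) * E (-θ)) * q ((s⁻¹ : ℝ) * E (-θ)) ≠ 0 := by
  have hR : 1 < R := hs.trans hsR
  have hs0 : 0 < s := by linarith
  have hsi : s⁻¹ < 1 := inv_lt_one_of_one_lt₀ hs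
  have hφc : Continuous (fun θ : ℝ => φ (s * E θ)) :=
    hφ.continuousOn.comp_continuous (by fun_prop) (fun θ => by
      rw [mem_ball_zero_iff, norm_rE hs0.le]; exact hsR)
  have hgc : Continuous (fun θ : ℝ => g ((s⁻¹ : ℝ) * E (-θ))) :=
    hg.continuousOn.comp_continuous (by fun_prop) (fun θ => by
      rw [mem_ball_zero_iff, norm_rE (by positivity)]; linarith)
  have hN' : ∀ x b : ℝ, ∫ θ in (0:ℝ)..2 * Real.pi, φ (s * E θ) * g ((s⁻¹ : ℝ) * E (-θ)) *
      ((1 - (s⁻¹ : ℝ) * E (b - θ)) / (1 - (s⁻¹ : ℝ) * E (x - θ))) ≠ 0 := by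
    intro x b
    rw [M_eq hs hsR hφ hg hg0 x b]
    exact hN x b
  have hΦc : Continuous (fun θ : ℝ => φ (s * E θ) * g ((s⁻¹ : ℝ) * E (-θ))) := hφc.mul hgc
  clear hN
  obtain ⟨Φ, hΦ⟩ : ∃ Φ : ℝ → ℂ, Φ = fun θ : ℝ => φ (s * E θ) * g ((s⁻¹ : ℝ) * E (-θ)) := ⟨_, rfl⟩
  have hΦ' : ∀ θ : ℝ, φ (s * E θ) * g ((s⁻¹ : ℝ) * E (-θ)) = Φ θ := fun θ => by rw [hΦ]
  rw [← hΦ] at hΦc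
  simp_rw [hΦ'] at hN' ⊢
  have hKc : Continuous (fun x => ∫ θ in (0:ℝ)..2 * Real.pi, Φ θ * kk s x θ) := by
    apply intervalIntegral.continuous_parametric_intervalIntegral_of_continuous'
    exact (hΦc.comp continuous_snd).mul (continuous_kk hs)
  have hmean : ∫ x in (0:ℝ)..2 * Real.pi, ∫ θ in (0:ℝ)..2 * Real.pi, Φ θ * kk s x θ = 
      2 * Real.pi * ∫ θ in (0:ℝ)..2 * Real.pi, Φ θ := by
    have := core_rep hs hsR hΦc (q := fun _ => 1) (differentiableOn_const _)
    simpa using this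
  have hpos := core_abs hKc (fun x b => by rw [← core_M hs hΦc]; exact hN' x b)
    hmean (ρ := fun x => (q (E (-x))).re)
    (Complex.continuous_re.comp
       (hq.continuousOn.comp_continuous (continuous_E.comp continuous_neg) (fun θ => E_mem hR _)))
    (fun x => hqpos _ (E_mem hR _))
  rw [core_rep hs hsR hΦc hq] at hpos
  intro h0
  rw [h0] at hpos
  generalize ∫ θ in (0:ℝ)..2 * Real.pi, Φ θ = K0 at hpos
  have : (2 * (Real.pi : ℂ) * (0 - (q 0).im * I * K0) * (starRingEnd ℂ) K0).re = 0 := by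
    have : 2 * (Real.pi : ℂ) * (0 - (q 0).im * I * K0) * (starRingEnd ℂ) K0 =
        ((-2 * Real.pi * (q 0).im * normSq K0 : ℝ) : ℂ) * I := by
      push_cast
      rw [← mul_conj]
      ring
    rw [this, re_ofReal_mul, I_re, mul_zero]
  linarith
end core

lemma exists_log {F : ℂ → ℂ} (hF : DifferentiableOn ℂ F (ball 0 1))
    (hne : ∀ z ∈ ball (0:ℂ) 1, F z ≠ 0) :
    ∃ H : ℂ → ℂ, DifferentiableOn ℂ H (ball 0 1) ∧ ∀ z ∈ ball (0:ℂ) 1, F z = exp (H z) := by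
  have hF' : DifferentiableOn ℂ (deriv F) (ball 0 1) := hF.deriv isOpen_ball
  have h1 : DifferentiableOn ℂ (fun z => deriv F z / F z) (ball 0 1) := hF'.div hF hne
  obtain ⟨H, hH0, hH⟩ := h1.isExactOn_ball.with_val_at 0 (log (F 0))
  have h0 : (0:ℂ) ∈ ball (0:ℂ) 1 := by simp
  refine ⟨H, fun z hz => (hH z hz).differentiableAt.differentiableWithinAt, ?_⟩
  intro z hz
  have hd : ∀ x ∈ ball (0:ℂ) 1, HasDerivAt (fun z => F z * exp (-H z)) 0 x := by
    intro x hx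
    have e1 := (hF.differentiableAt (isOpen_ball.mem_nhds hx)).hasDerivAt
    have e2 := e1.mul (hH x hx).neg.cexp
    refine HasDerivAt.congr_deriv e2 ?_
    have := hne x hx
    field_simp
    ring
  have e := isOpen_ball.is_const_of_deriv_eq_zero (convex_ball (0:ℂ) 1).isPreconnected
    (fun x hx => (hd x hx).differentiableAt.differentiableWithinAt)
    (fun x hx => (hd x hx).deriv) hz h0
  simp only [hH0] at e
  rw [exp_neg (log (F 0)), exp_log (hne 0 h0), mul_inv_cancel₀ (hne 0 h0), exp_neg,
    mul_inv_eq_one₀ (exp_ne_zero _)] at e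
  exact e

lemma starlike_rep {α : ℝ} (hα1 : α < 1) {f : ℂ → ℂ} (hf : DifferentiableOn ℂ f (ball 0 1))
    (hf0 : f 0 = 0) (hf1 : deriv f 0 = 1) (hne : ∀ z ∈ ball (0:ℂ) 1, z ≠ 0 → f z ≠ 0)
    (hst : ∀ z ∈ ball (0:ℂ) 1, z ≠ 0 → α < (z * deriv f z / f z).re) :
    ∃ H : ℂ → ℂ, DifferentiableOn ℂ H (ball 0 1) ∧ (∀ z ∈ ball (0:ℂ) 1, f z = z * exp (H z)) ∧
      (∀ z ∈ ball (0:ℂ) 1, deriv f z = exp (H z) * (1 + z * deriv H z)) ∧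
      (∀ z ∈ ball (0:ℂ) 1, α < (1 + z * deriv H z).re) := by
  have h0 : (0:ℂ) ∈ ball (0:ℂ) 1 := by simp
  have hD : DifferentiableOn ℂ (dslope f 0) (ball 0 1) :=
    (Complex.differentiableOn_dslope (isOpen_ball.mem_nhds h0)).2 hf
  have hfD : ∀ z, f z = z * dslope f 0 z := by
    intro z
    have := sub_smul_dslope f 0 z
    rw [hf0, sub_zero, sub_zero, smul_eq_mul] at this
    exact this.symm
  obtain ⟨H, hH, hHe⟩ := exists_log hD (by
    intro z hz h
    by_cases hz0 : z = 0
    · rw [hz0, dslope_same, hf1] at h; exact one_ne_zero h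
    · apply hne z hz hz0; rw [hfD, h, mul_zero])
  have hfe : ∀ z ∈ ball (0:ℂ) 1, f z = z * exp (H z) := fun z hz => by rw [hfD, hHe z hz]
  have hder : ∀ z ∈ ball (0:ℂ) 1, deriv f z = exp (H z) * (1 + z * deriv H z) := by
    intro z hz
    have e1 : f =ᶠ[nhds z] fun z => z * exp (H z) :=
      Filter.eventuallyEq_of_mem (isOpen_ball.mem_nhds hz) hfe
    rw [e1.deriv_eq]
    have e2 := (hH.differentiableAt (isOpen_ball.mem_nhds hz)).hasDerivAt
    have e3 := (hasDerivAt_id z).mul e2.cexp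
    have e4 : deriv (fun z => z * exp (H z)) z = _ := e3.deriv
    rw [e4]; simp only [id]; ring
  refine ⟨H, hH, hfe, hder, ?_⟩
  intro z hz
  by_cases hz0 : z = 0
  · simp [hz0, hα1]
  · have := hst z hz hz0
    rw [hder z hz, hfe z hz] at this
    convert this using 2
    have := exp_ne_zero (H z)
    field_simp

lemma mobius_norm {a z : ℂ} (ha : ‖a‖ < 1) (hz : ‖z‖ < 1) :
    1 + (starRingEnd ℂ) a * z ≠ 0 ∧ ‖(z + a) / (1 + (starRingEnd ℂ) a * z)‖ < 1 := by
  have hne : 1 + (starRingEnd ℂ) a * z ≠ 0 := by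
    have := one_sub_ne (u := -((starRingEnd ℂ) a * z)) (by
      rw [norm_neg, norm_mul, RCLike.norm_conj]
      nlinarith [norm_nonneg a, norm_nonneg z])
    simpa using this
  refine ⟨hne, ?_⟩
  rw [norm_div, div_lt_one (norm_pos_iff.2 hne), ← sq_lt_sq₀ (norm_nonneg _) (norm_nonneg _),
    ← normSq_eq_norm_sq, ← normSq_eq_norm_sq]
  have h1 : normSq a < 1 := by
    rw [normSq_eq_norm_sq]; nlinarith [norm_nonneg a]
  have h2 : normSq z < 1 := by
    rw [normSq_eq_norm_sq]; nlinarith [norm_nonneg z]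
  simp only [normSq_apply] at h1 h2 ⊢
  simp
  nlinarith [mul_pos (sub_pos.2 h1) (sub_pos.2 h2)]

lemma cayley_norm {P P0 : ℂ} (hP : 0 < P.re) (hP0 : 0 < P0.re) :
    P + (starRingEnd ℂ) P0 ≠ 0 ∧ ‖(P - P0) / (P + (starRingEnd ℂ) P0)‖ < 1 := by
  have hne : P + (starRingEnd ℂ) P0 ≠ 0 := by
    intro h
    have := congrArg re h
    simp at this
    linarith
  refine ⟨hne, ?_⟩
  rw [norm_div, div_lt_one (norm_pos_iff.2 hne), ← sq_lt_sq₀ (norm_nonneg _) (norm_nonneg _),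
    ← normSq_eq_norm_sq, ← normSq_eq_norm_sq]
  simp only [normSq_apply]
  simp
  nlinarith [mul_pos hP hP0]

lemma carath_deriv {p : ℂ → ℂ} (hp : DifferentiableOn ℂ p (ball 0 1))
    (hpos : ∀ z ∈ ball (0:ℂ) 1, 0 < (p z).re) {a : ℂ} (ha : ‖a‖ < 1) :
    ‖deriv p a‖ * (1 - ‖a‖ ^ 2) ≤ 2 * (p a).re := by
  have ham : a ∈ ball (0:ℂ) 1 := by simpa using ha
  set ψ : ℂ → ℂ := fun z => (z + a) / (1 + (starRingEnd ℂ) a * z) with hψ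
  have hψm : ∀ z ∈ ball (0:ℂ) 1, ψ z ∈ ball (0:ℂ) 1 := fun z hz => by
    rw [mem_ball_zero_iff] at hz ⊢; exact (mobius_norm ha hz).2
  have hψd : ∀ z ∈ ball (0:ℂ) 1, DifferentiableAt ℂ ψ z := fun z hz =>
    DifferentiableAt.div (by fun_prop) (by fun_prop) (mobius_norm ha (by simpa using hz)).1
  have hψ0 : ψ 0 = a := by simp [hψ]
  set W : ℂ → ℂ := fun z => (p (ψ z) - p a) / (p (ψ z) + (starRingEnd ℂ) (p a)) with hW
  have hpd : ∀ z ∈ ball (0:ℂ) 1, DifferentiableAt ℂ (fun z => p (ψ z)) z := fun z hz =>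
    DifferentiableAt.comp z (hp.differentiableAt (isOpen_ball.mem_nhds (hψm z hz))) (hψd z hz)
  have hWd : DifferentiableOn ℂ W (ball 0 1) := fun z hz =>
    (DifferentiableAt.div ((hpd z hz).sub_const _) ((hpd z hz).add_const _)
      (cayley_norm (hpos _ (hψm z hz)) (hpos a ham)).1).differentiableWithinAt
  have hW0 : W 0 = 0 := by simp [hW, hψ0]
  have h := norm_deriv_le_one_of_mapsTo_ball hWd (by
    intro z hz
    rw [hW0, mem_closedBall_zero_iff]
    exact (cayley_norm (hpos _ (hψm z hz)) (hpos a ham)).2.le) one_pos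
  have e0 : (0:ℂ) ∈ ball (0:ℂ) 1 := by simp
  have e1 : HasDerivAt ψ (1 - (starRingEnd ℂ) a * a) 0 := by
    have := ((hasDerivAt_id (0:ℂ)).add_const a).div
      (((hasDerivAt_id (0:ℂ)).const_mul ((starRingEnd ℂ) a)).const_add 1) (by simp)
    refine HasDerivAt.congr_deriv this ?_
    simp [mul_comm]
  have e2 : HasDerivAt (fun z => p (ψ z)) (deriv p a * (1 - (starRingEnd ℂ) a * a)) 0 := by
    have e3 : HasDerivAt p (deriv p a) (ψ 0) := by
      rw [hψ0]; exact (hp.differentiableAt (isOpen_ball.mem_nhds ham)).hasDerivAt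
    exact e3.comp 0 e1
  have hne : p a + (starRingEnd ℂ) (p a) ≠ 0 := (cayley_norm (hpos a ham) (hpos a ham)).1
  have e4 := (e2.sub_const (p a)).div (e2.add_const ((starRingEnd ℂ) (p a))) (by rw [hψ0]; exact hne)
  have e5 : deriv W 0 = deriv p a * (1 - (starRingEnd ℂ) a * a) / (p a + (starRingEnd ℂ) (p a)) := by
    have : deriv W 0 = _ := e4.deriv
    rw [this, hψ0, sub_self, zero_mul, sub_zero]
    field_simp
  rw [e5, add_conj, ← normSq_eq_conj_mul_self, norm_div, norm_mul, norm_real, normSq_eq_norm_sq,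
    ← ofReal_one, ← ofReal_sub, norm_real, Real.norm_eq_abs, Real.norm_eq_abs,
    abs_of_pos (by nlinarith [norm_nonneg a] : 0 < 1 - ‖a‖ ^ 2), 
    abs_of_pos (by have := hpos a ham; positivity : 0 < 2 * (p a).re), div_le_one (by have := hpos a ham; positivity)] at h
  exact h

lemma carath_lower {p : ℂ → ℂ} (hp : DifferentiableOn ℂ p (ball 0 1))
    (hpos : ∀ z ∈ ball (0:ℂ) 1, 0 < (p z).re) (hp0 : p 0 = 1) {z : ℂ} (hz : ‖z‖ < 1) :
    1 - ‖z‖ ≤ ‖p z‖ * (1 + ‖z‖) := by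
  set W : ℂ → ℂ := fun z => (p z - 1) / (p z + (starRingEnd ℂ) 1) with hW
  have hWd : DifferentiableOn ℂ W (ball 0 1) := (hp.sub_const _).div (hp.add_const _)
    (fun z hz => (cayley_norm (hpos _ hz) (by simp)).1)
  have h := norm_le_norm_of_mapsTo_ball hWd (fun z hz => by
    rw [mem_closedBall_zero_iff]
    exact (cayley_norm (hpos _ hz) (by simp)).2.le) (by simp [hW, hp0]) hz
  have hne := (cayley_norm (P := p z) (P0 := 1) (hpos _ (by simpa using hz)) (by simp)).1
  simp only [hW] at h
  rw [norm_div, div_le_iff₀ (norm_pos_iff.2 hne), map_one] at h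
  have h1 : 1 - ‖p z‖ ≤ ‖p z - 1‖ := by
    have := norm_sub_norm_le 1 (p z)
    rw [norm_sub_rev] at this
    simpa using this
  have h2 : ‖p z + 1‖ ≤ ‖p z‖ + 1 := by simpa using norm_add_le (p z) 1
  nlinarith [norm_nonneg z]

lemma convex_re {p : ℂ → ℂ} (hp : DifferentiableOn ℂ p (ball 0 1))
    (hpos : ∀ z ∈ ball (0:ℂ) 1, 0 < (p z).re) (hp0 : p 0 = 1) {z : ℂ} (hz : ‖z‖ < 2 - √3) :
    0 < (p z + z * (deriv p z / p z)).re := by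
  have h3 : √3 ^ 2 = 3 := Real.sq_sqrt (by norm_num)
  have h31 : 1 < √3 := by
    rw [Real.lt_sqrt (by norm_num)]; norm_num
  have hr0 := norm_nonneg z
  have hr1 : ‖z‖ < 1 := by linarith
  have hq : 0 < 1 - 4 * ‖z‖ + ‖z‖ ^ 2 := by nlinarith
  have hP := hpos z (by simpa using hr1)
  have h1 := carath_deriv hp hpos hr1
  have h2 := carath_lower hp hpos hp0 hr1
  have hpn : 0 < ‖p z‖ := hP.trans_le (re_le_norm _)
  have h4 : ‖z * (deriv p z / p z)‖ < (p z).re := by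
    rw [norm_mul, norm_div, ← mul_div_assoc, div_lt_iff₀ hpn]
    have h5 : 0 < 1 - ‖z‖ ^ 2 := by nlinarith
    have h6 : 2 * ‖z‖ < ‖p z‖ * (1 - ‖z‖ ^ 2) := by
      have : (1 - ‖z‖) * (1 - ‖z‖) ≤ ‖p z‖ * (1 + ‖z‖) * (1 - ‖z‖) := by
        apply mul_le_mul_of_nonneg_right h2; linarith
      nlinarith
    by_contra hcon
    push Not at hcon
    have h7 : (p z).re * ‖p z‖ * (1 - ‖z‖ ^ 2) ≤ ‖z‖ * (2 * (p z).re) := by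
      calc _ ≤ ‖z‖ * ‖deriv p z‖ * (1 - ‖z‖ ^ 2) := by gcongr
        _ = ‖z‖ * (‖deriv p z‖ * (1 - ‖z‖ ^ 2)) := by ring
        _ ≤ _ := by gcongr
    nlinarith
  have h8 := abs_le.1 ((abs_re_le_norm (z * (deriv p z / p z))).trans h4.le)
  have h9 := (abs_re_le_norm (z * (deriv p z / p z))).trans_lt h4
  rw [add_re]
  linarith [(abs_lt.1 h9).1]

lemma curve_data {G : ℂ → ℂ} {r : ℝ} (hG : DifferentiableOn ℂ G (ball 0 r)) {c : ℂ} (hc0 : c ≠ 0)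
    (hc : ‖c‖ < r) (hre : ∀ z, ‖z‖ = ‖c‖ → 0 < (1 + z * deriv G z).re) :
    ∃ u A : ℝ → ℝ, Continuous u ∧ StrictMono u ∧ (∀ θ, u (θ + 2 * Real.pi) = u θ + 2 * Real.pi) ∧
      (∀ θ, 0 < A θ) ∧ ∀ θ, c * E θ * exp (G (c * E θ)) = A θ * E (u θ) := by
  have hn : ∀ θ, ‖c * E θ‖ = ‖c‖ := fun θ => by simp [norm_E]
  have hd : ∀ θ : ℝ, HasDerivAt (fun θ : ℝ => θ + arg c + (G (c * E θ)).im)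
      (1 + (c * E θ) * deriv G (c * E θ)).re θ := by
    intro θ
    have e1 := (hG.differentiableAt (x := c * E θ) (isOpen_ball.mem_nhds (by
      rw [mem_ball_zero_iff, hn]; exact hc))).hasDerivAt
    have e2 : HasDerivAt (fun θ : ℝ => c * E θ) (c * (I * E θ)) θ := (hasDerivAt_E θ).const_mul c
    have e3 : HasDerivAt (fun θ : ℝ => G (c * E θ)) (deriv G (c * E θ) * (c * (I * E θ))) θ := e1.comp θ e2
    have e4 : HasDerivAt (fun θ : ℝ => (G (c * E θ)).im) (deriv G (c * E θ) * (c * (I * E θ))).im θ :=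
      Complex.imCLM.hasFDerivAt.comp_hasDerivAt θ e3
    have e5 := ((hasDerivAt_id θ).add_const (arg c)).add e4
    refine HasDerivAt.congr_deriv e5 ?_
    have : deriv G (c * E θ) * (c * (I * E θ)) = (c * E θ) * deriv G (c * E θ) * I := by ring
    rw [this, mul_I_im, add_re, one_re]
  refine ⟨fun θ => θ + arg c + (G (c * E θ)).im, fun θ => ‖c‖ * Real.exp (G (c * E θ)).re, ?_, ?_, ?_, ?_, ?_⟩
  · exact continuous_iff_continuousAt.2 fun θ => (hd θ).continuousAt
  · apply strictMono_of_deriv_pos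
    intro θ
    rw [(hd θ).deriv]
    exact hre _ (hn θ)
  · intro θ
    simp only [E_per]; ring
  · intro θ
    have := norm_pos_iff.2 hc0
    positivity
  · intro θ
    have h1 : c = ‖c‖ * E (arg c) := (norm_mul_exp_arg_mul_I c).symm
    have h2 : ∀ w : ℂ, exp w = Real.exp w.re * E w.im := by
      intro w
      rw [E, ofReal_exp, ← exp_add, re_add_im]
    change c * E θ * exp (G (c*E θ)) = ((‖c‖ * Real.exp (G (c * E θ)).re : ℝ):ℂ) * E (θ + arg c + (G (c * E θ)).im)
    rw [h2, E_add, E_add]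
    generalize G (c * E θ) = w
    nth_rw 1 [h1]
    push_cast
    ring

lemma hN_starlike {f g Hf Hg : ℂ → ℂ} (hHf : DifferentiableOn ℂ Hf (ball 0 1))
    (hHg : DifferentiableOn ℂ Hg (ball 0 1))
    (hfe : ∀ z ∈ ball (0:ℂ) 1, f z = z * exp (Hf z)) (hge : ∀ z ∈ ball (0:ℂ) 1, g z = z * exp (Hg z))
    (hfd : ∀ z ∈ ball (0:ℂ) 1, deriv f z = exp (Hf z) * (1 + z * deriv Hf z))
    (hfp : ∀ z ∈ ball (0:ℂ) 1, 0 < (1 + z * deriv Hf z).re)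
    (hgp : ∀ z ∈ ball (0:ℂ) 1, 0 < (1 + z * deriv Hg z).re)
    (hfD : DifferentiableOn ℂ f (ball 0 1)) (hgD : DifferentiableOn ℂ g (ball 0 1))
    {ρ R : ℝ} (hR : 1 < R) (hρ0 : 0 < ρ) (hρ : ρ * R ≤ 2 - √3) {c : ℂ} (hc0 : c ≠ 0) (hc : ‖c‖ * R ≤ 1)
    (a b : ℝ) :
    DifferentiableOn ℂ (fun ζ => f (ρ * ζ)) (ball 0 R) ∧ DifferentiableOn ℂ (fun ζ => g (c * ζ)) (ball 0 R) ∧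
    ∫ θ in (0:ℝ)..2 * Real.pi, dslope (fun ζ => f (ρ * ζ)) (E a) (E θ) * E θ *
      (g (c * E (-θ)) * (1 - E (b - θ))) ≠ 0 := by
  have h31 : 1 < √3 := by
    rw [Real.lt_sqrt (by norm_num)]; norm_num
  have hc' : 0 < ‖c‖ := norm_pos_iff.2 hc0
  have hc1 : ‖c‖ < 1 := by nlinarith
  have hρ1 : ρ < 2 - √3 := by nlinarith
  have hφ : DifferentiableOn ℂ (fun ζ => f (ρ * ζ)) (ball 0 R) := by
    refine hfD.comp (by fun_prop) ?_
    intro z hz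
    rw [mem_ball_zero_iff] at hz ⊢
    rw [norm_mul, norm_real, Real.norm_eq_abs, abs_of_pos hρ0]
    nlinarith
  have hg1 : DifferentiableOn ℂ (fun ζ => g (c * ζ)) (ball 0 R) := by
    refine hgD.comp (by fun_prop) ?_
    intro z hz
    rw [mem_ball_zero_iff] at hz ⊢
    rw [norm_mul]
    nlinarith
  refine ⟨hφ, hg1, ?_⟩
  -- data for g
  obtain ⟨u, B, huc, hum, hup, hB, hu⟩ := curve_data hHg hc0 hc1 (fun z hz => hgp z (by
    rw [mem_ball_zero_iff, hz]; exact hc1))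
  -- data for f
  set p : ℂ → ℂ := fun z => 1 + z * deriv Hf z with hp
  have hpd : DifferentiableOn ℂ p (ball 0 1) :=
    (differentiableOn_id.mul (hHf.deriv isOpen_ball)).const_add 1
  have hslit : ∀ z ∈ ball (0:ℂ) 1, p z ∈ slitPlane := fun z hz => Or.inl (hfp z hz)
  have hGd : ∀ z ∈ ball (0:ℂ) 1, HasDerivAt (fun z => Hf z + log (p z)) (deriv Hf z + deriv p z / p z) z := by
    intro z hz
    have e1 := (hHf.differentiableAt (isOpen_ball.mem_nhds hz)).hasDerivAt
    have e2 := (hpd.differentiableAt (isOpen_ball.mem_nhds hz)).hasDerivAt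
    exact e1.add (e2.clog (hslit z hz))
  have hρn : ‖(ρ:ℂ)‖ = ρ := by simp [abs_of_pos hρ0]
  obtain ⟨κ, A, hκc, hκm, hκp, hA, hκ⟩ := curve_data (r := 1) (c := (ρ:ℂ))
    (G := fun z => Hf z + log (p z))
    (fun z hz => (hGd z hz).differentiableAt.differentiableWithinAt) (by exact_mod_cast hρ0.ne')
    (by rw [hρn]; linarith) (by
      intro z hz
      rw [hρn] at hz
      have hzm : z ∈ ball (0:ℂ) 1 := by rw [mem_ball_zero_iff]; linarith
      rw [(hGd z hzm).deriv]
      have := convex_re hpd hfp (by simp [hp]) (z := z) (by linarith)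
      convert this using 2
      simp only [hp]; ring)
  refine circle_ne_zero (g := fun ζ => g (c * ζ)) hR hφ hg1 (by simp [hge 0 (by simp)]) κ A hκm hκp hA ?_
    (fun θ => -u (-θ)) (fun θ => B (-θ)) (by fun_prop) ?_ ?_ (fun θ => hB _) ?_ a b
  · intro θ
    rw [← hκ θ]
    have hzm : (ρ:ℂ) * E θ ∈ ball (0:ℂ) 1 := by
      rw [mem_ball_zero_iff, norm_rE hρ0.le]; linarith
    have e1 : HasDerivAt (fun ζ => f (ρ * ζ)) (deriv f (ρ * E θ) * (ρ * 1)) (E θ) := by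
      have := (hfD.differentiableAt (isOpen_ball.mem_nhds hzm)).hasDerivAt
      exact this.comp (E θ) ((hasDerivAt_id (E θ)).const_mul (ρ:ℂ))
    rw [e1.deriv, hfd _ hzm, exp_add, exp_log (slitPlane_ne_zero (hslit _ hzm))]
    simp only [hp]
    ring
  · intro x y hxy
    simp only [neg_lt_neg_iff]
    exact hum (by linarith)
  · intro θ
    have := hup (-(θ + 2 * Real.pi))
    rw [show -(θ + 2 * Real.pi) + 2 * Real.pi = -θ by ring] at this
    linarith
  · intro θ
    simp only [neg_neg]
    rw [← hu, hge]
    rw [mem_ball_zero_iff, norm_mul, norm_E, mul_one]; exact hc1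

lemma hasSum_int {u : ℕ → ℝ → ℂ} {U Ψ : ℝ → ℂ} {M : ℕ → ℝ} (hM : Summable M)
    (huc : ∀ n, Continuous (u n)) (hu : ∀ n θ, ‖u n θ‖ ≤ M n) (hΨ : Continuous Ψ)
    (hU : ∀ θ, HasSum (fun n => u n θ) (U θ)) :
    HasSum (fun n => ∫ θ in (0:ℝ)..2 * Real.pi, u n θ * Ψ θ) (∫ θ in (0:ℝ)..2 * Real.pi, U θ * Ψ θ) := by
  refine intervalIntegral.hasSum_integral_of_dominated_convergence (fun n θ => M n * ‖Ψ θ‖) ?_ ?_ ?_ ?_ ?_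
  · intro n
    exact ((huc n).mul hΨ).aestronglyMeasurable
  · intro n
    refine Filter.Eventually.of_forall fun θ _ => ?_
    rw [norm_mul]
    exact mul_le_mul_of_nonneg_right (hu n θ) (norm_nonneg _)
  · exact Filter.Eventually.of_forall fun θ _ => hM.mul_right _
  · simp_rw [tsum_mul_right]
    exact (continuous_const.mul hΨ.norm).intervalIntegrable _ _
  · exact Filter.Eventually.of_forall fun θ _ => (hU θ).mul_right _

lemma int_E (k : ℤ) : ∫ θ in (0:ℝ)..2 * Real.pi, E (k * θ) = if k = 0 then 2 * (Real.pi : ℂ) else (0:ℂ) := by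
  split_ifs with h
  · simp [h, E_zero]
  · have hk : (k:ℂ) * I ≠ 0 := mul_ne_zero (by exact_mod_cast h) I_ne_zero
    have := integral_exp_mul_complex (a := 0) (b := 2 * Real.pi) hk
    have e : ∀ θ : ℝ, E (k * θ) = exp (k * I * θ) := by
      intro θ; simp only [E]; push_cast; congr 1; ring
    simp_rw [e]
    rw [this]
    have e2 : exp ((k:ℂ) * I * ((2 * Real.pi : ℝ) : ℂ)) = 1 := by
      rw [← exp_int_mul_two_pi_mul_I k]; push_cast; congr 1; ring
    rw [e2]; simp

lemma E_pow (n : ℕ) (θ : ℝ) : E θ ^ n = E (n * θ) := by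
  simp only [E]; rw [← exp_nat_mul]; push_cast; congr 1; ring

lemma coeff_int {b : ℕ → ℂ} {B : ℂ → ℂ} (hB : ∀ z ∈ ball (0:ℂ) 1, HasSum (fun n => b n * z ^ n) (B z))
    {y : ℂ} (hy : ‖y‖ < 1) (n : ℕ) :
    ∫ θ in (0:ℝ)..2 * Real.pi, B (y * E (-θ)) * E (n * θ) = 2 * Real.pi * (b n * y ^ n) := by
  have hm : ∀ θ, y * E θ ∈ ball (0:ℂ) 1 := fun θ => by simpa [norm_E] using hy
  have h := hasSum_int (u := fun m θ => b m * (y * E (-θ)) ^ m) (U := fun θ => B (y * E (-θ)))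
    (Ψ := fun θ => E (n * θ)) (M := fun m => ‖b m * y ^ m‖) (hB y (by simpa using hy)).summable.norm
    (fun m => by fun_prop) (fun m θ => by simp [norm_E]) (by fun_prop) (fun θ => hB _ (hm _))
  have e : ∀ m : ℕ, ∫ θ in (0:ℝ)..2 * Real.pi, b m * (y * E (-θ)) ^ m * E (n * θ) =
      if m = n then 2 * (Real.pi : ℂ) * (b n * y ^ n) else (0:ℂ) := by
    intro m
    have e1 : ∀ θ : ℝ, b m * (y * E (-θ)) ^ m * E (n * θ) = b m * y ^ m * E (((n:ℤ) - (m:ℤ) : ℤ) * θ) := by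
      intro θ
      rw [mul_pow, E_pow, mul_assoc, mul_assoc, ← E_add, ← mul_assoc]
      congr 2
      push_cast; ring
    simp_rw [e1]
    rw [intervalIntegral.integral_const_mul, int_E]
    by_cases hmn : m = n
    · subst hmn; simp; ring
    · have : ((n:ℤ) - (m:ℤ)) ≠ 0 := by omega
      rw [if_neg this, if_neg hmn, mul_zero]
  simp_rw [e] at h
  have h2 := hasSum_ite_eq n (2 * (Real.pi : ℂ) * (b n * y ^ n))
  exact h.unique h2

lemma parseval {a b : ℕ → ℂ} {A B : ℂ → ℂ} (hA : ∀ z ∈ ball (0:ℂ) 1, HasSum (fun n => a n * z ^ n) (A z))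
    (hB : ∀ z ∈ ball (0:ℂ) 1, HasSum (fun n => b n * z ^ n) (B z)) (hBc : ContinuousOn B (ball 0 1))
    {x y : ℂ} (hx : ‖x‖ < 1) (hy : ‖y‖ < 1) {S : ℂ} (hS : HasSum (fun n => a n * b n * (x * y) ^ n) S) :
    ∫ θ in (0:ℝ)..2 * Real.pi, A (x * E θ) * B (y * E (-θ)) = 2 * Real.pi * S := by
  have h := hasSum_int (u := fun m θ => a m * (x * E θ) ^ m) (U := fun θ => A (x * E θ))
    (Ψ := fun θ => B (y * E (-θ))) (M := fun m => ‖a m * x ^ m‖) (hA x (by simpa using hx)).summable.norm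
    (fun m => by fun_prop) (fun m θ => by simp [norm_E])
    (hBc.comp_continuous (by fun_prop) (fun θ => by simpa [norm_E] using hy))
    (fun θ => hA _ (by simpa [norm_E] using hx))
  refine h.unique ?_
  have e : (fun n => ∫ θ in (0:ℝ)..2 * Real.pi, a n * (x * E θ) ^ n * B (y * E (-θ))) =
      fun n => 2 * (Real.pi : ℂ) * (a n * b n * (x * y) ^ n) := by
    funext n
    have e1 : ∀ θ : ℝ, a n * (x * E θ) ^ n * B (y * E (-θ)) =
        a n * x ^ n * (B (y * E (-θ)) * E (n * θ)) := by
      intro θ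
      rw [mul_pow, E_pow]; ring
    simp_rw [e1]
    rw [intervalIntegral.integral_const_mul, coeff_int hB hy, mul_pow]
    ring
  rw [e]
  exact hS.mul_left _

lemma hasSum_zderiv {c : ℕ → ℂ} {F : ℂ → ℂ} (hF : ∀ z ∈ ball (0:ℂ) 1, HasSum (fun n => c n * z ^ n) (F z))
    {z : ℂ} (hz : z ∈ ball (0:ℂ) 1) : HasSum (fun n => n * c n * z ^ n) (z * deriv F z) := by
  rw [mem_ball_zero_iff] at hz
  obtain ⟨r, hr, hr1⟩ := exists_between hz
  have hr0 : 0 < r := (norm_nonneg _).trans_lt hr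
  have hs : Summable (fun n => ‖c n‖ * r ^ n) := by
    have := (hF (r:ℂ) (by simpa [abs_of_pos hr0] using hr1)).summable.norm
    simpa [abs_of_pos hr0] using this
  have h := Complex.hasSum_deriv_of_summable_norm (F := fun n (w:ℂ) => c n * w ^ n) (U := ball (0:ℂ) r) hs
    (fun n => by fun_prop) isOpen_ball (fun n w hw => by
      rw [norm_mul, norm_pow]
      have : ‖w‖ ≤ r := by simpa using (mem_ball_zero_iff.1 hw).le
      gcongr) (z := z) (by simpa using hr)
  have e1 : deriv (fun w => ∑' n, c n * w ^ n) z = deriv F z := by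
    apply Filter.EventuallyEq.deriv_eq
    refine Filter.eventuallyEq_of_mem (isOpen_ball.mem_nhds (mem_ball_zero_iff.2 hz)) ?_
    intro w hw
    exact (hF w hw).tsum_eq
  rw [e1] at h
  have e : (fun n : ℕ => (n:ℂ) * c n * z ^ n) = fun n => z * deriv (fun w => c n * w ^ n) z := by
    funext n
    rw [deriv_const_mul_field, deriv_pow_field]
    rcases n with _ | n
    · simp
    · simp [pow_succ]; ring
  rw [e]
  exact h.mul_left z

lemma radius_le {α : ℝ} (hα0 : 0 ≤ α) : (2 - Real.sqrt (3 + α^2)) / (1 + α) ≤ 2 - √3 := by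
  rw [div_le_iff₀ (by linarith)]
  have h1 : √3 ≤ Real.sqrt (3 + α^2) := Real.sqrt_le_sqrt (by nlinarith)
  have h2 : √3 ≤ 2 := by rw [Real.sqrt_le_left (by norm_num)]; norm_num
  nlinarith

lemma main_aux (α : ℝ) (hα0 : 0 ≤ α) (hα1 : α < 1)
    (f g h : ℂ → ℂ) (a b : ℕ → ℂ)
    (hf1 : DifferentiableOn ℂ f (ball 0 1)) (hf2 : f 0 = 0) (hf3 : deriv f 0 = 1)
    (hf4 : ∀ z ∈ ball (0:ℂ) 1, z ≠ 0 → f z ≠ 0)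
    (hf5 : ∀ z ∈ ball (0:ℂ) 1, z ≠ 0 → α < (z * deriv f z / f z).re)
    (hg1 : DifferentiableOn ℂ g (ball 0 1)) (hg2 : g 0 = 0) (hg3 : deriv g 0 = 1)
    (hg4 : ∀ z ∈ ball (0:ℂ) 1, z ≠ 0 → g z ≠ 0)
    (hg5 : ∀ z ∈ ball (0:ℂ) 1, z ≠ 0 → α < (z * deriv g z / g z).re)
    (hfa : ∀ z ∈ ball (0:ℂ) 1, HasSum (fun n => a n * z^n) (f z))
    (hgb : ∀ z ∈ ball (0:ℂ) 1, HasSum (fun n => b n * z^n) (g z))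
    (hhab : ∀ z ∈ ball (0:ℂ) 1, HasSum (fun n => a n * b n * z^n) (h z))
    (z : ℂ) (hz0 : 0 < ‖z‖) (hz : ‖z‖ < 2 - √3) :
      h z ≠ 0 ∧ α < (z * deriv h z / h z).re := by
  obtain ⟨Hf, hHf, hfe, hfd, hfp⟩ := starlike_rep hα1 hf1 hf2 hf3 hf4 hf5
  obtain ⟨Hg, hHg, hge, hgd, hgp⟩ := starlike_rep hα1 hg1 hg2 hg3 hg4 hg5
  have h31 : 1 < √3 := by
    rw [Real.lt_sqrt (by norm_num)]; norm_num
  obtain ⟨ρ, hρ, hρr⟩ := exists_between hz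
  have hρ0 : 0 < ρ := hz0.trans hρ
  obtain ⟨R, hR, hR1, hR2⟩ : ∃ R : ℝ, 1 < R ∧ ρ * R ≤ 2 - √3 ∧ ‖z‖ * R ≤ ρ := by
    refine ⟨min ((2 - √3) / ρ) (ρ / ‖z‖), ?_, ?_, ?_⟩
    · rw [lt_min_iff, one_lt_div hρ0, one_lt_div hz0]; exact ⟨hρr, hρ⟩
    · rw [← le_div_iff₀' hρ0]; exact min_le_left _ _
    · rw [← le_div_iff₀' hz0]; exact min_le_right _ _
  obtain ⟨s, hs, hsR⟩ := exists_between hR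
  have hs0 : 0 < s := by linarith
  have hzne : z ≠ 0 := norm_pos_iff.1 hz0
  have hρc : (ρ:ℂ) ≠ 0 := by exact_mod_cast hρ0.ne'
  have hsc : (s:ℂ) ≠ 0 := by exact_mod_cast hs0.ne'
  set c : ℂ := z / ρ with hc
  have hc0 : c ≠ 0 := div_ne_zero hzne hρc
  have hcn : ‖c‖ = ‖z‖ / ρ := by rw [hc, norm_div, norm_real, Real.norm_eq_abs, abs_of_pos hρ0]
  have hcR : ‖c‖ * R ≤ 1 := by
    rw [hcn, div_mul_eq_mul_div, div_le_one hρ0]; exact hR2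
  have hcR' : ∀ w ∈ ball (0:ℂ) R, c * w ∈ ball (0:ℂ) 1 := by
    intro w hw
    rw [mem_ball_zero_iff] at hw ⊢
    rw [norm_mul]
    have : 0 < ‖c‖ := norm_pos_iff.2 hc0
    nlinarith
  have hN := hN_starlike hHf hHg hfe hge hfd (fun z hz => hα0.trans_lt (hfp z hz))
    (fun z hz => hα0.trans_lt (hgp z hz)) hf1 hg1 hR hρ0 hR1 hc0 hcR
  have hφD := (hN 0 0).1
  have hgD := (hN 0 0).2.1
  have hcore := fun (q : ℂ → ℂ) (hq : DifferentiableOn ℂ q (ball 0 R)) (hqp : ∀ z ∈ ball (0:ℂ) R, 0 < (q z).re) =>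
    core hs hsR hφD hgD (by simp [hg2]) (fun a b => (hN a b).2.2) hq hqp
  have hx : ‖(ρ:ℂ) * s‖ < 1 := by
    rw [norm_mul, norm_real, norm_real, Real.norm_eq_abs, Real.norm_eq_abs, abs_of_pos hρ0, abs_of_pos hs0]
    nlinarith
  have hsi : s⁻¹ < 1 := inv_lt_one_of_one_lt₀ hs
  have hsi0 : 0 < s⁻¹ := inv_pos.2 hs0
  have hyR : ∀ θ, ((s⁻¹ : ℝ) : ℂ) * E (-θ) ∈ ball (0:ℂ) R := by
    intro θ
    rw [mem_ball_zero_iff, norm_mul, norm_E, mul_one, norm_real, Real.norm_eq_abs, abs_of_pos hsi0]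
    linarith
  have hy : ‖c * ((s⁻¹ : ℝ) : ℂ)‖ < 1 := by
    have := hcR' _ (hyR 0)
    rw [mem_ball_zero_iff, ← mul_assoc, norm_mul, norm_E, mul_one] at this
    exact this
  have hxy : (ρ:ℂ) * s * (c * ((s⁻¹ : ℝ) : ℂ)) = z := by
    rw [hc]; push_cast; field_simp
  have hzm : z ∈ ball (0:ℂ) 1 := by rw [mem_ball_zero_iff]; linarith
  have hne : h z ≠ 0 := by
    intro h0
    refine hcore (fun _ => 1) (by fun_prop) (by simp) ?_
    have := parseval hfa hgb hg1.continuousOn hx hy (S := h z) (by rw [hxy]; exact hhab z hzm)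
    rw [h0, mul_zero] at this
    rw [← this]
    refine intervalIntegral.integral_congr fun θ _ => ?_
    simp only [mul_one, mul_assoc]
  refine ⟨hne, ?_⟩
  by_contra hcon
  push Not at hcon
  set k : ℂ := z * deriv h z / h z with hk
  have hkS : z * deriv h z - k * h z = 0 := by rw [hk]; field_simp; ring
  have hdg : DifferentiableOn ℂ (deriv Hg) (ball 0 1) := hHg.deriv isOpen_ball
  refine hcore (fun w => (1 + c * w * deriv Hg (c * w)) - k) ?_ ?_ ?_
  · have h1 : DifferentiableOn ℂ (fun w => deriv Hg (c * w)) (ball 0 R) := hdg.comp (by fun_prop) hcR'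
    have h2 : DifferentiableOn ℂ (fun w : ℂ => c * w) (ball 0 R) := by fun_prop
    exact ((h2.mul h1).const_add 1).sub_const k
  · intro w hw
    have := hgp _ (hcR' w hw)
    rw [sub_re]; linarith
  · have hB : ∀ w ∈ ball (0:ℂ) 1, HasSum (fun n : ℕ => (n * b n - k * b n) * w ^ n) (w * deriv g w - k * g w) := by
      intro w hw
      have h1 := (hasSum_zderiv hgb hw).sub ((hgb w hw).mul_left k)
      have e : (fun n : ℕ => (n * b n - k * b n) * w ^ n) = fun n : ℕ => n * b n * w ^ n - k * (b n * w ^ n) := by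
        funext n; ring
      rw [e]; exact h1
    have hBc : ContinuousOn (fun w => w * deriv g w - k * g w) (ball 0 1) :=
      (continuousOn_id.mul (hg1.deriv isOpen_ball).continuousOn).sub (continuousOn_const.mul hg1.continuousOn)
    have hS : HasSum (fun n : ℕ => a n * (n * b n - k * b n) * z ^ n) (z * deriv h z - k * h z) := by
      have h1 := (hasSum_zderiv hhab hzm).sub ((hhab z hzm).mul_left k)
      have e : (fun n : ℕ => a n * (n * b n - k * b n) * z ^ n) =
          fun n : ℕ => n * (a n * b n) * z ^ n - k * (a n * b n * z ^ n) := by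
        funext n; ring
      rw [e]; exact h1
    have := parseval hfa hB hBc hx hy (by rw [hxy]; exact hS)
    rw [hkS, mul_zero] at this
    rw [← this]
    refine intervalIntegral.integral_congr fun θ _ => ?_
    have hm := hcR' _ (hyR θ)
    have e1 := hgd _ hm
    have e2 := hge _ hm
    simp only [mul_assoc] at e1 e2 ⊢
    rw [e1, e2]
    ring

theorem stmt8 (α : ℝ) (hα0 : 0 ≤ α) (hα1 : α < 1)
    (f g h : ℂ → ℂ) (a b : ℕ → ℂ)
    (hf : StarlikeOrder α f) (hg : StarlikeOrder α g)
    (ha0 : a 0 = 0) (ha1 : a 1 = 1) (hb0 : b 0 = 0) (hb1 : b 1 = 1)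
    (hfa : ∀ z ∈ 𝔻, HasSum (fun n => a n * z^n) (f z))
    (hgb : ∀ z ∈ 𝔻, HasSum (fun n => b n * z^n) (g z))
    (hhab : ∀ z ∈ 𝔻, HasSum (fun n => a n * b n * z^n) (h z)) :
    ∀ z : ℂ, 0 < ‖z‖ → ‖z‖ < (2 - Real.sqrt (3 + α^2)) / (1 + α) →
      h z ≠ 0 ∧ α < (z * deriv h z / h z).re := by
  intro z hz0 hz
  obtain ⟨⟨hf1, hf2, hf3⟩, hf4, hf5⟩ := hf
  obtain ⟨⟨hg1, hg2, hg3⟩, hg4, hg5⟩ := hg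
  exact main_aux α hα0 hα1 f g h a b hf1 hf2 hf3 hf4 hf5 hg1 hg2 hg3 hg4 hg5 hfa hgb hhab z hz0
    (hz.trans_le (radius_le hα0))
end
end

section
/- Let ψ be a Ma-Minda function with ψ(𝔻) a convex set, let k ≥ 2, and let g_k(z) = (z − z^{k+1})/(1 − z) = z + z² + ⋯ + z^k. Suppose r₀ ∈ (0, 1] is such that the function z ↦ g_k(r₀z)/r₀ is convex (i.e. belongs to C). If f(z) = z + Σ_{n≥2} aₙzⁿ ∈ C(ψ), then the k-th section f_k(z) = z + Σ_{n=2}^k aₙzⁿ satisfies: the function z ↦ f_k(r₀z)/r₀ belongs to C(ψ); that is, f_k ∈ C(ψ) on |z| < r₀. -/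
open Complex Metric Set

noncomputable section

section Helpers
open scoped Topology
open PowerSeries (X C coeff mk)


/-- A holomorphic function with nonnegative real part which is nonzero at the origin
never vanishes. -/
lemma nz_of_re_nonneg {q : ℂ → ℂ} (hq : DifferentiableOn ℂ q (ball 0 1))
    (hre : ∀ z ∈ ball (0:ℂ) 1, 0 ≤ (q z).re) (h0 : q 0 ≠ 0) :
    ∀ z ∈ ball (0:ℂ) 1, q z ≠ 0 := by
  intro z hz hqz
  have h0m : (0:ℂ) ∈ ball (0:ℂ) 1 := by simp
  rcases (hq.analyticOnNhd isOpen_ball).is_constant_or_isOpen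
    (convex_ball (0:ℂ) 1).isPreconnected with ⟨c, hc⟩ | ho
  · exact h0 (by rw [hc 0 h0m, ← hc z hz, hqz])
  · have hO := ho (ball 0 1) subset_rfl isOpen_ball
    have hmem : (0:ℂ) ∈ q '' ball 0 1 := ⟨z, hz, hqz⟩
    obtain ⟨ε, hε, hb⟩ := Metric.isOpen_iff.1 hO 0 hmem
    have : (-(ε/2 : ℝ) : ℂ) ∈ ball (0:ℂ) ε := by
      rw [mem_ball_zero_iff, norm_neg, norm_real, Real.norm_of_nonneg (by positivity)]; linarith
    obtain ⟨y, hy, hyq⟩ := hb this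
    have := hre y hy
    rw [hyq] at this
    simp at this
    linarith

/-- Connectedness: a continuous function on the disk whose real part never vanishes. -/
lemma re_pos_of_ne {q : ℂ → ℂ} (hq : ContinuousOn q (ball 0 1))
    (hre : ∀ z ∈ ball (0:ℂ) 1, (q z).re ≠ 0) (h0 : 0 < (q 0).re) :
    ∀ z ∈ ball (0:ℂ) 1, 0 < (q z).re := by
  intro z hz
  by_contra hneg
  push Not at hneg
  have h0m : (0:ℂ) ∈ ball (0:ℂ) 1 := by simp
  have hc : ContinuousOn (fun z => (q z).re) (ball (0:ℂ) 1) :=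
    Complex.continuous_re.comp_continuousOn hq
  obtain ⟨y, hy, hy0⟩ := (convex_ball (0:ℂ) 1).isPreconnected.intermediate_value hz h0m hc
    ⟨hneg, h0.le⟩
  exact hre y hy hy0

/-- Subordination from range inclusion. -/
lemma subord_of_maps {ψ Q : ℂ → ℂ} (hψ : DifferentiableOn ℂ ψ (ball 0 1))
    (hinj : InjOn ψ (ball 0 1)) (hQ : DifferentiableOn ℂ Q (ball 0 1))
    (h0 : Q 0 = ψ 0) (hm : ∀ z ∈ ball (0:ℂ) 1, Q z ∈ ψ '' ball 0 1) :
    Subordinate Q ψ := by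
  have h0m : (0:ℂ) ∈ ball (0:ℂ) 1 := by simp
  have hA := hψ.analyticOnNhd isOpen_ball
  have ho : ∀ s ⊆ ball (0:ℂ) 1, IsOpen s → IsOpen (ψ '' s) := by
    rcases hA.is_constant_or_isOpen (convex_ball (0:ℂ) 1).isPreconnected with ⟨c, hc⟩ | ho
    · exfalso
      have h2 : (1/2:ℂ) ∈ ball (0:ℂ) 1 := by simp; norm_num
      have := hinj h0m h2 (by rw [hc 0 h0m, hc _ h2])
      norm_num at this
    · exact ho
  set φ := Function.invFunOn ψ (ball 0 1) with hφ
  have hφm : ∀ y ∈ ψ '' ball 0 1, φ y ∈ ball (0:ℂ) 1 := fun y hy => Function.invFunOn_mem hy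
  have hφe : ∀ y ∈ ψ '' ball 0 1, ψ (φ y) = y := fun y hy => Function.invFunOn_eq hy
  have hφl : ∀ z ∈ ball (0:ℂ) 1, φ (ψ z) = z := fun z hz =>
    hinj (hφm _ ⟨z, hz, rfl⟩) hz (hφe _ ⟨z, hz, rfl⟩)
  have hV : IsOpen (ψ '' ball 0 1) := ho _ subset_rfl isOpen_ball
  have hcont : ∀ y ∈ ψ '' ball 0 1, ContinuousAt φ y := by
    intro y hy
    rw [ContinuousAt, _root_.tendsto_nhds]
    intro s hs hys
    have : ψ '' (s ∩ ball 0 1) ∈ 𝓝 y :=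
      (ho _ inter_subset_right (hs.inter isOpen_ball)).mem_nhds
        ⟨φ y, ⟨hys, hφm y hy⟩, hφe y hy⟩
    filter_upwards [this]
    rintro _ ⟨z, ⟨hzs, hzb⟩, rfl⟩
    simpa [hφl z hzb] using hzs
  have hd1 : ∀ y ∈ ψ '' ball 0 1, deriv ψ (φ y) ≠ 0 → DifferentiableAt ℂ φ y := by
    intro y hy hne
    have h1 : HasDerivAt ψ (deriv ψ (φ y)) (φ y) :=
      (hψ.differentiableAt (isOpen_ball.mem_nhds (hφm y hy))).hasDerivAt
    exact (h1.of_local_left_inverse (hcont y hy) hne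
      (by filter_upwards [hV.mem_nhds hy] with x hx using hφe x hx)).differentiableAt
  have hd2 : ∀ y ∈ ψ '' ball 0 1, DifferentiableAt ℂ φ y := by
    intro y hy
    have hz := hφm y hy
    have hev : ∀ᶠ z in 𝓝[≠] (φ y), deriv ψ z ≠ 0 := by
      rcases (hA.deriv (φ y) hz).eventually_eq_zero_or_eventually_ne_zero with h | h
      · exfalso
        obtain ⟨ε, hε, hb⟩ := Metric.eventually_nhds_iff_ball.1 (h.and (isOpen_ball.eventually_mem hz))
        have hconst : ∀ {x x' : ℂ}, x ∈ ball (φ y) ε → x' ∈ ball (φ y) ε → ψ x = ψ x' := fun {x x'} =>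
          (convex_ball (φ y) ε).is_const_of_fderivWithin_eq_zero (𝕜 := ℂ) (f := ψ)
          (hψ.mono fun x hx => (hb x hx).2)
          (by
            intro x hx
            rw [fderivWithin_of_isOpen isOpen_ball hx]
            ext
            simp [(hb x hx).1])
        have hxm : φ y + (ε/2 : ℝ) ∈ ball (φ y) ε := by
          rw [mem_ball, dist_eq_norm, add_sub_cancel_left, norm_real,
            Real.norm_of_nonneg (by positivity)]
          linarith
        have := hinj (hb _ hxm).2 hz (hconst hxm (mem_ball_self hε))
        have h3 : ((ε/2 : ℝ) : ℂ) = 0 := by linear_combination this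
        rw [ofReal_eq_zero] at h3
        linarith
      · exact h
    rw [eventually_nhdsWithin_iff] at hev
    have hev2 : ∀ᶠ x in 𝓝 y, φ x ∈ ({φ y}ᶜ : Set ℂ) → deriv ψ (φ x) ≠ 0 := hcont y hy hev
    obtain ⟨ε, hε, hb⟩ := Metric.eventually_nhds_iff_ball.1 (hev2.and (hV.eventually_mem hy))
    have := (differentiableOn_compl_singleton_and_continuousAt_iff
      (isOpen_ball.mem_nhds (mem_ball_self hε))).1 ⟨fun x hx => ?_, hcont y hy⟩
    · exact this.differentiableAt (isOpen_ball.mem_nhds (mem_ball_self hε))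
    · refine (hd1 x (hb x hx.1).2 ((hb x hx.1).1 ?_)).differentiableWithinAt
      intro heq
      apply hx.2
      have h5 : ψ (φ x) = ψ (φ y) := congrArg ψ heq
      rwa [hφe x (hb x hx.1).2, hφe y hy] at h5
  refine ⟨fun z => φ (Q z), ?_, ?_, fun z hz => hφm _ (hm z hz), fun z hz => (hφe _ (hm z hz)).symm⟩
  · intro z hz
    exact ((hd2 _ (hm z hz)).comp z
      (hQ.differentiableAt (isOpen_ball.mem_nhds hz))).differentiableWithinAt
  · change φ (Q 0) = 0
    rw [h0, hφl 0 h0m]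

/-- Taylor coefficient at the origin. -/
def tc (u : ℂ → ℂ) (n : ℕ) : ℂ := iteratedDeriv n u 0 / (n.factorial : ℂ)

lemma avg_neg {P : ℂ → ℂ} (hP : DifferentiableOn ℂ P (closedBall 0 1)) (j : ℕ) :
    Real.circleAverage (fun z => P z * z⁻¹ ^ j) 0 1 = tc P j := by
  have h := hP.circleIntegral_one_div_sub_center_pow_smul one_pos j
  rw [Real.circleAverage_eq_circleIntegral one_ne_zero]
  have : (∮ z in C(0, 1), (z - 0)⁻¹ • (P z * z⁻¹ ^ j)) =
      ∮ z in C(0, 1), (1 / (z - 0) ^ (j + 1)) • P z := by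
    apply circleIntegral.integral_congr zero_le_one
    intro z hz
    simp [pow_succ]
    ring
  rw [this, h, tc]
  have := two_pi_I_ne_zero
  simp only [smul_eq_mul]
  field_simp

lemma avg_pos {P : ℂ → ℂ} (hP : DifferentiableOn ℂ P (closedBall 0 1)) (j : ℕ) :
    Real.circleAverage (fun z => P z * z ^ j) 0 1 = if j = 0 then tc P 0 else 0 := by
  have h : DiffContOnCl ℂ (fun z => P z * z ^ j) (ball 0 |1|) := by
    have : DifferentiableOn ℂ (fun z => P z * z ^ j) (closedBall 0 1) := by fun_prop
    rw [abs_one]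
    exact (this.mono closure_ball_subset_closedBall).diffContOnCl
  rw [h.circleAverage]
  rcases eq_or_ne j 0 with rfl | hj
  · simp [tc]
  · simp [hj]

lemma herglotz_functional {P : ℂ → ℂ} (hP : DifferentiableOn ℂ P (closedBall 0 1))
    (hre : ∀ z : ℂ, ‖z‖ = 1 → 0 ≤ (P z).re) (c : ℕ → ℂ) (hc : c 0 = 1) (n : ℕ) (hn : 1 ≤ n)
    (hK : ∀ s : ℂ, ‖s‖ = 1 → 0 ≤ (2 * ∑ j ∈ Finset.range n, c j * s ^ j - 1).re) :
    0 ≤ (∑ j ∈ Finset.range n, c j * tc P j).re := by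
  set A : ℕ → ℂ → ℂ := fun j z => c j * (P z * z⁻¹ ^ j) + (starRingEnd ℂ) (c j) * (P z * z ^ j)
  have hPc : ContinuousOn P (sphere 0 |1|) := by
    rw [abs_one]; exact hP.continuousOn.mono sphere_subset_closedBall
  have hz0 : ∀ z ∈ sphere (0:ℂ) |1|, z ≠ 0 := by
    intro z hz h; simp [h] at hz
  have hi1 : ∀ j, CircleIntegrable (fun z => P z * z⁻¹ ^ j) 0 1 := fun j =>
    ContinuousOn.circleIntegrable' (hPc.mul ((continuousOn_id.inv₀ hz0).pow j))
  have hi2 : ∀ j, CircleIntegrable (fun z => P z * z ^ j) 0 1 := fun j =>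
    ContinuousOn.circleIntegrable' (hPc.mul (continuousOn_id.pow j))
  have hi1' : ∀ j, CircleIntegrable (fun z => c j • (P z * z⁻¹ ^ j)) 0 1 := fun j =>
    (hi1 j).const_fun_smul
  have hi2' : ∀ j, CircleIntegrable (fun z => (starRingEnd ℂ) (c j) • (P z * z ^ j)) 0 1 := fun j =>
    (hi2 j).const_fun_smul
  have hiA : ∀ j, CircleIntegrable (A j) 0 1 := fun j => (hi1' j).add (hi2' j)
  have hiP : CircleIntegrable P 0 1 := ContinuousOn.circleIntegrable' hPc
  have hA : ∀ j, Real.circleAverage (A j) 0 1 =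
      c j * tc P j + if j = 0 then tc P 0 else 0 := by
    intro j
    have e1 : Real.circleAverage (fun z => c j • (P z * z⁻¹ ^ j)) 0 1 = c j * tc P j := by
      rw [Real.circleAverage_fun_smul, avg_neg hP, smul_eq_mul]
    have e2 : Real.circleAverage (fun z => (starRingEnd ℂ) (c j) • (P z * z ^ j)) 0 1 =
        if j = 0 then tc P 0 else 0 := by
      rw [Real.circleAverage_fun_smul, avg_pos hP, smul_eq_mul]
      split_ifs with h
      · simp [h, hc]
      · simp
    rw [← e1, ← e2, ← Real.circleAverage_fun_add (hi1' j) (hi2' j)]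
    rfl
  have hiS : CircleIntegrable (fun z => ∑ j ∈ Finset.range n, A j z) 0 1 := by
    have := CircleIntegrable.sum (Finset.range n) (fun j _ => hiA j)
    convert this using 1
    ext z; simp
  have hiG : CircleIntegrable (fun z => ∑ j ∈ Finset.range n, A j z - P z) 0 1 := hiS.sub hiP
  have hG : Real.circleAverage (fun z => ∑ j ∈ Finset.range n, A j z - P z) 0 1 =
      ∑ j ∈ Finset.range n, c j * tc P j := by
    rw [Real.circleAverage_fun_sub hiS hiP, Real.circleAverage_fun_sum (fun j _ => hiA j)]
    have hP0 : Real.circleAverage P 0 1 = tc P 0 := by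
      simpa using avg_pos hP 0
    rw [hP0, Finset.sum_congr rfl (fun j _ => hA j), Finset.sum_add_distrib]
    simp [Finset.sum_ite_eq', Nat.pos_of_ne_zero (by omega : n ≠ 0)]
  have hpt : ∀ z ∈ sphere (0:ℂ) |1|, 0 ≤ (∑ j ∈ Finset.range n, A j z - P z).re := by
    intro z hz
    have hz1 : ‖z‖ = 1 := by simpa using hz
    have hinv : z⁻¹ = (starRingEnd ℂ) z := Complex.inv_eq_conj hz1
    set K := 2 * ∑ j ∈ Finset.range n, c j * (z⁻¹) ^ j - 1 with hKdef
    have h1 : ∑ j ∈ Finset.range n, A j z - P z = P z * ((K + (starRingEnd ℂ) K) / 2) := by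
      simp only [hKdef, A, map_sub, map_mul, map_sum, map_pow, Finset.sum_add_distrib, hinv,
        Complex.conj_conj, map_one, map_ofNat]
      rw [Finset.sum_congr rfl (fun j _ => (by ring :
        c j * (P z * (starRingEnd ℂ) z ^ j) = P z * (c j * (starRingEnd ℂ) z ^ j))),
        Finset.sum_congr rfl (fun j _ => (by ring :
        (starRingEnd ℂ) (c j) * (P z * z ^ j) = P z * ((starRingEnd ℂ) (c j) * z ^ j))),
        ← Finset.mul_sum, ← Finset.mul_sum]
      ring
    have h2 : (K + (starRingEnd ℂ) K) / 2 = (K.re : ℂ) := by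
      rw [Complex.add_conj]; push_cast; ring
    rw [h1, h2, Complex.re_mul_ofReal]
    exact mul_nonneg (hre z hz1) (hK _ (by simp [hz1]))
  rw [← hG]
  have := Complex.reCLM.circleAverage_comp_comm hiG
  have h3 : 0 ≤ Real.circleAverage (fun z => (∑ j ∈ Finset.range n, A j z - P z).re) 0 1 :=
    Real.circleAverage_nonneg_of_nonneg hpt
  have h4 : Real.circleAverage (fun z => (∑ j ∈ Finset.range n, A j z - P z).re) 0 1 =
    (Real.circleAverage (fun z => ∑ j ∈ Finset.range n, A j z - P z) 0 1).re := this
  rw [← h4]; exact h3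


/-- The argument function of a convex curve. -/
lemma exists_angle {u : ℂ → ℂ} (hu : DifferentiableOn ℂ u (ball 0 1))
    (hne : ∀ z ∈ ball (0:ℂ) 1, u z ≠ 0)
    (hre : ∀ z ∈ ball (0:ℂ) 1, 0 < (1 + z * deriv u z / u z).re)
    {ρ : ℝ} (h0 : 0 < ρ) (h1 : ρ < 1) :
    ∃ T R : ℝ → ℝ, StrictMono T ∧ Continuous T ∧ (∀ θ, T (θ + 2 * Real.pi) = T θ + 2 * Real.pi) ∧
      (∀ θ, 0 < R θ) ∧
      ∀ θ : ℝ, (ρ * exp (I * θ)) * u (ρ * exp (I * θ)) = R θ * exp (I * T θ) := by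
  have h0m : (0:ℂ) ∈ ball (0:ℂ) 1 := by simp
  have hq : DifferentiableOn ℂ (fun z => deriv u z / u z) (ball 0 1) :=
    (hu.deriv isOpen_ball).div hu hne
  obtain ⟨l, hl0, hl⟩ := hq.isExactOn_ball.with_val_at 0 (log (u 0))
  have hexp : ∀ z ∈ ball (0:ℂ) 1, exp (l z) = u z := by
    have hd : ∀ z ∈ ball (0:ℂ) 1, HasDerivAt (fun z => u z * exp (-l z)) 0 z := by
      intro z hz
      have hu' := (hu.differentiableAt (isOpen_ball.mem_nhds hz)).hasDerivAt
      have := hu'.mul (hl z hz).neg.cexp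
      convert! this using 1
      have := hne z hz
      field_simp
      ring
    intro z hz
    have hconst : u z * exp (-l z) = u 0 * exp (-l 0) :=
      (convex_ball (0:ℂ) 1).is_const_of_fderivWithin_eq_zero (𝕜 := ℂ)
        (f := fun z => u z * exp (-l z))
        (fun z hz => (hd z hz).differentiableAt.differentiableWithinAt)
        (by
          intro x hx
          rw [fderivWithin_of_isOpen isOpen_ball hx]
          ext
          simp [(hd x hx).deriv]) hz h0m
    rw [hl0, exp_neg (log _), exp_log (hne 0 h0m), mul_inv_cancel₀ (hne 0 h0m), exp_neg] at hconst
    have := exp_ne_zero (l z)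
    field_simp at hconst
    exact hconst.symm
  have hzm : ∀ θ : ℝ, (ρ * exp (I * θ) : ℂ) ∈ ball (0:ℂ) 1 := by
    intro θ
    rw [mem_ball_zero_iff, norm_mul, mul_comm I, norm_exp_ofReal_mul_I, norm_real,
      Real.norm_of_nonneg h0.le]
    linarith
  have hdz : ∀ θ : ℝ, HasDerivAt (fun θ : ℝ => (ρ * exp (I * θ) : ℂ)) (ρ * exp (I * θ) * I) θ := by
    intro θ
    have : HasDerivAt (fun θ : ℝ => (I * (θ:ℂ))) (I * 1) θ :=
      (Complex.ofRealCLM.hasDerivAt (x := θ)).const_mul I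
    convert! this.cexp.const_mul (ρ:ℂ) using 1
    ring
  have hdl : ∀ θ : ℝ, HasDerivAt (fun θ : ℝ => l (ρ * exp (I * θ)))
      (deriv u (ρ * exp (I * θ)) / u (ρ * exp (I * θ)) * (ρ * exp (I * θ) * I)) θ := by
    intro θ
    exact (hl _ (hzm θ)).comp θ (hdz θ)
  have hdT : ∀ θ : ℝ, HasDerivAt (fun θ : ℝ => θ + (l (ρ * exp (I * θ))).im)
      (1 + (deriv u (ρ * exp (I * θ)) / u (ρ * exp (I * θ)) * (ρ * exp (I * θ) * I)).im) θ := by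
    intro θ
    exact (hasDerivAt_id θ).add (Complex.imCLM.hasFDerivAt.comp_hasDerivAt θ (hdl θ))
  refine ⟨fun θ => θ + (l (ρ * exp (I * θ))).im, fun θ => ρ * Real.exp (l (ρ * exp (I * θ))).re,
    ?_, ?_, ?_, ?_, ?_⟩
  · apply strictMono_of_deriv_pos
    intro θ
    rw [(hdT θ).deriv]
    have := hre _ (hzm θ)
    have e : deriv u (ρ * exp (I * θ)) / u (ρ * exp (I * θ)) * (ρ * exp (I * θ) * I) =
      (ρ * exp (I * θ) * deriv u (ρ * exp (I * θ)) / u (ρ * exp (I * θ))) * I := by ring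
    rw [e, mul_I_im]
    simpa using this
  · exact continuous_iff_continuousAt.2 fun θ => (hdT θ).continuousAt
  · intro θ
    have : exp (I * ((θ + 2 * Real.pi : ℝ) : ℂ)) = exp (I * θ) := by
      rw [← exp_periodic (I * θ)]; push_cast; ring_nf
    simp only [this]; ring
  · intro θ; positivity
  · intro θ
    rw [← hexp _ (hzm θ)]
    beta_reduce
    generalize l (ρ * exp (I * θ)) = y
    have e : exp y = exp (y.re : ℂ) * exp (y.im * I) := by rw [← exp_add, re_add_im]
    rw [e]
    push_cast
    rw [mul_add, exp_add, mul_comm I (y.im : ℂ)]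
    ring

lemma cos_zero_three {a b c : ℝ} (hab : a < b) (hbc : b < c) (hca : c < a + 2 * Real.pi)
    (ha : Real.cos a = 0) (hb : Real.cos b = 0) (hc : Real.cos c = 0) : False := by
  rw [Real.cos_eq_zero_iff] at ha hb hc
  obtain ⟨i, rfl⟩ := ha
  obtain ⟨j, rfl⟩ := hb
  obtain ⟨m, rfl⟩ := hc
  have hp := Real.pi_pos
  have h1 : (i:ℝ) < j := by nlinarith
  have h2 : (j:ℝ) < m := by nlinarith
  have h3 : (m:ℝ) < i + 2 := by nlinarith
  norm_cast at h1 h2 h3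
  omega

/-- No line meets the image of a circle under a convex function three times. -/
lemma no_three {h : ℂ → ℂ} (hh : DifferentiableOn ℂ h (ball 0 1))
    (hne : ∀ z ∈ ball (0:ℂ) 1, deriv h z ≠ 0)
    (hre : ∀ z ∈ ball (0:ℂ) 1, 0 < (1 + z * deriv (deriv h) z / deriv h z).re)
    {ρ : ℝ} (h0 : 0 < ρ) (h1 : ρ < 1) {d : ℂ} (hd : d ≠ 0) {a b c : ℝ}
    (hab : a < b) (hbc : b < c) (hca : c < a + 2 * Real.pi)
    (e1 : (d * h (ρ * exp (I * a))).im = (d * h (ρ * exp (I * b))).im)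
    (e2 : (d * h (ρ * exp (I * b))).im = (d * h (ρ * exp (I * c))).im) : False := by
  obtain ⟨T, R, hT, hTc, hTp, hR, hTR⟩ := exists_angle (hh.deriv isOpen_ball) hne hre h0 h1
  have hzm : ∀ θ : ℝ, (ρ * exp (I * θ) : ℂ) ∈ ball (0:ℂ) 1 := by
    intro θ
    rw [mem_ball_zero_iff, norm_mul, mul_comm I, norm_exp_ofReal_mul_I, norm_real,
      Real.norm_of_nonneg h0.le]
    linarith
  have hdz : ∀ θ : ℝ, HasDerivAt (fun θ : ℝ => (ρ * exp (I * θ) : ℂ)) (ρ * exp (I * θ) * I) θ := by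
    intro θ
    have : HasDerivAt (fun θ : ℝ => (I * (θ:ℂ))) (I * 1) θ :=
      (Complex.ofRealCLM.hasDerivAt (x := θ)).const_mul I
    convert! this.cexp.const_mul (ρ:ℂ) using 1
    ring
  set δ := arg d with hδ
  have hD : ∀ θ : ℝ, HasDerivAt (fun θ : ℝ => (d * h (ρ * exp (I * θ))).im)
      (R θ * ‖d‖ * Real.cos (T θ + δ)) θ := by
    intro θ
    have e : HasDerivAt (fun θ : ℝ => d * h (ρ * exp (I * θ)))
        (d * (deriv h (ρ * exp (I * θ)) * (ρ * exp (I * θ) * I))) θ :=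
      (((hh.differentiableAt (isOpen_ball.mem_nhds (hzm θ))).hasDerivAt).comp θ (hdz θ)).const_mul d
    have e' := Complex.imCLM.hasFDerivAt.comp_hasDerivAt θ e
    convert! e' using 1
    have : d * (deriv h (ρ * exp (I * θ)) * (ρ * exp (I * θ) * I)) =
        ((R θ * ‖d‖ : ℝ) : ℂ) * exp (((T θ + δ : ℝ) : ℂ) * I) * I := by
      have hdd : d = ‖d‖ * exp (δ * I) := (norm_mul_exp_arg_mul_I d).symm
      have hx := hTR θ
      calc _ = d * ((ρ * exp (I * θ)) * deriv h (ρ * exp (I * θ))) * I := by ring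
        _ = (‖d‖ * exp (δ * I)) * (R θ * exp (I * T θ)) * I := by rw [hx, ← hdd]
        _ = _ := by push_cast; rw [add_mul, exp_add, mul_comm I]; ring
    rw [imCLM_apply, this, mul_I_im, re_ofReal_mul, exp_ofReal_mul_I_re]
  have hcont : Continuous (fun θ : ℝ => (d * h (ρ * exp (I * θ))).im) :=
    continuous_iff_continuousAt.2 fun θ => (hD θ).continuousAt
  have key : ∀ p q : ℝ, p < q → (d * h (ρ * exp (I * p))).im = (d * h (ρ * exp (I * q))).im →
      ∃ t, p < t ∧ t < q ∧ Real.cos (T t + δ) = 0 := by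
    intro p q hpq hE
    obtain ⟨t, ht, h0⟩ := exists_hasDerivAt_eq_zero (f' := fun θ => R θ * ‖d‖ * Real.cos (T θ + δ))
      hpq hcont.continuousOn hE (fun x _ => hD x)
    refine ⟨t, ht.1, ht.2, ?_⟩
    have h3 : R t * ‖d‖ ≠ 0 := mul_ne_zero (hR t).ne' (norm_ne_zero_iff.2 hd)
    exact (mul_eq_zero.1 h0).resolve_left h3
  obtain ⟨t1, a1, b1, c1⟩ := key a b hab e1
  obtain ⟨t2, a2, b2, c2⟩ := key b c hbc e2
  have hper : exp (I * ((a + 2 * Real.pi : ℝ) : ℂ)) = exp (I * a) := by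
    rw [← exp_periodic (I * a)]; push_cast; ring_nf
  obtain ⟨t3, a3, b3, c3⟩ := key c (a + 2 * Real.pi) hca (by rw [hper, e1, e2])
  have q1 : T t1 < T t2 := hT (by linarith)
  have q2 : T t2 < T t3 := hT (by linarith)
  have q3 : T t3 < T t1 + 2 * Real.pi := by rw [← hTp]; exact hT (by linarith)
  exact cos_zero_three (by linarith : T t1 + δ < T t2 + δ) (by linarith) (by linarith) c1 c2 c3

lemma no_three' {h : ℂ → ℂ} (hh : DifferentiableOn ℂ h (ball 0 1))
    (hne : ∀ z ∈ ball (0:ℂ) 1, deriv h z ≠ 0)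
    (hre : ∀ z ∈ ball (0:ℂ) 1, 0 < (1 + z * deriv (deriv h) z / deriv h z).re)
    {ρ : ℝ} (h0 : 0 < ρ) (h1 : ρ < 1) {d : ℂ} (hd : d ≠ 0) {p q r : ℂ}
    (hp : ‖p‖ = ρ) (hq : ‖q‖ = ρ) (hr : ‖r‖ = ρ) (hpq : p ≠ q) (hqr : q ≠ r) (hpr : p ≠ r)
    (e1 : (d * h p).im = (d * h q).im) (e2 : (d * h q).im = (d * h r).im) : False := by
  have hrep : ∀ p : ℂ, ‖p‖ = ρ → p = ρ * exp (I * (arg p : ℝ)) := by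
    intro p hp
    rw [← hp, mul_comm I]; exact (norm_mul_exp_arg_mul_I p).symm
  have hlt : ∀ p q : ℂ, arg p < arg q + 2 * Real.pi := by
    intro p q
    have := arg_le_pi p
    have := neg_pi_lt_arg q
    linarith
  have hinj : ∀ p q : ℂ, ‖p‖ = ρ → ‖q‖ = ρ → p ≠ q → arg p ≠ arg q := by
    intro p q hp hq hpq h
    apply hpq
    rw [hrep p hp, hrep q hq, h]
  have N := fun (p q r : ℂ) (hp : ‖p‖ = ρ) (hq : ‖q‖ = ρ) (hr : ‖r‖ = ρ) (h1' : arg p < arg q)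
    (h2' : arg q < arg r) (e1 : (d * h p).im = (d * h q).im) (e2 : (d * h q).im = (d * h r).im) =>
    no_three hh hne hre h0 h1 hd h1' h2' (hlt r p)
      (by rw [← hrep p hp, ← hrep q hq, e1]) (by rw [← hrep q hq, ← hrep r hr, e2])
  rcases lt_or_gt_of_ne (hinj p q hp hq hpq) with A | A <;>
  rcases lt_or_gt_of_ne (hinj q r hq hr hqr) with B | B <;>
  rcases lt_or_gt_of_ne (hinj p r hp hr hpr) with C | C
  · exact N p q r hp hq hr A B e1 e2
  · linarith
  · exact N p r q hp hr hq C B (by rw [e1, e2]) e2.symm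
  · exact N r p q hr hp hq C A (by rw [e1, e2]) e1
  · exact N q p r hq hp hr A C e1.symm (by rw [e1, e2])
  · exact N q r p hq hr hp B C e2 (by rw [e1, e2])
  · linarith
  · exact N r q p hr hq hp B A e2.symm e1.symm

/-- Three points on the image of a circle under a convex function are never collinear. -/
lemma not_collinear {h : ℂ → ℂ} (hh : DifferentiableOn ℂ h (ball 0 1))
    (hne : ∀ z ∈ ball (0:ℂ) 1, deriv h z ≠ 0)
    (hre : ∀ z ∈ ball (0:ℂ) 1, 0 < (1 + z * deriv (deriv h) z / deriv h z).re)
    {ρ : ℝ} (h0 : 0 < ρ) (h1 : ρ < 1) {p q r : ℂ}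
    (hp : ‖p‖ = ρ) (hq : ‖q‖ = ρ) (hr : ‖r‖ = ρ) (hpq : p ≠ q) (hqr : q ≠ r) (hpr : p ≠ r) :
    ((h p - h r) * (starRingEnd ℂ) (h q - h r)).im ≠ 0 := by
  intro hz
  have N := fun (d : ℂ) (hd : d ≠ 0) => no_three' hh hne hre h0 h1 hd hp hq hr hpq hqr hpr
  by_cases hY : h q - h r = 0
  · by_cases hX : h p - h r = 0
    · exact N 1 one_ne_zero (by rw [sub_eq_zero.1 hX, sub_eq_zero.1 hY]) (by rw [sub_eq_zero.1 hY])
    · refine N ((starRingEnd ℂ) (h p - h r)) ((map_ne_zero _).2 hX) ?_ (by rw [sub_eq_zero.1 hY])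
      rw [sub_eq_zero.1 hY]
      simp [mul_im]
      ring
  · refine N ((starRingEnd ℂ) (h q - h r)) ((map_ne_zero _).2 hY) ?_ ?_
    · simp [mul_im] at hz ⊢
      linarith
    · simp [mul_im] at hz ⊢
      linarith

lemma one_sub_exp (a : ℝ) : 1 - exp (I * a) = -2 * I * Real.sin (a / 2) * exp (I * (a / 2 : ℝ)) := by
  have h : exp (I * a) = exp (I * (a / 2 : ℝ)) * exp (I * (a / 2 : ℝ)) := by
    rw [← exp_add]; push_cast; ring_nf
  rw [h, mul_comm I ((a / 2 : ℝ) : ℂ), exp_mul_I, ofReal_sin]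
  have := Complex.sin_sq_add_cos_sq ((a / 2 : ℝ) : ℂ)
  linear_combination (Complex.sin ((a / 2 : ℝ) : ℂ) ^ 2 ) * I_sq - this

/-- Robertson's trick. -/
lemma robertson {u : ℂ → ℂ} (hu : DifferentiableOn ℂ u (ball 0 1))
    (hne : ∀ z ∈ ball (0:ℂ) 1, u z ≠ 0)
    (hre : ∀ z ∈ ball (0:ℂ) 1, 0 < (1 + z * deriv u z / u z).re)
    {ρ : ℝ} (h0 : 0 < ρ) (h1 : ρ < 1) {x₁ : ℂ} (hx₁ : ‖x₁‖ = 1) :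
    ∃ x e : ℂ, ‖x‖ = 1 ∧ ‖e‖ = 1 ∧ ∀ z : ℂ, ‖z‖ = 1 →
      0 ≤ (e * u (ρ * z) * (1 - x₁ * z) * (1 - x * z)).re := by
  obtain ⟨T, R, hT, hTc, hTp, hR, hTR⟩ := exists_angle hu hne hre h0 h1
  have hpi := Real.pi_pos
  set θ₁ : ℝ := -arg x₁
  have hx1e : x₁ = exp (I * (-θ₁ : ℝ)) := by
    have := norm_mul_exp_arg_mul_I x₁
    rw [hx₁, ofReal_one, one_mul] at this
    simp only [θ₁, neg_neg]
    rw [mul_comm I]; exact this.symm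
  obtain ⟨θ₂, hθ₂, hT2⟩ : ∃ t ∈ Icc θ₁ (θ₁ + 2 * Real.pi), T t = T θ₁ + Real.pi := by
    apply intermediate_value_Icc (by linarith) hTc.continuousOn
    rw [hTp]; constructor <;> linarith
  have hun : ∀ t : ℝ, ‖exp (I * t)‖ = 1 := fun t => by rw [mul_comm, norm_exp_ofReal_mul_I]
  refine ⟨exp (I * (-θ₂ : ℝ)), exp (I * ((θ₁ + θ₂) / 2 - T θ₁ : ℝ)) * (-I), hun _, ?_, ?_⟩
  · rw [norm_mul, hun]; simp
  intro z hz
  obtain ⟨θ, hθ, rfl⟩ : ∃ θ : ℝ, θ ∈ Icc θ₁ (θ₁ + 2 * Real.pi) ∧ z = exp (I * θ) := by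
    have hw : x₁ * z = exp (I * arg (x₁ * z)) := by
      have := norm_mul_exp_arg_mul_I (x₁ * z)
      rw [norm_mul, hx₁, hz, mul_one, ofReal_one, one_mul] at this
      rw [mul_comm I]; exact this.symm
    have hz' : z = exp (I * (θ₁ + arg (x₁ * z) : ℝ)) := by
      push_cast
      rw [mul_add, exp_add, ← hw, hx1e, ← mul_assoc, ← exp_add]
      push_cast; simp
    have b1 := arg_le_pi (x₁ * z)
    have b2 := neg_pi_lt_arg (x₁ * z)
    rcases le_or_gt 0 (arg (x₁ * z)) with hs | hs
    · exact ⟨_, ⟨by linarith, by linarith⟩, hz'⟩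
    · refine ⟨θ₁ + arg (x₁ * z) + 2 * Real.pi, ⟨by linarith, by linarith⟩, ?_⟩
      have : exp (I * ((θ₁ + arg (x₁ * z) + 2 * Real.pi : ℝ) : ℂ)) =
          exp (I * (θ₁ + arg (x₁ * z) : ℝ)) := by
        rw [← exp_periodic (I * (θ₁ + arg (x₁ * z) : ℝ))]; push_cast; ring_nf
      rw [this]; exact hz'
  have hρ : (ρ:ℂ) ≠ 0 := ofReal_ne_zero.2 h0.ne'
  have huz : u (ρ * exp (I * θ)) = (R θ / ρ : ℝ) * exp (I * (T θ - θ : ℝ)) := by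
    have := hTR θ
    have he := exp_ne_zero (I * θ)
    push_cast
    rw [mul_sub, exp_sub]
    field_simp
    linear_combination this
  have g1 : 1 - x₁ * exp (I * θ) =
      -2 * I * Real.sin ((θ - θ₁) / 2) * exp (I * ((θ - θ₁) / 2 : ℝ)) := by
    rw [← one_sub_exp, hx1e, ← exp_add]; push_cast; ring_nf
  have g2 : 1 - exp (I * (-θ₂ : ℝ)) * exp (I * θ) =
      -2 * I * Real.sin ((θ - θ₂) / 2) * exp (I * ((θ - θ₂) / 2 : ℝ)) := by
    rw [← one_sub_exp, ← exp_add]; push_cast; ring_nf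
  have hE : exp (I * ((θ₁ + θ₂) / 2 - T θ₁ : ℝ)) * exp (I * (T θ - θ : ℝ)) *
      exp (I * ((θ - θ₁) / 2 : ℝ)) * exp (I * ((θ - θ₂) / 2 : ℝ)) = exp ((T θ - T θ₁ : ℝ) * I) := by
    rw [← exp_add, ← exp_add, ← exp_add]; push_cast; ring_nf
  have hfin : exp (I * ((θ₁ + θ₂) / 2 - T θ₁ : ℝ)) * (-I) * u (ρ * exp (I * θ)) *
      (1 - x₁ * exp (I * θ)) * (1 - exp (I * (-θ₂ : ℝ)) * exp (I * θ)) =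
      ((4 * (R θ / ρ) * Real.sin ((θ - θ₁) / 2) * Real.sin ((θ - θ₂) / 2) : ℝ) : ℂ) *
        exp ((T θ - T θ₁ : ℝ) * I) * I := by
    rw [huz, g1, g2, ← hE]
    push_cast
    linear_combination (-4 * exp (I * ((θ₁ + θ₂) / 2 - T θ₁)) * I * (R θ / ρ) *
      exp (I * (T θ - θ)) * exp (I * ((θ - θ₁) / 2)) * exp (I * ((θ - θ₂) / 2)) *
      Complex.sin ((θ - θ₁) / 2) * Complex.sin ((θ - θ₂) / 2)) * I_sq
  rw [hfin, mul_I_re, im_ofReal_mul, exp_ofReal_mul_I_im]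
  have p1 : 0 ≤ Real.sin ((θ - θ₁) / 2) :=
    Real.sin_nonneg_of_nonneg_of_le_pi (by linarith [hθ.1]) (by linarith [hθ.2])
  have p0 : 0 < R θ / ρ := div_pos (hR θ) h0
  have p2 : Real.sin ((θ - θ₂) / 2) * Real.sin (T θ - T θ₁) ≤ 0 := by
    rcases le_total θ θ₂ with hc | hc
    · have m1 := hT.monotone hc
      have m2 := hT.monotone hθ.1
      apply mul_nonpos_of_nonpos_of_nonneg
      · apply Real.sin_nonpos_of_nonpos_of_neg_pi_le <;> linarith [hθ.1, hθ₂.2]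
      · apply Real.sin_nonneg_of_nonneg_of_le_pi <;> linarith
    · have m1 := hT.monotone hc
      have m2 := hT.monotone hθ.2
      rw [hTp] at m2
      apply mul_nonpos_of_nonneg_of_nonpos
      · apply Real.sin_nonneg_of_nonneg_of_le_pi <;> linarith [hθ.2, hθ₂.1]
      · rw [← Real.sin_sub_two_pi]
        apply Real.sin_nonpos_of_nonpos_of_neg_pi_le <;> linarith
  have p3 : 0 ≤ 4 * (R θ / ρ) * Real.sin ((θ - θ₁) / 2) := by positivity
  nlinarith [mul_nonneg p3 (neg_nonneg.2 p2)]


/-- Taylor series at the origin. -/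
def ts (u : ℂ → ℂ) : PowerSeries ℂ := mk (tc u)

lemma ts_mul {u v : ℂ → ℂ} (hu : AnalyticAt ℂ u 0) (hv : AnalyticAt ℂ v 0) :
    ts (fun z => u z * v z) = ts u * ts v := by
  ext n
  rw [ts, ts, ts, PowerSeries.coeff_mul, PowerSeries.coeff_mk, tc,
    Finset.Nat.sum_antidiagonal_eq_sum_range_succ_mk]
  have := iteratedDeriv_fun_mul (n := n) (x := (0:ℂ)) (f := u) (g := v) (hu.contDiffAt) (hv.contDiffAt)
  rw [this, Finset.sum_div]
  apply Finset.sum_congr rfl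
  intro i hi
  have hi' : i ≤ n := by simp at hi; omega
  simp only [PowerSeries.coeff_mk, tc]
  rw [Nat.cast_choose ℂ hi']
  have h1 : (n.factorial : ℂ) ≠ 0 := by exact_mod_cast n.factorial_ne_zero
  field_simp

lemma ts_const (c : ℂ) : ts (fun _ => c) = C c := by
  ext n
  rw [ts, PowerSeries.coeff_mk, tc, iteratedDeriv_const, PowerSeries.coeff_C]
  split_ifs with h <;> simp [h]

lemma ts_lin (x : ℂ) : ts (fun z => 1 - x * z) = 1 - C x * X := by
  ext n
  rw [ts, PowerSeries.coeff_mk, tc]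
  rcases n with _ | _ | n
  · simp
  · have : deriv (fun z : ℂ => 1 - x * z) 0 = -x := by
      have : HasDerivAt (fun z : ℂ => 1 - x * z) (-(x * 1)) 0 :=
        ((hasDerivAt_id (0:ℂ)).const_mul x).const_sub 1
      simpa using this.deriv
    simp [this, PowerSeries.coeff_one]
  · have h1 : deriv (fun z : ℂ => 1 - x * z) = fun _ => -x := by
      funext y
      have : HasDerivAt (fun z : ℂ => 1 - x * z) (-(x * 1)) y :=
        ((hasDerivAt_id y).const_mul x).const_sub 1
      simpa using this.deriv
    rw [iteratedDeriv_succ', h1, iteratedDeriv_const]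
    simp [PowerSeries.coeff_X, PowerSeries.coeff_one]

/-- `ell k v U` is the `k`-th partial sum of `U` at `v`. -/
def ell (k : ℕ) (v : ℂ) : PowerSeries ℂ →ₗ[ℂ] ℂ := ∑ j ∈ Finset.range k, v ^ j • coeff j

lemma ell_apply (k : ℕ) (v : ℂ) (U : PowerSeries ℂ) :
    ell k v U = ∑ j ∈ Finset.range k, v ^ j * coeff j U := by
  simp [ell, LinearMap.sum_apply]

lemma ell_C_mul (k : ℕ) (v c : ℂ) (U : PowerSeries ℂ) : ell k v (C c * U) = c * ell k v U := by
  rw [← PowerSeries.smul_eq_C_mul, map_smul, smul_eq_mul]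

lemma ell_zero {k : ℕ} (hk : 1 ≤ k) (U : PowerSeries ℂ) : ell k 0 U = PowerSeries.constantCoeff U := by
  rw [ell_apply]
  obtain ⟨k, rfl⟩ : ∃ m, k = m + 1 := ⟨k - 1, by omega⟩
  rw [Finset.sum_range_succ']
  simp

lemma ell_mul (k : ℕ) (v : ℂ) (E V : PowerSeries ℂ) :
    ell k v (E * V) = ∑ j ∈ Finset.range k, ell k v (E * X ^ j) * coeff j V := by
  simp only [ell_apply, Finset.sum_mul]
  rw [Finset.sum_comm]
  apply Finset.sum_congr rfl
  intro i hi
  have hi' : i < k := by simpa using hi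
  simp only [PowerSeries.coeff_mul_X_pow']
  rw [mul_comm E V, PowerSeries.coeff_mul, Finset.Nat.sum_antidiagonal_eq_sum_range_succ_mk,
    Finset.mul_sum]
  have hsub : Finset.range (i + 1) ⊆ Finset.range k := by
    intro j; simp; omega
  rw [← Finset.sum_subset hsub]
  · apply Finset.sum_congr rfl
    intro j hj
    rw [if_pos (by simp at hj; omega)]
    ring
  · intro j _ hj
    rw [if_neg (by simp at hj; omega)]
    ring

def geo (x : ℂ) : PowerSeries ℂ := mk fun n => x ^ n
def herg (s : ℂ) : PowerSeries ℂ := 2 * geo s - 1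

lemma geo_mul (x : ℂ) : geo x * (1 - C x * X) = 1 := by
  ext n
  rw [mul_sub, mul_one, ← mul_assoc]
  rcases n with _ | n
  · simp [geo]
  · rw [map_sub, PowerSeries.coeff_succ_mul_X, mul_comm (geo x) (C x), PowerSeries.coeff_C_mul]
    simp only [geo, PowerSeries.coeff_mk, PowerSeries.coeff_one]
    rw [if_neg (by omega)]
    ring

lemma herg_eq (s : ℂ) : herg s = (1 + C s * X) * geo s := by
  have := geo_mul s
  rw [herg]
  linear_combination this

lemma geo_sub (x y : ℂ) : C (x - y) * (geo x * geo y) = C x * geo x - C y * geo y := by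
  have h1 := geo_mul x
  have h2 := geo_mul y
  rw [map_sub]
  linear_combination (C x * geo x) * h2 - C y * geo y * h1

lemma geo_herg (x y s : ℂ) :
    C (x - y) * (geo x * geo y * herg s) =
      C (x + s) * (geo x * geo s) - C (y + s) * (geo y * geo s) := by
  have h1 := geo_mul x
  have h2 := geo_mul y
  rw [herg_eq, map_sub, map_add, map_add]
  linear_combination ((C x + C s) * geo x * geo s) * h2 - (C y + C s) * geo y * geo s * h1

lemma geo_const (x : ℂ) : PowerSeries.constantCoeff (geo x) = 1 := by
  simp [geo, ← PowerSeries.coeff_zero_eq_constantCoeff_apply]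

lemma herg_const (s : ℂ) : PowerSeries.constantCoeff (herg s) = 1 := by
  rw [herg, map_sub, map_mul, map_ofNat, geo_const, map_one]; norm_num

/-- Positive functionals. -/
lemma ell_herglotz {k : ℕ} (hk : 1 ≤ k) {v : ℂ} {E : PowerSeries ℂ} (hE : ell k v E ≠ 0)
    (hK : ∀ s : ℂ, ‖s‖ = 1 → 0 ≤ (ell k v (E * herg s) / ell k v E).re)
    {P : ℂ → ℂ} (hP : DifferentiableOn ℂ P (closedBall 0 1))
    (hre : ∀ z : ℂ, ‖z‖ = 1 → 0 ≤ (P z).re) :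
    0 ≤ (ell k v (E * ts P) / ell k v E).re := by
  have h := herglotz_functional hP hre (fun j => ell k v (E * X ^ j) / ell k v E)
    (by simp [hE]) k hk (by
      intro s hs
      have := hK s hs
      convert this using 2
      have e : E * herg s = (2:ℂ) • (E * geo s) - E := by
        rw [herg, PowerSeries.smul_eq_C_mul, map_ofNat]; ring
      rw [e, map_sub, map_smul, ell_mul, sub_div, div_self hE, smul_eq_mul, mul_div_assoc,
        Finset.sum_div]
      congr 2
      apply Finset.sum_congr rfl
      intro j _
      simp [geo]
      ring)
  convert h using 2
  rw [ell_mul, Finset.sum_div]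
  apply Finset.sum_congr rfl
  intro j _
  simp [ts]
  ring

lemma ell_differentiable (k : ℕ) (r : ℂ) (U : PowerSeries ℂ) :
    Differentiable ℂ (fun w => ell k (r * w) U) := by
  simp only [ell_apply]
  fun_prop

lemma cont_aux (k : ℕ) (v : ℂ) {x y s : ℝ → ℂ} (hx : Continuous x) (hy : Continuous y)
    (hs : Continuous s) :
    Continuous (fun t => ell k v (geo (x t) * geo (y t) * herg (s t))) ∧
    Continuous (fun t => ell k v (geo (x t) * geo (y t))) := by
  have hherg : ∀ n, Continuous (fun t => coeff n (herg (s t))) := by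
    intro n
    have : ∀ t, coeff n (herg (s t)) = 2 * s t ^ n - coeff n (1 : PowerSeries ℂ) := by
      intro t
      have e : herg (s t) = (2:ℂ) • geo (s t) - 1 := by
        rw [herg, PowerSeries.smul_eq_C_mul, map_ofNat]
      rw [e]; simp [geo]
    simp only [this]
    fun_prop
  have hgeo : ∀ n, ∀ {x : ℝ → ℂ}, Continuous x → Continuous (fun t => coeff n (geo (x t))) := by
    intro n x hx
    simp only [geo, PowerSeries.coeff_mk]
    fun_prop
  have hmul : ∀ {U V : ℝ → PowerSeries ℂ}, (∀ n, Continuous fun t => coeff n (U t)) →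
      (∀ n, Continuous fun t => coeff n (V t)) → ∀ n, Continuous fun t => coeff n (U t * V t) := by
    intro U V hU hV n
    simp only [PowerSeries.coeff_mul]
    exact continuous_finsetSum _ fun p _ => (hU p.1).mul (hV p.2)
  have hell : ∀ {U : ℝ → PowerSeries ℂ}, (∀ n, Continuous fun t => coeff n (U t)) →
      Continuous fun t => ell k v (U t) := by
    intro U hU
    simp only [ell_apply]
    exact continuous_finsetSum _ fun p _ => continuous_const.mul (hU p)
  have h2 := hmul (fun n => hgeo n hx) (fun n => hgeo n hy)
  exact ⟨hell (hmul h2 hherg), hell h2⟩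

lemma unit_ratio {x s : ℂ} (hx : ‖x‖ = 1) (hs : ‖s‖ = 1) :
    ∃ u : ℝ, (x + s) / (x - s) = u * I := by
  refine ⟨((x + s) / (x - s)).im, ?_⟩
  have hre : ((x + s) / (x - s)).re = 0 := by
    have hc : (starRingEnd ℂ) ((x + s) / (x - s)) = -((x + s) / (x - s)) := by
      have hx0 : x ≠ 0 := by rintro rfl; simp at hx
      have hs0 : s ≠ 0 := by rintro rfl; simp at hs
      rw [map_div₀, map_add, map_sub, ← Complex.inv_eq_conj hx, ← Complex.inv_eq_conj hs]
      by_cases h : x - s = 0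
      · rw [sub_eq_zero.1 h]; simp
      · have h' : s - x ≠ 0 := fun h2 => h (by linear_combination -h2)
        have : x⁻¹ - s⁻¹ = (s - x) / (x * s) := by field_simp
        rw [this]
        have h3 : x⁻¹ + s⁻¹ = (x + s) / (x * s) := by field_simp; ring
        rw [h3]
        have h4 : x - s = -(s - x) := by ring
        rw [h4]
        field_simp
    have := congrArg re hc
    rw [conj_re, neg_re] at this
    linarith
  apply Complex.ext
  · rw [hre]; simp
  · simp

/-- The scaled geometric polynomial. -/
def hfun (k : ℕ) (r : ℝ) : ℂ → ℂ := fun z => (∑ i ∈ Finset.Icc 1 k, ((r:ℂ) * z) ^ i) / (r:ℂ)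

lemma hfun_eq (k : ℕ) {r : ℝ} (hr : r ≠ 0) (z : ℂ) :
    hfun k r z = ∑ j ∈ Finset.range k, (r:ℂ) ^ j * z ^ (j + 1) := by
  have hr' : (r:ℂ) ≠ 0 := ofReal_ne_zero.2 hr
  have : Finset.Icc 1 k = Finset.Ico 1 (k + 1) := by ext; simp
  rw [hfun, this, Finset.sum_Ico_eq_sum_range, Finset.sum_div]
  apply Finset.sum_congr (by simp)
  intro j _
  rw [mul_pow, add_comm 1 j, pow_succ (r:ℂ)]
  field_simp

lemma hfun_geo (k : ℕ) {r : ℝ} (hr : r ≠ 0) (x w : ℂ) :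
    w * ell k (r * w) (C x * geo x) = hfun k r (x * w) := by
  rw [ell_C_mul, hfun_eq k hr, ell_apply, Finset.mul_sum, Finset.mul_sum]
  apply Finset.sum_congr rfl
  intro j _
  simp [geo]
  ring

lemma hfun_deriv (k : ℕ) {r : ℝ} (hr : r ≠ 0) (x w : ℂ) :
    ell k (r * w) (geo x * geo x) = deriv (hfun k r) (x * w) := by
  have h : HasDerivAt (hfun k r) (∑ j ∈ Finset.range k, (r:ℂ) ^ j * ((j + 1 : ℕ) * (x * w) ^ j))
      (x * w) := by
    have e : hfun k r = fun z => ∑ j ∈ Finset.range k, (r:ℂ) ^ j * z ^ (j + 1) :=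
      funext (hfun_eq k hr)
    rw [e]
    apply HasDerivAt.fun_sum
    intro j _
    simpa using (hasDerivAt_pow (j + 1) (x * w)).const_mul ((r:ℂ) ^ j)
  rw [h.deriv, ell_apply]
  apply Finset.sum_congr rfl
  intro j _
  rw [PowerSeries.coeff_mul, Finset.Nat.sum_antidiagonal_eq_sum_range_succ_mk]
  have : ∀ i ∈ Finset.range j.succ, coeff i (geo x) * coeff (j - i) (geo x) = x ^ j := by
    intro i hi
    have : i ≤ j := by simp at hi; omega
    simp only [geo, PowerSeries.coeff_mk]
    rw [← pow_add]; congr 1; omega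
  rw [Finset.sum_congr rfl this]
  simp
  ring

lemma div_re_nonneg {a b : ℂ} (h : 0 ≤ (a * (starRingEnd ℂ) b).re) : 0 ≤ (a / b).re := by
  have : a / b = a * (starRingEnd ℂ) b * (((normSq b)⁻¹ : ℝ) : ℂ) := by
    rw [div_eq_mul_inv, Complex.inv_def]; ring
  rw [this, re_mul_ofReal]
  exact mul_nonneg h (inv_nonneg.2 (normSq_nonneg b))

/-- Level one, distinct points. -/
lemma level_one_distinct {k : ℕ} (hk : 1 ≤ k) {r : ℝ} (hr : r ≠ 0)
    (hh : DifferentiableOn ℂ (hfun k r) (ball 0 1))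
    (hne : ∀ z ∈ ball (0:ℂ) 1, deriv (hfun k r) z ≠ 0)
    (hre : ∀ z ∈ ball (0:ℂ) 1, 0 < (1 + z * deriv (deriv (hfun k r)) z / deriv (hfun k r) z).re)
    {x y s : ℂ} (hx : ‖x‖ = 1) (hy : ‖y‖ = 1) (hs : ‖s‖ = 1)
    (hxy : x ≠ y) (hys : y ≠ s) (hxs : x ≠ s) :
    ∀ w ∈ ball (0:ℂ) 1, ell k (r * w) (geo x * geo y) ≠ 0 ∧
      0 < (ell k (r * w) (geo x * geo y * herg s) / ell k (r * w) (geo x * geo y)).re := by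
  set h := hfun k r with hhdef
  have nc : ∀ w ∈ ball (0:ℂ) 1, w ≠ 0 →
      ((h (x * w) - h (s * w)) * (starRingEnd ℂ) (h (y * w) - h (s * w))).im ≠ 0 := by
    intro w hw hw0
    have hw1 : ‖w‖ < 1 := by simpa using hw
    have hwp : 0 < ‖w‖ := norm_pos_iff.2 hw0
    have hn : ∀ {a : ℂ}, ‖a‖ = 1 → ‖a * w‖ = ‖w‖ := fun ha => by rw [norm_mul, ha, one_mul]
    exact not_collinear hh hne hre hwp hw1 (hn hx) (hn hy) (hn hs)
      (fun h => hxy (mul_right_cancel₀ hw0 h)) (fun h => hys (mul_right_cancel₀ hw0 h))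
      (fun h => hxs (mul_right_cancel₀ hw0 h))
  have dxy : x - y ≠ 0 := sub_ne_zero.2 hxy
  have dys : y - s ≠ 0 := sub_ne_zero.2 hys
  have dxs : x - s ≠ 0 := sub_ne_zero.2 hxs
  have sub_formula : ∀ (x y w : ℂ), w * ((x - y) * ell k (r * w) (geo x * geo y)) =
      h (x * w) - h (y * w) := by
    intro x y w
    rw [← ell_C_mul, geo_sub, map_sub, mul_sub, hfun_geo k hr, hfun_geo k hr]
  have hE : ∀ w ∈ ball (0:ℂ) 1, ell k (r * w) (geo x * geo y) ≠ 0 := by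
    intro w hw h0
    rcases eq_or_ne w 0 with rfl | hw0
    · rw [mul_zero, ell_zero hk, map_mul, geo_const, geo_const] at h0
      norm_num at h0
    · have := sub_formula x y w
      rw [h0, mul_zero, mul_zero] at this
      apply nc w hw hw0
      rw [show h (x * w) = h (y * w) by linear_combination -this]
      rw [mul_conj]; simp
  have hpos : ∀ w ∈ ball (0:ℂ) 1,
      0 < (ell k (r * w) (geo x * geo y * herg s) / ell k (r * w) (geo x * geo y)).re := by
    apply re_pos_of_ne (q := fun w => ell k (r * w) (geo x * geo y * herg s) /
      ell k (r * w) (geo x * geo y))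
    · exact (ell_differentiable k r _).continuous.continuousOn.div
        (ell_differentiable k r _).continuous.continuousOn hE
    · intro w hw
      rcases eq_or_ne w 0 with rfl | hw0
      · rw [mul_zero, ell_zero hk, ell_zero hk]
        simp [geo_const, herg_const]
      obtain ⟨u, hu⟩ := unit_ratio hx hs
      obtain ⟨v, hv⟩ := unit_ratio hy hs
      set A := h (x * w) - h (s * w) with hA
      set B := h (y * w) - h (s * w) with hB
      have hAB : w * ((x - y) * ell k (r * w) (geo x * geo y)) = A - B := by
        rw [sub_formula]; ring
      have hAB0 : A - B ≠ 0 := by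
        rw [← hAB]; exact mul_ne_zero hw0 (mul_ne_zero dxy (hE w hw))
      have hnum : w * ((x - y) * ell k (r * w) (geo x * geo y * herg s)) =
          (u * A - v * B) * I := by
        rw [← ell_C_mul, geo_herg, map_sub, ell_C_mul, ell_C_mul]
        have e1 := sub_formula x s w
        have e2 := sub_formula y s w
        rw [div_eq_iff dxs] at hu
        rw [div_eq_iff dys] at hv
        rw [hu, hv, hA, hB, ← e1, ← e2]
        ring
      have hq : ell k (r * w) (geo x * geo y * herg s) / ell k (r * w) (geo x * geo y) =
          (u * A - v * B) * I / (A - B) := by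
        rw [← hnum, ← hAB, mul_div_mul_left _ _ hw0, mul_div_mul_left _ _ dxy]
      have huv : u ≠ v := by
        intro huv
        rw [huv, ← hv, div_eq_div_iff dxs dys] at hu
        have h2 : s * (x - y) = 0 := by linear_combination (-1/2) * hu
        rcases mul_eq_zero.1 h2 with h3 | h3
        · rw [h3] at hs; simp at hs
        · exact dxy h3
      have hr2 : ((u * A - v * B) * I / (A - B)).re =
          (u - v) * (A * (starRingEnd ℂ) B).im * (normSq (A - B))⁻¹ := by
        rw [div_eq_mul_inv, Complex.inv_def, ← mul_assoc, re_mul_ofReal]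
        congr 1
        simp [mul_re, mul_im]
        ring
      change (ell k (r * w) (geo x * geo y * herg s) / ell k (r * w) (geo x * geo y)).re ≠ 0
      rw [hq, hr2]
      exact mul_ne_zero (mul_ne_zero (sub_ne_zero.2 huv) (nc w hw hw0))
        (inv_ne_zero (fun h => hAB0 (normSq_eq_zero.1 h)))
    · rw [mul_zero, ell_zero hk, ell_zero hk]
      simp [geo_const, herg_const]
  exact fun w hw => ⟨hE w hw, hpos w hw⟩

lemma rot_ne (x y : ℂ) (hx : ‖x‖ = 1) (a : ℝ) (ha : a ≠ 0) :
    ∀ᶠ t : ℝ in 𝓝[>] 0, x ≠ y * exp (I * (a * t : ℝ)) := by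
  by_cases hxy : x = y
  · subst hxy
    have hsmall : ∀ᶠ t : ℝ in 𝓝[>] 0, t < 2 * Real.pi / |a| :=
      nhdsWithin_le_nhds (eventually_lt_nhds (by positivity))
    filter_upwards [hsmall, self_mem_nhdsWithin] with t ht ht0 h
    have ht0' : (0:ℝ) < t := ht0
    have hx0 : x ≠ 0 := by rintro rfl; simp at hx
    have h1 : exp (I * (a * t : ℝ)) = 1 := by
      apply mul_left_cancel₀ hx0; rw [← h, mul_one]
    rw [Complex.exp_eq_one_iff] at h1
    obtain ⟨n, hn⟩ := h1
    have h2 : ((a * t : ℝ) : ℂ) = ((n * (2 * Real.pi) : ℝ) : ℂ) := by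
      apply mul_left_cancel₀ I_ne_zero
      rw [hn]; push_cast; ring
    have h3 : a * t = n * (2 * Real.pi) := by exact_mod_cast h2
    have h4 : |a| * t < 2 * Real.pi := by
      rw [lt_div_iff₀ (by positivity)] at ht; linarith
    have h5 : |a| * t = |(n:ℝ)| * (2 * Real.pi) := by
      have := congrArg abs h3
      rw [abs_mul, abs_mul, abs_of_pos ht0', abs_of_pos Real.two_pi_pos] at this
      exact this
    have hn0 : n ≠ 0 := by
      rintro rfl
      simp at h3
      rcases h3 with h3 | h3
      · exact ha h3
      · exact ht0'.ne' h3
    have h6 : (1:ℝ) ≤ |(n:ℝ)| := by exact_mod_cast Int.one_le_abs hn0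
    nlinarith [Real.pi_pos]
  · have hc : Continuous (fun t : ℝ => y * exp (I * (a * t : ℝ))) := by fun_prop
    have : Filter.Tendsto (fun t : ℝ => y * exp (I * (a * t : ℝ))) (𝓝[>] 0) (𝓝 y) := by
      have := hc.tendsto 0
      simp at this
      exact (by simpa using this : Filter.Tendsto _ _ _).mono_left nhdsWithin_le_nhds
    filter_upwards [this.eventually_ne (Ne.symm hxy)] with t ht
    exact ht.symm

/-- Level one. -/
lemma level_one {k : ℕ} (hk : 1 ≤ k) {r : ℝ} (hr : r ≠ 0)
    (hh : DifferentiableOn ℂ (hfun k r) (ball 0 1))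
    (hne : ∀ z ∈ ball (0:ℂ) 1, deriv (hfun k r) z ≠ 0)
    (hre : ∀ z ∈ ball (0:ℂ) 1, 0 < (1 + z * deriv (deriv (hfun k r)) z / deriv (hfun k r) z).re)
    {x y : ℂ} (hx : ‖x‖ = 1) (hy : ‖y‖ = 1) {w : ℂ} (hw : w ∈ ball (0:ℂ) 1) :
    ell k (r * w) (geo x * geo y) ≠ 0 ∧ ∀ s : ℂ, ‖s‖ = 1 →
      0 ≤ (ell k (r * w) (geo x * geo y * herg s) / ell k (r * w) (geo x * geo y)).re := by
  have hun : ∀ t : ℝ, ‖exp (I * t)‖ = 1 := fun t => by rw [mul_comm, norm_exp_ofReal_mul_I]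
  constructor
  · by_cases hxy : x = y
    · subst hxy
      rw [hfun_deriv k hr]
      apply hne
      simp at hw ⊢
      rw [hx, one_mul]; exact hw
    · obtain ⟨t, ht1, ht2⟩ := ((rot_ne x x hx 1 one_ne_zero).and (rot_ne y x hy 1 one_ne_zero)).exists
      exact (level_one_distinct hk hr hh hne hre hx hy
        (by rw [norm_mul, hx, hun, mul_one]) hxy ht2 ht1 w hw).1
  · intro s hs
    apply div_re_nonneg
    set Y : ℝ → ℂ := fun t => y * exp (I * (1 * t : ℝ))
    set S : ℝ → ℂ := fun t => s * exp (I * (2 * t : ℝ))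
    have hYc : Continuous Y := by fun_prop
    have hSc : Continuous S := by fun_prop
    have hc := cont_aux k (r * w) (continuous_const (y := x)) hYc hSc
    have hG : Continuous (fun t => (ell k (r * w) (geo x * geo (Y t) * herg (S t)) *
        (starRingEnd ℂ) (ell k (r * w) (geo x * geo (Y t)))).re) :=
      continuous_re.comp (hc.1.mul (continuous_conj.comp hc.2))
    have hlim := (hG.tendsto 0).mono_left (nhdsWithin_le_nhds (s := Ioi (0:ℝ)))
    have hY0 : Y 0 = y := by simp [Y]
    have hS0 : S 0 = s := by simp [S]
    rw [hY0, hS0] at hlim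
    refine ge_of_tendsto hlim ?_
    filter_upwards [rot_ne x y hx 1 one_ne_zero, rot_ne x s hx 2 two_ne_zero,
      rot_ne y s hy 1 one_ne_zero] with t h1 h2 h3
    have hne2 : Y t ≠ S t := by
      intro h
      apply h3
      apply mul_right_cancel₀ (exp_ne_zero (I * (1 * t : ℝ)))
      rw [mul_assoc, ← exp_add]
      convert h using 3
      push_cast; ring
    have L := level_one_distinct hk hr hh hne hre hx
      (by simp only [Y]; rw [norm_mul, hy, hun, mul_one] : ‖Y t‖ = 1)
      (by simp only [S]; rw [norm_mul, hs, hun, mul_one] : ‖S t‖ = 1) h1 hne2 h2 w hw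
    have e : ∀ a b : ℂ, b ≠ 0 → a * (starRingEnd ℂ) b = a / b * ((normSq b : ℝ) : ℂ) := by
      intro a b hb
      rw [normSq_eq_conj_mul_self]; field_simp
    rw [e _ _ L.1, re_mul_ofReal]
    exact mul_nonneg L.2.le (normSq_nonneg _)


lemma tc_unique {f : ℂ → ℂ} {a : ℕ → ℂ}
    (h : ∀ᶠ z in 𝓝 (0:ℂ), HasSum (fun n => a n * z ^ n) (f z)) (n : ℕ) : tc f n = a n := by
  have h1 : HasFPowerSeriesAt f (FormalMultilinearSeries.ofScalars ℂ a) 0 := by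
    rw [hasFPowerSeriesAt_iff]
    filter_upwards [h] with z hz
    simpa [FormalMultilinearSeries.coeff_ofScalars, mul_comm] using hz
  have h2 := h1.analyticAt.hasFPowerSeriesAt
  have h3 := h2.eq_formalMultilinearSeries h1
  have := congrArg (fun p => p.coeff n) h3
  simpa [FormalMultilinearSeries.coeff_ofScalars, tc] using this

lemma tc_hasSum {f : ℂ → ℂ} (hf : DifferentiableOn ℂ f (ball 0 1)) {z : ℂ}
    (hz : z ∈ ball (0:ℂ) 1) : HasSum (fun n => tc f n * z ^ n) (f z) := by
  have := Complex.hasSum_taylorSeries_on_ball hf hz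
  have e : (fun n => tc f n * z ^ n) =
      fun n : ℕ => (n.factorial : ℂ)⁻¹ • (z - 0) ^ n • iteratedDeriv n f 0 := by
    funext n
    simp [tc]; ring
  rw [e]
  exact this

lemma tc_scale {f : ℂ → ℂ} (hf : DifferentiableOn ℂ f (ball 0 1)) (ρ : ℂ) (n : ℕ) :
    tc (fun z => f (ρ * z)) n = ρ ^ n * tc f n := by
  apply tc_unique (a := fun n => ρ ^ n * tc f n)
  have hc : Filter.Tendsto (fun z : ℂ => ρ * z) (𝓝 0) (𝓝 0) := by
    have : Continuous (fun z : ℂ => ρ * z) := by fun_prop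
    simpa using this.tendsto 0
  filter_upwards [hc (ball_mem_nhds 0 one_pos)] with z hz
  convert tc_hasSum hf hz using 2
  ring

lemma ell_scale {f : ℂ → ℂ} (hf : DifferentiableOn ℂ f (ball 0 1)) (k : ℕ) (ρ v : ℂ) :
    ell k v (ts (fun z => f (ρ * z))) = ell k (ρ * v) (ts f) := by
  rw [ell_apply, ell_apply]
  apply Finset.sum_congr rfl
  intro j _
  simp only [ts, PowerSeries.coeff_mk, tc_scale hf]
  ring

lemma ts_id : ts (fun z => z) = X := by
  ext n
  rw [ts, PowerSeries.coeff_mk, PowerSeries.coeff_X]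
  apply tc_unique (a := fun n => if n = 1 then 1 else 0)
  filter_upwards with z
  convert hasSum_single (f := fun n => (if n = 1 then 1 else 0) * z ^ n) 1 ?_ using 1
  · simp
  · intro n hn; simp [hn]

lemma ts_sub {u v : ℂ → ℂ} (hu : AnalyticAt ℂ u 0) (hv : AnalyticAt ℂ v 0) :
    ts (fun z => u z - v z) = ts u - ts v := by
  ext n
  simp only [ts, map_sub, PowerSeries.coeff_mk, tc]
  rw [iteratedDeriv_fun_sub hu.contDiffAt hv.contDiffAt, sub_div]

lemma tc_deriv (f : ℂ → ℂ) (n : ℕ) : tc (deriv f) n = (n + 1) * tc f (n + 1) := by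
  rw [tc, tc, iteratedDeriv_succ', Nat.factorial_succ]
  have h1 : (n.factorial : ℂ) ≠ 0 := by exact_mod_cast n.factorial_ne_zero
  have h2 : (n + 1 : ℂ) ≠ 0 := by exact_mod_cast n.succ_ne_zero
  push_cast
  field_simp

lemma ts_congr {u v : ℂ → ℂ} (h : u =ᶠ[𝓝 0] v) : ts u = ts v := by
  ext n
  simp only [ts, PowerSeries.coeff_mk, tc]
  rw [h.iteratedDeriv_eq]

lemma an0 {u : ℂ → ℂ} (hu : DifferentiableOn ℂ u (ball 0 1)) : AnalyticAt ℂ u 0 :=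
  hu.analyticAt (ball_mem_nhds 0 one_pos)

lemma dil {u : ℂ → ℂ} (hu : DifferentiableOn ℂ u (ball 0 1)) {ρ : ℝ} (h0 : 0 < ρ) (h1 : ρ < 1) :
    DifferentiableOn ℂ (fun z => u (ρ * z)) (closedBall 0 1) := by
  apply hu.comp (by fun_prop)
  intro z hz
  simp at hz ⊢
  rw [abs_of_pos h0]
  nlinarith [norm_nonneg z]

lemma level_two_ne {k : ℕ} (hk : 1 ≤ k) {r : ℝ} (hr : r ≠ 0)
    (hh : DifferentiableOn ℂ (hfun k r) (ball 0 1))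
    (hne : ∀ z ∈ ball (0:ℂ) 1, deriv (hfun k r) z ≠ 0)
    (hre : ∀ z ∈ ball (0:ℂ) 1, 0 < (1 + z * deriv (deriv (hfun k r)) z / deriv (hfun k r) z).re)
    {u : ℂ → ℂ} (hu : DifferentiableOn ℂ u (ball 0 1))
    (hu0 : ∀ z ∈ ball (0:ℂ) 1, u z ≠ 0)
    (hure : ∀ z ∈ ball (0:ℂ) 1, 0 < (1 + z * deriv u z / u z).re)
    {ρ : ℝ} (h0 : 0 < ρ) (h1 : ρ < 1) {α σ : ℂ} (hα : ‖α‖ = 1) (hσ : ‖σ‖ = 1) :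
    ∀ w ∈ ball (0:ℂ) 1,
      ell k (r * w) (ts (fun z => u (ρ * z)) * (1 + C (α * σ) * X) * geo σ) ≠ 0 := by
  obtain ⟨x, e, hx, he, hP⟩ := robertson hu hu0 hure h0 h1 (x₁ := -(α * σ))
    (by rw [norm_neg, norm_mul, hα, hσ, one_mul])
  have he0 : e ≠ 0 := by rintro rfl; simp at he
  have hd := dil hu h0 h1
  set P : ℂ → ℂ := fun z => e * u (ρ * z) * (1 - -(α * σ) * z) * (1 - x * z) with hPdef
  have hPd : DifferentiableOn ℂ P (closedBall 0 1) := by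
    apply DifferentiableOn.mul
    · apply DifferentiableOn.mul
      · exact hd.const_mul e
      · fun_prop
    · fun_prop
  have hda : AnalyticAt ℂ (fun z => u (ρ * z)) 0 := an0 (hd.mono ball_subset_closedBall)
  have hts : ts P = C e * ts (fun z => u (ρ * z)) * (1 - C (-(α * σ)) * X) * (1 - C x * X) := by
    have a1 : AnalyticAt ℂ (fun _ : ℂ => e) 0 := analyticAt_const
    have a2 : AnalyticAt ℂ (fun z => 1 - -(α * σ) * z) 0 := by fun_prop
    have a3 : AnalyticAt ℂ (fun z => 1 - x * z) 0 := by fun_prop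
    rw [hPdef, ts_mul ((a1.fun_mul hda).fun_mul a2) a3, ts_mul (a1.fun_mul hda) a2, ts_mul a1 hda,
      ts_const, ts_lin, ts_lin]
  have hE : ∀ w ∈ ball (0:ℂ) 1, ell k (r * w) (geo x * geo σ) ≠ 0 := fun w hw =>
    (level_one hk hr hh hne hre hx hσ hw).1
  have hEP : geo x * geo σ * ts P =
      C e * (ts (fun z => u (ρ * z)) * (1 + C (α * σ) * X) * geo σ) := by
    rw [hts, map_neg]
    linear_combination (C e * ts (fun z => u (ρ * z)) * (1 + C (α * σ) * X) * geo σ) * geo_mul x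
  have key := nz_of_re_nonneg
    (q := fun w => ell k (r * w) (geo x * geo σ * ts P) / ell k (r * w) (geo x * geo σ))
    (DifferentiableOn.div (ell_differentiable k r _).differentiableOn
      (ell_differentiable k r _).differentiableOn hE)
    (fun w hw => ell_herglotz hk (hE w hw) (level_one hk hr hh hne hre hx hσ hw).2 hPd hP)
    (by
      rw [mul_zero, ell_zero hk, ell_zero hk, hEP]
      have : tc (fun z => u (ρ * z)) 0 ≠ 0 := by
        simp [tc]; exact hu0 0 (by simp)
      have h2 : PowerSeries.constantCoeff (ts (fun z => u (ρ * z))) ≠ 0 := by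
        rw [ts, ← PowerSeries.coeff_zero_eq_constantCoeff_apply, PowerSeries.coeff_mk]
        exact this
      simp [geo_const, he0, h2])
  intro w hw h
  apply key w hw
  rw [hEP, ell_C_mul, h]; simp

lemma level_two {k : ℕ} (hk : 1 ≤ k) {r : ℝ} (hr : r ≠ 0)
    (hh : DifferentiableOn ℂ (hfun k r) (ball 0 1))
    (hne : ∀ z ∈ ball (0:ℂ) 1, deriv (hfun k r) z ≠ 0)
    (hre : ∀ z ∈ ball (0:ℂ) 1, 0 < (1 + z * deriv (deriv (hfun k r)) z / deriv (hfun k r) z).re)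
    {u : ℂ → ℂ} (hu : DifferentiableOn ℂ u (ball 0 1))
    (hu0 : ∀ z ∈ ball (0:ℂ) 1, u z ≠ 0)
    (hure : ∀ z ∈ ball (0:ℂ) 1, 0 < (1 + z * deriv u z / u z).re)
    {ρ : ℝ} (h0 : 0 < ρ) (h1 : ρ < 1) {σ : ℂ} (hσ : ‖σ‖ = 1) :
    ∀ w ∈ ball (0:ℂ) 1, ell k (r * w) (ts (fun z => u (ρ * z))) ≠ 0 ∧
      0 < (ell k (r * w) (ts (fun z => u (ρ * z)) * herg σ) /
        ell k (r * w) (ts (fun z => u (ρ * z)))).re := by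
  have L := fun (α : ℂ) (hα : ‖α‖ = 1) =>
    level_two_ne hk hr hh hne hre hu hu0 hure h0 h1 hα hσ
  set U := ts (fun z => u (ρ * z)) with hU
  have hform : ∀ α : ℂ, C (2:ℂ) * (U * (1 + C (α * σ) * X) * geo σ) =
      C (1 + α) * (U * herg σ) + C (1 - α) * U := by
    intro α
    have := geo_mul σ
    rw [herg_eq, map_add, map_sub, map_mul, map_ofNat, map_one]
    linear_combination ((1 - C α) * U) * this
  have hUne : ∀ w ∈ ball (0:ℂ) 1, ell k (r * w) U ≠ 0 := by
    intro w hw h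
    apply L (-1) (by simp) w hw
    have := congrArg (ell k (r * w)) (hform (-1))
    rw [map_add, ell_C_mul, ell_C_mul, ell_C_mul, h] at this
    simpa using this
  have hcc : PowerSeries.constantCoeff U ≠ 0 := by
    have := hUne 0 (by simp)
    rwa [mul_zero, ell_zero hk] at this
  have hpos := re_pos_of_ne (q := fun w => ell k (r * w) (U * herg σ) / ell k (r * w) U)
    ((ell_differentiable k r _).continuous.continuousOn.div
        (ell_differentiable k r _).continuous.continuousOn hUne)
    (by
      intro w hw hz
      set q := ell k (r * w) (U * herg σ) / ell k (r * w) U with hq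
      have hne' := hUne w hw
      have hqe : ell k (r * w) (U * herg σ) = q * ell k (r * w) U := by
        rw [hq]; field_simp
      have hq1 : 1 - q ≠ 0 := by
        intro h
        have := congrArg re h
        rw [sub_re, hz] at this
        simp at this
      have hα : ‖(1 + q) / (1 - q)‖ = 1 := by
        have hc : (starRingEnd ℂ) (1 - q) = 1 + q := by
          apply Complex.ext
          · simp [hz]
          · simp
        rw [norm_div, ← hc, RCLike.norm_conj, div_self (norm_ne_zero_iff.2 hq1)]
      -- choose the unimodular parameter killing the numerator
      apply L ((1 + q) / (1 - q)) hα w hw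
      have := congrArg (ell k (r * w)) (hform ((1 + q) / (1 - q)))
      rw [map_add, ell_C_mul, ell_C_mul, ell_C_mul, hqe] at this
      have h2 : (1 + (1 + q) / (1 - q)) * (q * ell k (r * w) U) +
          (1 - (1 + q) / (1 - q)) * ell k (r * w) U = 0 := by field_simp; ring
      rw [h2] at this
      exact (mul_eq_zero.1 this).resolve_left two_ne_zero)
    (by rw [mul_zero, ell_zero hk, ell_zero hk, map_mul, herg_const]; simp [hcc])
  exact fun w hw => ⟨hUne w hw, hpos w hw⟩

lemma level_three {k : ℕ} (hk : 1 ≤ k) {r : ℝ} (hr : r ≠ 0)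
    (hh : DifferentiableOn ℂ (hfun k r) (ball 0 1))
    (hne : ∀ z ∈ ball (0:ℂ) 1, deriv (hfun k r) z ≠ 0)
    (hre : ∀ z ∈ ball (0:ℂ) 1, 0 < (1 + z * deriv (deriv (hfun k r)) z / deriv (hfun k r) z).re)
    {u : ℂ → ℂ} (hu : DifferentiableOn ℂ u (ball 0 1))
    (hu0 : ∀ z ∈ ball (0:ℂ) 1, u z ≠ 0)
    (hure : ∀ z ∈ ball (0:ℂ) 1, 0 < (1 + z * deriv u z / u z).re)
    {F : ℂ → ℂ} (hF : DifferentiableOn ℂ F (ball 0 1))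
    (hFre : ∀ z ∈ ball (0:ℂ) 1, 0 ≤ (F z).re) :
    ∀ w ∈ ball (0:ℂ) 1, ell k (r * w) (ts u) ≠ 0 ∧
      0 ≤ (ell k (r * w) (ts (fun z => u z * F z)) / ell k (r * w) (ts u)).re := by
  intro w hw
  have hw1 : ‖w‖ < 1 := by simpa using hw
  obtain ⟨ρ, hρ, h1⟩ := exists_between hw1
  have h0 : 0 < ρ := (norm_nonneg w).trans_lt hρ
  have hρ0 : (ρ:ℂ) ≠ 0 := ofReal_ne_zero.2 h0.ne'
  have hw' : w / ρ ∈ ball (0:ℂ) 1 := by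
    simp [abs_of_pos h0]; rwa [div_lt_one h0]
  have L := fun (σ : ℂ) (hσ : ‖σ‖ = 1) =>
    level_two hk hr hh hne hre hu hu0 hure h0 h1 hσ (w / ρ) hw'
  have hne1 := (L 1 (by simp)).1
  have H := ell_herglotz hk hne1 (fun s hs => (L s hs).2.le) (dil hF h0 h1) (by
    intro z hz
    apply hFre
    simp [hz, abs_of_pos h0, h1])
  have hv : (ρ:ℂ) * (r * (w / ρ)) = r * w := by field_simp
  rw [← ts_mul (an0 ((dil hu h0 h1).mono ball_subset_closedBall))
    (an0 ((dil hF h0 h1).mono ball_subset_closedBall)),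
    ell_scale hu, hv, ell_scale (f := fun z => u z * F z) (hu.mul hF), hv] at H
  rw [ell_scale hu, hv] at hne1
  exact ⟨hne1, H⟩


lemma tc_lift {u : ℂ → ℂ} (hu : DifferentiableOn ℂ u (ball 0 1)) (n : ℕ) :
    coeff n (ts (fun z => u z + z * deriv u z)) = (n + 1) * tc u n := by
  have h : (fun z => u z + z * deriv u z) =ᶠ[𝓝 0] deriv (fun z => z * u z) := by
    filter_upwards [isOpen_ball.mem_nhds (mem_ball_self (x := (0:ℂ)) one_pos)] with z hz
    have hz' := (hu.differentiableAt (isOpen_ball.mem_nhds hz)).hasDerivAt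
    have := (hasDerivAt_id z).mul hz'
    have e : deriv (fun z => z * u z) z = 1 * u z + z * deriv u z := this.deriv
    rw [e, one_mul]
  rw [ts_congr h, ts, PowerSeries.coeff_mk, tc_deriv]
  have h2 : ts (fun z => z * u z) = X * ts u := by
    rw [ts_mul (u := fun z => z) analyticAt_id (an0 hu), ts_id]
  have h3 := congrArg (coeff (n + 1)) h2
  rw [PowerSeries.coeff_succ_X_mul, ts, ts, PowerSeries.coeff_mk, PowerSeries.coeff_mk] at h3
  rw [h3]

lemma section_main {ψ : ℂ → ℂ} (hψ : MaMinda ψ) (hconv : Convex ℝ (ψ '' 𝔻))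
    {k : ℕ} (hk : 2 ≤ k) {r₀ : ℝ} (h0 : 0 < r₀)
    (hgk : IsConvexFn (hfun k r₀))
    {f : ℂ → ℂ} {a : ℕ → ℂ} (ha1 : a 1 = 1)
    (hrep : ∀ z ∈ 𝔻, HasSum (fun n => a n * z^n) (f z))
    (hfC : ConvexMM ψ f) {φ : ℂ → ℂ}
    (hφ : φ = fun z => ∑ j ∈ Finset.range k, a (j + 1) * r₀ ^ j * z ^ (j + 1)) :
    ConvexMM ψ φ := by
  obtain ⟨⟨hh, -, -⟩, hne, hre⟩ := hgk
  obtain ⟨⟨hfd, hf0, hf1⟩, hfne, hfsub⟩ := hfC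
  obtain ⟨hψd, hψi, hψre, hψ0, -⟩ := hψ
  simp only [𝔻] at *
  have hk1 : 1 ≤ k := by omega
  have m0 : (0:ℂ) ∈ ball (0:ℂ) 1 := by simp
  have htc : ∀ n, tc f n = a n := fun n => tc_unique (by
    filter_upwards [ball_mem_nhds (0:ℂ) one_pos] with z hz using hrep z hz) n
  set u := deriv f with hudef
  have hud : DifferentiableOn ℂ u (ball 0 1) := hfd.deriv isOpen_ball
  have hu'd : DifferentiableOn ℂ (deriv u) (ball 0 1) := hud.deriv isOpen_ball
  set F : ℂ → ℂ := fun z => 1 + z * deriv u z / u z with hF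
  have hFd : DifferentiableOn ℂ F (ball 0 1) :=
    (differentiableOn_const 1).add ((differentiableOn_id.mul hu'd).div hud hfne)
  have hFm : ∀ z ∈ ball (0:ℂ) 1, F z ∈ ψ '' ball 0 1 := by
    obtain ⟨ω, -, -, hω, hs⟩ := hfsub
    intro z hz
    exact ⟨ω z, hω z hz, (hs z hz).symm⟩
  have hure : ∀ z ∈ ball (0:ℂ) 1, 0 < (1 + z * deriv u z / u z).re := by
    intro z hz
    obtain ⟨y, hy, he⟩ := hFm z hz
    have := hψre y hy
    rw [he] at this
    exact this
  have L3 := fun (G : ℂ → ℂ) (hG : DifferentiableOn ℂ G (ball 0 1)) hGre =>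
    level_three hk1 h0.ne' hh hne hre hud hfne hure (F := G) hG hGre
  have hN : ∀ w ∈ ball (0:ℂ) 1, ell k (r₀ * w) (ts u) ≠ 0 := fun w hw =>
    (L3 F hFd (fun z hz => (hure z hz).le) w hw).1
  -- derivatives of the section
  have hφ1 : ∀ w, HasDerivAt φ (ell k (r₀ * w) (ts u)) w := by
    intro w
    have : HasDerivAt φ (∑ j ∈ Finset.range k, a (j + 1) * (r₀:ℂ) ^ j * ((j + 1 : ℕ) * w ^ j)) w := by
      rw [hφ]
      apply HasDerivAt.fun_sum
      intro j _
      simpa using (hasDerivAt_pow (j + 1) w).const_mul (a (j + 1) * (r₀:ℂ) ^ j)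
    convert this using 1
    rw [ell_apply]
    apply Finset.sum_congr rfl
    intro j _
    rw [ts, PowerSeries.coeff_mk, hudef, tc_deriv, htc, mul_pow]
    push_cast; ring
  have hφd : deriv φ = fun w => ell k (r₀ * w) (ts u) := funext fun w => (hφ1 w).deriv
  have huF : ts (fun z => u z * F z) = ts (fun z => u z + z * deriv u z) := by
    apply ts_congr
    filter_upwards [isOpen_ball.mem_nhds m0] with z hz
    have := hfne z hz
    simp only [hF]
    field_simp
  have hφ2 : ∀ w, deriv φ w + w * deriv (deriv φ) w = ell k (r₀ * w) (ts (fun z => u z * F z)) := by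
    intro w
    have h1 : HasDerivAt (fun w => w * deriv φ w)
        (∑ j ∈ Finset.range k, (r₀:ℂ) ^ j * coeff j (ts u) * ((j + 1 : ℕ) * w ^ j)) w := by
      have e : (fun w => w * deriv φ w) =
          fun w => ∑ j ∈ Finset.range k, (r₀:ℂ) ^ j * coeff j (ts u) * w ^ (j + 1) := by
        funext w
        rw [hφd]
        simp only [ell_apply, Finset.mul_sum]
        apply Finset.sum_congr rfl
        intro j _
        ring
      rw [e]
      apply HasDerivAt.fun_sum
      intro j _
      simpa using (hasDerivAt_pow (j + 1) w).const_mul ((r₀:ℂ) ^ j * coeff j (ts u))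
    have hdd : DifferentiableAt ℂ (deriv φ) w := by
      rw [hφd]; exact (ell_differentiable k r₀ _) w
    have h2 := (hasDerivAt_id w).mul hdd.hasDerivAt
    have h3 := h2.unique h1
    simp only [id, one_mul] at h3
    rw [h3, huF, ell_apply]
    apply Finset.sum_congr rfl
    intro j _
    rw [tc_lift hud, ts, PowerSeries.coeff_mk]
    push_cast; ring
  set Q : ℂ → ℂ := fun w => 1 + w * deriv (deriv φ) w / deriv φ w with hQ
  have hQe : ∀ w ∈ ball (0:ℂ) 1,
      Q w = ell k (r₀ * w) (ts (fun z => u z * F z)) / ell k (r₀ * w) (ts u) := by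
    intro w hw
    have h1 : deriv φ w = ell k (r₀ * w) (ts u) := (hφ1 w).deriv
    have h2 := hN w hw
    rw [← hφ2, hQ, ← h1]
    rw [← h1] at h2
    simp only
    field_simp
  have hQd : DifferentiableOn ℂ Q (ball 0 1) := by
    apply DifferentiableOn.congr _ hQe
    exact DifferentiableOn.div (ell_differentiable k r₀ _).differentiableOn
      (ell_differentiable k r₀ _).differentiableOn hN
  have hQ0 : Q 0 = 1 := by simp [hQ]
  have hOpen : IsOpen (ψ '' ball 0 1) := by
    rcases (hψd.analyticOnNhd isOpen_ball).is_constant_or_isOpen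
      (convex_ball (0:ℂ) 1).isPreconnected with ⟨c, hc⟩ | ho
    · exfalso
      have m1 : (1/2:ℂ) ∈ ball (0:ℂ) 1 := by simp; norm_num
      have := hψi m0 m1 (by rw [hc _ m0, hc _ m1])
      norm_num at this
    · exact ho _ subset_rfl isOpen_ball
  have hmaps : ∀ z ∈ ball (0:ℂ) 1, Q z ∈ ψ '' ball 0 1 := by
    intro w₀ hw₀
    by_contra hnot
    obtain ⟨g, hg⟩ := RCLike.geometric_hahn_banach_open_point (𝕜 := ℂ) hconv hOpen hnot
    set c := g 1 with hc
    have hgc : ∀ z, g z = c * z := by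
      intro z
      have := g.map_smul z 1
      simp only [smul_eq_mul, mul_one] at this
      rw [this, mul_comm]
    have hg' : ∀ z ∈ ψ '' ball 0 1, 0 < (c * (Q w₀ - z)).re := by
      intro z hz
      have := hg z hz
      rw [hgc, hgc] at this
      rw [mul_sub, sub_re]
      exact sub_pos.2 this
    set G : ℂ → ℂ := fun z => c * (Q w₀ - F z) with hG
    have hGd : DifferentiableOn ℂ G (ball 0 1) :=
      ((differentiableOn_const (Q w₀)).sub hFd).const_mul c
    have H := L3 G hGd (fun z hz => (hg' _ (hFm z hz)).le)
    have htG : ts (fun z => u z * G z) = C c * (C (Q w₀) * ts u - ts (fun z => u z * F z)) := by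
      have aF := an0 hFd
      have ac : ∀ c : ℂ, AnalyticAt ℂ (fun _ : ℂ => c) 0 := fun c => analyticAt_const
      rw [ts_mul (an0 hud) (an0 hGd), hG, ts_mul (ac c) ((ac (Q w₀)).fun_sub aF), ts_sub (ac _) aF,
        ts_mul (an0 hud) aF, ts_const, ts_const]
      ring
    have hval : ∀ w ∈ ball (0:ℂ) 1, ell k (r₀ * w) (ts (fun z => u z * G z)) /
        ell k (r₀ * w) (ts u) = c * (Q w₀ - Q w) := by
      intro w hw
      have h2 := hN w hw
      rw [htG, ell_C_mul, map_sub, ell_C_mul, hQe w hw]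
      field_simp
    have := nz_of_re_nonneg (q := fun w => c * (Q w₀ - Q w))
      (((differentiableOn_const (Q w₀)).sub hQd).const_mul c)
      (fun w hw => by rw [← hval w hw]; exact (H w hw).2)
      (by
        intro h
        have h3 := hg' 1 ⟨0, m0, hψ0⟩
        rw [hQ0] at h
        rw [h] at h3
        simp at h3) w₀ hw₀
    simp at this
  refine ⟨⟨?_, ?_, ?_⟩, ?_, ?_⟩
  · exact fun w _ => (hφ1 w).differentiableAt.differentiableWithinAt
  · rw [hφ]; simp
  · rw [hφd]
    simp only [mul_zero]
    rw [ell_zero hk1, ← PowerSeries.coeff_zero_eq_constantCoeff_apply, ts, PowerSeries.coeff_mk,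
      hudef, tc_deriv, htc]
    simp [ha1]
  · intro w hw
    rw [hφd]
    exact hN w hw
  · exact subord_of_maps hψd hψi hQd (hQ0.trans hψ0.symm) hmaps

end Helpers

theorem stmt11 (ψ : ℂ → ℂ) (hψ : MaMinda ψ) (hconv : Convex ℝ (ψ '' 𝔻))
    (k : ℕ) (hk : 2 ≤ k) (r₀ : ℝ) (h0 : 0 < r₀) (h1 : r₀ ≤ 1)
    (hgk : IsConvexFn (fun z => (∑ i ∈ Finset.Icc 1 k, ((r₀:ℂ)*z) ^ i) / (r₀:ℂ)))
    (f : ℂ → ℂ) (a : ℕ → ℂ) (ha0 : a 0 = 0) (ha1 : a 1 = 1)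
    (hrep : ∀ z ∈ 𝔻, HasSum (fun n => a n * z^n) (f z))
    (hfC : ConvexMM ψ f) :
    ConvexMM ψ (fun z => (∑ i ∈ Finset.Icc 1 k, a i * ((r₀:ℂ)*z)^i) / (r₀:ℂ)) := by
  apply section_main hψ hconv hk h0 hgk ha1 hrep hfC
  funext z
  have hr' : (r₀:ℂ) ≠ 0 := ofReal_ne_zero.2 h0.ne'
  have : Finset.Icc 1 k = Finset.Ico 1 (k + 1) := by ext; simp
  rw [this, Finset.sum_Ico_eq_sum_range, Finset.sum_div]
  apply Finset.sum_congr (by simp)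
  intro j _
  rw [mul_pow, add_comm 1 j, pow_succ (r₀:ℂ)]
  field_simp
end
end
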